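/- Let p > 3 be a prime and let (p/3) denote the Legendre symbol. If p ≡ 1 (mod 4), write p = x^2 + 4y^2 with integers x, y; then (p/3)·Σ_{k=0}^{p−1} k·C(2k,k)·C(3k,k)·C(6k,3k)/12^{3k} ≡ −(5/9)x^2 + (5/18)p + 5p^2/(72x^2) (mod p^3), (p/3)·Σ_{k=0}^{p−1} k^2·C(2k,k)·C(3k,k)·C(6k,3k)/12^{3k} ≡ (25/486)x^2 − (25/972)p − 35p^2/(1944x^2) (mod p^3), and (p/3)·Σ_{k=0}^{p−1} k^3·C(2k,k)·C(3k,k)·C(6k,3k)/12^{3k} ≡ (5/2187)x^2 − (5/4374)p + 187p^2/(69984x^2) (mod p^3). If p ≡ 3 (mod 4), then these three sums times (p/3) are congruent modulo p^2 to (1/12)R_1(p), −(23/648)R_1(p), and (197/29160)R_1(p), respectively. -/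

import Mathlib

/-- `a ≡ b (mod p^r)` for rationals: the numerator of `a - b` in lowest terms
is divisible by `p^r`. -/
def ratCongr (p r : ℕ) (a b : ℚ) : Prop := (p : ℤ)^r ∣ (a - b).num
/-- `R_1(p) = (2p + 2 - 2^(p-1)) * C((p-1)/2, ⌊p/4⌋)^2`. -/
def R1 (p : ℕ) : ℚ :=
  (2*(p:ℚ) + 2 - 2^(p-1)) * (((p-1)/2).choose (p/4) : ℚ)^2

instance : Fact (Nat.Prime 3) := ⟨by norm_num⟩

/-- The ring of integers modulo `p^3`. -/
abbrev RR (p : ℕ) := ZMod (p^3)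

namespace SC

section basics
variable {p : ℕ} [hp : Fact p.Prime]

instance : NeZero (p^3) := ⟨pow_ne_zero 3 hp.out.ne_zero⟩

lemma p3 : (p : RR p)^3 = 0 := by
  have := ZMod.natCast_self (p^3)
  push_cast at this
  exact this

lemma exN (x : RR p) : ∃ n : ℕ, (n : RR p) = x := ⟨x.val, ZMod.natCast_zmod_val x⟩

lemma unitN {n : ℕ} : IsUnit (n : RR p) ↔ ¬ p ∣ n := by
  rw [ZMod.isUnit_iff_coprime, Nat.coprime_pow_right_iff (by norm_num), Nat.coprime_comm]
  exact hp.out.coprime_iff_not_dvd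

lemma unitZ {n : ℤ} (h : ¬ (p : ℤ) ∣ n) : IsUnit (n : RR p) := by
  have h2 : ((n.natAbs : ℕ) : RR p) = n ∨ ((n.natAbs : ℕ) : RR p) = -n := by
    rcases Int.natAbs_eq n with h | h
    · left; conv_rhs => rw [h]
      simp
    · right; conv_rhs => rw [h]
      simp
  have h3 : IsUnit ((n.natAbs : ℕ) : RR p) := by
    rw [unitN]; rwa [← Int.natCast_dvd]
  rcases h2 with h2 | h2 <;> rw [h2] at h3
  · exact h3
  · exact (IsUnit.neg_iff _).1 h3

lemma nonunit {x : RR p} (h : ¬ IsUnit x) : ∃ y, x = p * y := by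
  obtain ⟨n, rfl⟩ := exN x
  rw [unitN, not_not] at h
  obtain ⟨k, rfl⟩ := h
  exact ⟨k, by push_cast; ring⟩

lemma pnil : IsNilpotent (p : RR p) := ⟨3, p3⟩

lemma pmul_nonunit (y : RR p) : ¬ IsUnit ((p : RR p) * y) := by
  obtain ⟨n, rfl⟩ := exN y
  rw [← Nat.cast_mul, unitN]
  simp

lemma unit_add {x : RR p} (y : RR p) : IsUnit (x + p * y) ↔ IsUnit x := by
  obtain ⟨n, rfl⟩ := exN x
  obtain ⟨m, rfl⟩ := exN y
  rw [← Nat.cast_mul, ← Nat.cast_add, unitN, unitN, Nat.dvd_add_left (dvd_mul_right _ _)]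

lemma unit_one_add (y : RR p) : IsUnit (1 + p * y) := (unit_add y).2 isUnit_one

lemma p2zero {x : RR p} (h : (p : RR p)^2 * x = 0) : ∃ y, x = p * y := by
  apply nonunit
  intro hx
  obtain ⟨n, rfl⟩ := exN x
  have h0 : (p : RR p)^2 = 0 := by
    simpa using (hx.mul_left_eq_zero).1 h
  have h1 : ((p^2 : ℕ) : RR p) = 0 := by push_cast; exact h0
  rw [ZMod.natCast_eq_zero_iff] at h1
  have := (Nat.pow_dvd_pow_iff_le_right hp.out.one_lt).1 h1
  omega

lemma pzero {x : RR p} (h : (p : RR p) * x = 0) : ∃ y, x = p^2 * y := by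
  obtain ⟨y, rfl⟩ := p2zero (x := x) (by linear_combination p * h)
  obtain ⟨z, rfl⟩ := p2zero (x := y) (by linear_combination h)
  exact ⟨z, by ring⟩

lemma unit_two (h : 3 < p) : IsUnit (2 : RR p) := by
  have := (unitN (p := p) (n := 2)).2 (fun h' => by have := Nat.le_of_dvd (by norm_num) h'; omega)
  simpa using this
lemma unit_three (h : 3 < p) : IsUnit (3 : RR p) := by
  have := (unitN (p := p) (n := 3)).2 (fun h' => by have := Nat.le_of_dvd (by norm_num) h'; omega)
  simpa using this

lemma sq_cancel (h3 : 3 < p) {a b : RR p} (ha : IsUnit a) (h : a^2 = b^2) (hab : ∃ y, a = b + p * y) : a = b := by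
  obtain ⟨y, hy⟩ := hab
  have h1 : (a + b) * (a - b) = 0 := by linear_combination h
  have h2 : IsUnit (a + b) := by
    have : a + b = 2 * a + p * (-y) := by rw [hy]; ring
    rw [this, unit_add]
    exact (unit_two h3).mul ha
  have := (h2.mul_right_eq_zero).1 h1
  exact sub_eq_zero.1 this

lemma inv_mul' {x : RR p} (h : IsUnit x) : x * x⁻¹ = 1 := ZMod.mul_inv_of_unit x h

lemma natInv {n : ℕ} (h0 : 0 < n) (h : n < p) : (n : RR p) * (n : RR p)⁻¹ = 1 :=
  inv_mul' (unitN.2 (fun h' => by have := Nat.le_of_dvd h0 h'; omega))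

lemma p2_prod {ι : Type*} (s : Finset ι) (f g : ι → RR p) (h : ∀ i ∈ s, (p : RR p)^2 * f i = p^2 * g i) :
    (p : RR p)^2 * ∏ i ∈ s, f i = p^2 * ∏ i ∈ s, g i := by
  classical
  induction s using Finset.induction_on with
  | empty => simp
  | insert i s hi ih =>
    rw [Finset.prod_insert hi, Finset.prod_insert hi]
    have h1 := h i (Finset.mem_insert_self _ _)
    have h2 := ih (fun j hj => h j (Finset.mem_insert_of_mem hj))
    linear_combination (∏ i ∈ s, f i) * h1 + g i * h2

end basics
end SC
namespace SC
section resid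
variable {p : ℕ} [hp : Fact p.Prime]

open Classical in
/-- Inverse on units, zero elsewhere. -/
noncomputable def rr (p : ℕ) (z : RR p) : RR p := if IsUnit z then z⁻¹ else 0

open Classical in
/-- Step of the gamma function. -/
noncomputable def ss (p : ℕ) (z : RR p) : RR p := if IsUnit z then -z else -1

lemma ss_unit (z : RR p) : IsUnit (ss p z) := by
  unfold ss; split_ifs with h
  · exact h.neg
  · exact isUnit_one.neg

lemma ss_of_unit {z : RR p} (h : IsUnit z) : ss p z = -z := by simp [ss, h]
lemma ss_of_p (y : RR p) : ss p ((p : RR p) * y) = -1 := by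
  unfold ss; rw [if_neg (pmul_nonunit y)]

lemma ss_add (z y : RR p) : ss p (z + p * y) = ss p z * (1 + p * y * rr p z) := by
  unfold ss rr
  by_cases h : IsUnit z
  · simp only [unit_add, h, if_true]
    linear_combination p * y * inv_mul' h
  · simp [unit_add, h]

lemma rr_p2 (z y : RR p) : (p : RR p)^2 * rr p (z + p * y) = p^2 * rr p z := by
  unfold rr
  by_cases h : IsUnit z
  · have h' : IsUnit (z + p * y) := (unit_add y).2 h
    simp only [h, h', if_true]
    have h1 := inv_mul' h
    have h2 := inv_mul' h'
    linear_combination (p^2*z⁻¹) * h2 - p^2 * (z+p*y)⁻¹ * h1 - (z+p*y)⁻¹ * z⁻¹ * y * p3 (p := p)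
  · simp [unit_add, h]

lemma rr_two (h3 : 3 < p) (z : RR p) : 2 * rr p (2 * z) = rr p z := by
  have h2 := unit_two h3
  unfold rr
  by_cases h : IsUnit z
  · have h' : IsUnit (2 * z) := h2.mul h
    simp only [h, h', if_true]
    have e1 := inv_mul' h
    have e2 := inv_mul' h'
    linear_combination z⁻¹ * e2 - 2 * (2*z)⁻¹ * e1
  · have : ¬ IsUnit (2 * z) := fun h' => h (isUnit_of_mul_isUnit_right h')
    simp [h, this]

lemma sum_zmod (φ : RR p → RR p) : ∑ i ∈ Finset.range p, φ (i : RR p) = ∑ c : ZMod p, φ (c.val : RR p) := by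
  refine Finset.sum_bij' (fun i _ => (i : ZMod p)) (fun c _ => c.val) ?_ ?_ ?_ ?_ ?_
  · simp
  · intro c _; simpa using ZMod.val_lt c
  · intro i hi; exact ZMod.val_cast_of_lt (by simpa using hi)
  · intro c _; simp
  · intro i hi; rw [ZMod.val_cast_of_lt (by simpa using hi)]

lemma sum_zmod_two (h3 : 3 < p) (φ : RR p → RR p) (hφ : ∀ z y, φ (z + p * y) = φ z) :
    ∑ c : ZMod p, φ (2 * (c.val : RR p)) = ∑ c : ZMod p, φ (c.val : RR p) := by
  have h2 : (2 : ZMod p) ≠ 0 := by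
    have : ((2 : ℕ) : ZMod p) ≠ 0 := by
      rw [Ne, ZMod.natCast_eq_zero_iff]
      intro h; have := Nat.le_of_dvd (by norm_num) h; omega
    simpa using this
  rw [← Equiv.sum_comp (Equiv.mulLeft₀ (2 : ZMod p) h2) (fun c => φ (c.val : RR p))]
  apply Finset.sum_congr rfl
  intro c _
  simp only [Equiv.mulLeft₀_apply]
  have h1 : (2 * c).val = (2 * c.val) % p := by
    rw [← ZMod.val_natCast]; congr 1; simp
  have h4 : 2 * c.val = (2 * c).val + p * (2 * c.val / p) := by
    rw [h1]; exact (Nat.mod_add_div _ _).symm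
  have h5 : (2 : RR p) * (c.val : RR p) = ((2 * c).val : RR p) + p * ((2 * c.val / p : ℕ) : RR p) := by
    exact_mod_cast congrArg (Nat.cast : ℕ → RR p) h4
  rw [h5, hφ]

lemma sum_shift (φ : RR p → RR p) (hφ : ∀ z y, φ (z + p * y) = φ z) (x : RR p) :
    ∑ i ∈ Finset.range p, φ (x + i) = ∑ i ∈ Finset.range p, φ (i : RR p) := by
  obtain ⟨n, rfl⟩ := exN x
  induction n with
  | zero => simp
  | succ n ih =>
    rw [← ih]
    have h1 := Finset.sum_range_succ (fun i : ℕ => φ ((n : RR p) + i)) p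
    have h2 := Finset.sum_range_succ' (fun i : ℕ => φ ((n : RR p) + i)) p
    rw [h1] at h2
    have h3 := hφ n 1
    simp only [mul_one] at h3
    rw [h3] at h2
    simp only [Nat.cast_zero, add_zero] at h2
    rw [add_right_cancel h2]
    apply Finset.sum_congr rfl
    intro i _
    push_cast
    ring_nf

lemma sum_rr (h3 : 3 < p) (x : RR p) : (p : RR p)^2 * ∑ i ∈ Finset.range p, rr p (x + i) = 0 := by
  rw [Finset.mul_sum]
  have hφ : ∀ z y : RR p, (fun z => (p : RR p)^2 * rr p z) (z + p * y) = (fun z => (p : RR p)^2 * rr p z) z :=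
    fun z y => rr_p2 z y
  have h := sum_shift (fun z : RR p => (p : RR p)^2 * rr p z) hφ x
  have h1 := sum_zmod_two h3 (fun z : RR p => (p : RR p)^2 * rr p z) hφ
  have h2 := sum_zmod (fun z : RR p => (p : RR p)^2 * rr p z)
  rw [h, h2]
  have h4 : ∑ c : ZMod p, (p : RR p)^2 * rr p ((c.val : RR p)) =
     2 * ∑ c : ZMod p, (p : RR p)^2 * rr p (2 * (c.val : RR p)) := by
    rw [Finset.mul_sum]; apply Finset.sum_congr rfl
    intro c _
    rw [← rr_two h3]; ring
  rw [h1] at h4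
  linear_combination -h4

lemma sum_rr2 (h3 : 3 < p) (x : RR p) : (p : RR p)^2 * ∑ i ∈ Finset.range p, rr p (x + i)^2 = 0 := by
  rw [Finset.mul_sum]
  have hφ : ∀ z y : RR p, (fun z => (p : RR p)^2 * rr p z^2) (z + p * y) = (fun z => (p : RR p)^2 * rr p z^2) z := by
    intro z y
    simp only
    have := rr_p2 z y
    linear_combination (rr p (z + p*y) + rr p z) * this
  have h := sum_shift (fun z : RR p => (p : RR p)^2 * rr p z^2) hφ x
  have h1 := sum_zmod_two h3 (fun z : RR p => (p : RR p)^2 * rr p z^2) hφ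
  have h2 := sum_zmod (fun z : RR p => (p : RR p)^2 * rr p z^2)
  rw [h, h2]
  have h4 : ∑ c : ZMod p, (p : RR p)^2 * rr p ((c.val : RR p))^2 =
     4 * ∑ c : ZMod p, (p : RR p)^2 * rr p (2 * (c.val : RR p))^2 := by
    rw [Finset.mul_sum]; apply Finset.sum_congr rfl
    intro c _
    rw [← rr_two h3]; ring
  rw [h1] at h4
  have h5 : 3 * ∑ c : ZMod p, (p : RR p)^2 * rr p ((c.val : RR p))^2 = 0 := by linear_combination -h4
  exact ((unit_three h3).mul_right_eq_zero).1 h5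

/-- product of `p` consecutive steps -/
noncomputable def bb (p : ℕ) (x : RR p) : RR p := ∏ i ∈ Finset.range p, ss p (x + i)

lemma prod_exp (s : Finset ℕ) (r : ℕ → RR p) (y : RR p) :
    2 * ∏ i ∈ s, (1 + p * y * r i) = 2 + 2 * p * y * ∑ i ∈ s, r i +
      p^2 * y^2 * ((∑ i ∈ s, r i)^2 - ∑ i ∈ s, r i^2) := by
  induction s using Finset.induction_on with
  | empty => simp
  | insert i s hi ih =>
    rw [Finset.prod_insert hi, Finset.sum_insert hi, Finset.sum_insert hi]
    linear_combination (1 + p * y * r i) * ih + y^3 * r i * ((∑ i ∈ s, r i)^2 - ∑ i ∈ s, r i^2) * p3 (p := p)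

lemma bb_add (h3 : 3 < p) (x : RR p) : ∃ e : RR p, ∀ y, bb p (x + p * y) = bb p x * (1 + p^2 * e * y) := by
  obtain ⟨e, he⟩ := p2zero (sum_rr h3 x)
  refine ⟨e, fun y => ?_⟩
  have h1 : bb p (x + p * y) = bb p x * ∏ i ∈ Finset.range p, (1 + p * y * rr p (x + i)) := by
    unfold bb
    rw [← Finset.prod_mul_distrib]
    apply Finset.prod_congr rfl
    intro i _
    rw [← ss_add]; ring_nf
  rw [h1]
  congr 1
  have h2 := prod_exp (Finset.range p) (fun i => rr p (x + i)) y
  have h4 := sum_rr2 h3 x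
  have h5 : (2 : RR p) * ∏ i ∈ Finset.range p, (1 + p * y * rr p (x + i)) = 2 * (1 + p^2 * e * y) := by
    rw [h2, he]
    linear_combination -y^2 * h4 + p * y^2 * e^2 * p3 (p := p)
  exact (unit_two h3).mul_left_cancel h5

lemma bb_step (x : RR p) : ∃ y, bb p (x + 1) = bb p x + p * y := by
  have h1 := Finset.prod_range_succ (fun i : ℕ => ss p (x + i)) p
  have h2 := Finset.prod_range_succ' (fun i : ℕ => ss p (x + i)) p
  rw [h1] at h2
  have h4 : bb p (x + 1) = ∏ k ∈ Finset.range p, ss p (x + ((k + 1 : ℕ) : RR p)) := by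
    unfold bb; apply Finset.prod_congr rfl; intro i _; push_cast; ring_nf
  simp only [Nat.cast_zero, add_zero] at h2
  rw [← h4] at h2
  have h5 := ss_add x 1
  rw [mul_one] at h5
  rw [h5] at h2
  change bb p x * _ = _ at h2
  refine ⟨bb p x * rr p x, ?_⟩
  have h6 := (ss_unit x)
  apply h6.mul_left_cancel
  linear_combination -h2

lemma bb_zero (h3 : 3 < p) : ∃ y, bb p (0 : RR p) = 1 + p * y := by
  have h1 : bb p (0 : RR p) = - ((p-1).factorial : RR p) := by
    unfold bb
    obtain ⟨n, hn⟩ : ∃ n, p = n + 1 := ⟨p - 1, by omega⟩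
    have hev : Even n := by
      have := hp.out.eq_two_or_odd'
      rcases this with h | h
      · omega
      · rw [hn] at h; rcases h with ⟨k, hk⟩; exact ⟨k, by omega⟩
    have : Finset.range p = Finset.range (n+1) := by rw [hn]
    rw [this, Finset.prod_range_succ']
    have e0 : ss p ((0 : RR p) + ((0 : ℕ) : RR p)) = -1 := by
      have := ss_of_p (0 : RR p)
      simpa using this
    rw [e0]
    have e1 : ∀ i ∈ Finset.range n, ss p ((0 : RR p) + ((i + 1 : ℕ) : RR p)) = (-1) * ((i + 1 : ℕ) : RR p) := by
      intro i hi
      have hi' : i < n := by simpa using hi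
      rw [zero_add, ss_of_unit]
      · ring
      · rw [unitN]; intro h; have := Nat.le_of_dvd (by omega) h; omega
    rw [Finset.prod_congr rfl e1, Finset.prod_mul_distrib, Finset.prod_const, Finset.card_range, hev.neg_one_pow,
      ← Nat.cast_prod, Finset.prod_range_add_one_eq_factorial]
    have : p - 1 = n := by omega
    rw [this]; ring
  have h2 := ZMod.wilsons_lemma p
  have h4 : (p : ℤ) ∣ ((p-1).factorial : ℤ) + 1 := by
    rw [← ZMod.intCast_zmod_eq_zero_iff_dvd]
    push_cast; rw [h2]; ring
  obtain ⟨k, hk⟩ := h4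
  have h5 : ((p-1).factorial : RR p) + 1 = p * k := by exact_mod_cast congrArg (Int.cast : ℤ → RR p) hk
  refine ⟨-k, ?_⟩
  rw [h1]; linear_combination -h5

lemma bb_one (h3 : 3 < p) (x : RR p) : ∃ y, bb p x = 1 + p * y := by
  obtain ⟨n, rfl⟩ := exN x
  induction n with
  | zero => simpa using bb_zero h3
  | succ n ih =>
    obtain ⟨y, hy⟩ := ih
    obtain ⟨z, hz⟩ := bb_step (n : RR p)
    push_cast
    exact ⟨y + z, by rw [hz, hy]; ring⟩

end resid
end SC
namespace SC
section gamma
variable {p : ℕ} [hp : Fact p.Prime]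

/-- gamma on naturals -/
noncomputable def gN (p : ℕ) (n : ℕ) : RR p := ∏ i ∈ Finset.range n, ss p (i : RR p)

/-- Morita gamma function mod `p^3`. -/
noncomputable def GG (p : ℕ) (x : RR p) : RR p := gN p x.val

lemma gN_succ (n : ℕ) : gN p (n+1) = ss p (n : RR p) * gN p n := by
  unfold gN; rw [Finset.prod_range_succ]; ring

lemma gN_block (x : ℕ) : gN p (x + p) = gN p x * bb p (x : RR p) := by
  unfold gN bb; rw [Finset.prod_range_add]; push_cast; rfl

lemma ch2 (n : ℕ) : (2 : RR p) * (n.choose 2 : RR p) = n * (n - 1) := by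
  induction n with
  | zero => simp
  | succ n ih =>
    rw [Nat.choose_succ_succ' n 1]
    push_cast
    rw [Nat.choose_one_right]
    linear_combination ih

lemma pow_exp (y : RR p) (n : ℕ) : (1 + p * y)^n = 1 + n * (p * y) + (n.choose 2 : RR p) * (p^2 * y^2) := by
  induction n with
  | zero => simp
  | succ n ih =>
    rw [pow_succ, ih, Nat.choose_succ_succ' n 1]
    push_cast
    rw [Nat.choose_one_right]
    linear_combination (n.choose 2 : RR p) * y^3 * p3 (p := p)

lemma gN_pn (h3 : 3 < p) (x : ℕ) : ∃ d e : RR p, ∀ n : ℕ, gN p (x + p * n) =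
    gN p x * (1 + n * (p * d) + (n.choose 2 : RR p) * (p^2 * e)) := by
  obtain ⟨e, he⟩ := bb_add h3 (x : RR p)
  obtain ⟨d, hd⟩ := bb_one h3 (x : RR p)
  refine ⟨d, d^2 + e, fun n => ?_⟩
  induction n with
  | zero => simp
  | succ n ih =>
    have : x + p * (n + 1) = (x + p * n) + p := by ring
    rw [this, gN_block, ih]
    push_cast
    rw [he, hd, Nat.choose_succ_succ' n 1]
    push_cast
    rw [Nat.choose_one_right]
    have h := p3 (p := p)
    generalize (n.choose 2 : RR p) = c
    generalize (n : RR p) = n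
    linear_combination (gN p x * ((n * d)*e*n + (d^2+e)*c*d + c*(d^2+e)*(1+p*d)*p*e*n + (1 + n*p*d)*d*e*n + n*n*d*d*e * 0)) * h

lemma gN_p3 (h3 : 3 < p) (x : ℕ) : gN p (x + p^3) = gN p x := by
  obtain ⟨d, e, h⟩ := gN_pn h3 x
  have h1 := h (p^2)
  have : x + p * p^2 = x + p^3 := by ring
  rw [this] at h1
  rw [h1]
  have h2 := ch2 (p := p) (p^2)
  push_cast at h2 ⊢
  have h4 : (p : RR p)^2 * ((p^2).choose 2 : RR p) = 0 := by
    apply (unit_two h3).mul_left_cancel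
    linear_combination p^2 * h2 + p * (p^2 - 1) * p3 (p := p)
  linear_combination gN p x * (d * p3 (p := p) + e * h4)

lemma GG_nat (h3 : 3 < p) (n : ℕ) : GG p (n : RR p) = gN p n := by
  unfold GG
  rw [ZMod.val_natCast]
  have h : ∀ k r : ℕ, gN p (r + p^3 * k) = gN p r := by
    intro k r
    induction k with
    | zero => simp
    | succ k ih => rw [mul_add, mul_one, ← add_assoc, gN_p3 h3, ih]
  conv_rhs => rw [← Nat.mod_add_div n (p^3)]
  rw [h]

lemma GG_zero : GG p 0 = 1 := by simp [GG, gN]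

lemma GG_succ (h3 : 3 < p) (x : RR p) : GG p (x + 1) = ss p x * GG p x := by
  obtain ⟨n, rfl⟩ := exN x
  rw [GG_nat h3, ← Nat.cast_succ, GG_nat h3, gN_succ]

lemma GG_unit (x : RR p) : IsUnit (GG p x) := by
  unfold GG gN
  rw [IsUnit.prod_iff]
  intro i _; exact ss_unit _

lemma GG_exp (h3 : 3 < p) (x : RR p) : ∃ a b : RR p, ∀ y : RR p,
    GG p (x + p * y) = GG p x * (1 + p * a * y + p^2 * b * y^2) := by
  obtain ⟨n, rfl⟩ := exN x
  obtain ⟨d, e, h⟩ := gN_pn h3 n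
  obtain ⟨hf, hhf⟩ : ∃ hf : RR p, 2 * hf = 1 := ⟨2⁻¹, inv_mul' (unit_two h3)⟩
  refine ⟨d - p * hf * e, hf * e, fun y => ?_⟩
  obtain ⟨k, rfl⟩ := exN y
  rw [← Nat.cast_mul, ← Nat.cast_add, GG_nat h3, GG_nat h3, h]
  have h2 := ch2 (p := p) k
  have h4 : (k.choose 2 : RR p) = hf * (k * (k-1)) := by linear_combination hf * h2 - (k.choose 2 : RR p) * hhf
  rw [h4]; ring

/-- reflection product -/
noncomputable def EE (p : ℕ) (x : RR p) : RR p := GG p x * GG p (1 - x)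

lemma EE_zero (h3 : 3 < p) : EE p 0 = -1 := by
  unfold EE
  have h := GG_succ h3 (0 : RR p)
  have := ss_of_p (0 : RR p)
  rw [mul_zero] at this
  rw [this, zero_add] at h
  rw [sub_zero, h, GG_zero]; ring

lemma ss_neg (x : RR p) : ss p (-x) = (if IsUnit x then (-1) else 1) * ss p x := by
  unfold ss
  by_cases h : IsUnit x
  · simp [h]
  · have : ¬ IsUnit (-x) := by rwa [IsUnit.neg_iff]
    simp [h]

lemma EE_succ (h3 : 3 < p) (x : RR p) : EE p (x+1) = (if IsUnit x then (-1) else 1) * EE p x := by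
  have h1 := GG_succ h3 x
  have h2 := GG_succ h3 (-x)
  have e1 : -x + 1 = 1 - x := by ring
  have e2 : 1 - (x + 1) = -x := by ring
  rw [e1, ss_neg] at h2
  unfold EE
  rw [e2, h1, h2]
  split_ifs <;> ring

lemma EE_sq (h3 : 3 < p) (x : RR p) : EE p x^2 = 1 := by
  obtain ⟨n, rfl⟩ := exN x
  induction n with
  | zero => simp [EE_zero h3]
  | succ n ih =>
    push_cast
    rw [EE_succ h3]
    split_ifs <;> linear_combination ih

lemma EE_add (h3 : 3 < p) (x y : RR p) : EE p (x + p * y) = EE p x := by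
  apply sq_cancel h3
  · exact IsUnit.of_mul_eq_one _ (by rw [← sq]; exact EE_sq h3 _)
  · rw [EE_sq h3, EE_sq h3]
  · obtain ⟨a, b, h⟩ := GG_exp h3 x
    obtain ⟨a', b', h'⟩ := GG_exp h3 (1-x)
    unfold EE
    have : 1 - (x + p * y) = (1 - x) + p * (-y) := by ring
    rw [this, h, h']
    exact ⟨GG p x * GG p (1-x) * (a * y + p * b * y^2 + (1 + p * a * y + p^2 * b * y^2) * (-a' * y + p * b' * y^2)), by ring⟩

/-- number of naturals below `N` prime to `p` -/
def uu (p N : ℕ) : ℕ := ((Finset.range N).filter (fun i => ¬ p ∣ i)).card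

lemma uu_succ (N : ℕ) : uu p (N+1) = uu p N + (if p ∣ N then 0 else 1) := by
  unfold uu
  rw [Finset.range_add_one, Finset.filter_insert]
  by_cases h : p ∣ N
  · simp [h]
  · rw [if_pos h, if_neg h, Finset.card_insert_of_notMem (by simp)]

lemma uu_r (k r : ℕ) (hr : r < p) : uu p (p * k + (r + 1)) = uu p (p * k) + r := by
  induction r with
  | zero => rw [zero_add, uu_succ]; simp
  | succ r ih =>
    rw [← add_assoc, uu_succ, ih (by omega), if_neg]
    · ring
    · rw [Nat.dvd_add_right (dvd_mul_right _ _)]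
      intro h; have := Nat.le_of_dvd (by omega) h; omega

lemma uu_p (k : ℕ) : uu p (p * k) = k * (p - 1) := by
  have hp1 := hp.out.pos
  induction k with
  | zero => simp [uu]
  | succ k ih =>
    have := uu_r (p := p) k (p-1) (by omega)
    have e : p * (k + 1) = p * k + (p - 1 + 1) := by rw [Nat.sub_add_cancel hp1]; ring
    rw [e, this, ih]; ring

lemma uu_gen (k r : ℕ) (hr : r < p) : uu p (p * k + (r + 1)) = k * (p-1) + r := by
  rw [uu_r k r hr, uu_p]

lemma ss_half {c d : RR p} (h : c * d = 1) (N : RR p) [Decidable (IsUnit N)] : ss p (N * d) = (if IsUnit N then d else 1) * ss p N := by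
  have hd : IsUnit d := IsUnit.of_mul_eq_one c (by rw [mul_comm]; exact h)
  unfold ss
  by_cases hN : IsUnit N
  · simp [hN, hN.mul hd]; ring
  · have : ¬ IsUnit (N * d) := fun h' => hN (isUnit_of_mul_isUnit_left h')
    simp [hN, this]

lemma GG_dup (h3 : 3 < p) {d : RR p} (h : 2 * d = 1) (N : ℕ) :
    GG p (N * d) * GG p (N * d + d) = GG p d * GG p N * d^(uu p N) := by
  classical
  induction N with
  | zero => simp [uu, GG_zero]
  | succ N ih =>
    have e1 : ((N + 1 : ℕ) : RR p) * d = N * d + d := by push_cast; ring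
    have e2 : ((N + 1 : ℕ) : RR p) * d + d = N * d + 1 := by push_cast; linear_combination h
    rw [e2, e1, GG_succ h3, ss_half h, Nat.cast_succ, GG_succ h3, uu_succ, pow_add]
    have : IsUnit (N : RR p) ↔ ¬ p ∣ N := unitN
    by_cases hN : p ∣ N
    · have h' : ¬ IsUnit (N : RR p) := by rw [this]; simpa using hN
      rw [if_neg h', if_pos hN]
      linear_combination ss p N * ih
    · have h' : IsUnit (N : RR p) := by rw [this]; simpa using hN
      rw [if_pos h', if_neg hN]
      linear_combination d * ss p N * ih

lemma GG_trip (h3 : 3 < p) {d : RR p} (h : 3 * d = 1) (N : ℕ) :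
    GG p (N * d) * GG p (N * d + d) * GG p (N * d + 2 * d) = GG p d * GG p (2 * d) * GG p N * d^(uu p N) := by
  classical
  induction N with
  | zero => simp [uu, GG_zero]
  | succ N ih =>
    have e1 : ((N + 1 : ℕ) : RR p) * d = N * d + d := by push_cast; ring
    have e2 : ((N + 1 : ℕ) : RR p) * d + d = N * d + 2 * d := by push_cast; ring
    have e3 : ((N + 1 : ℕ) : RR p) * d + 2 * d = N * d + 1 := by push_cast; linear_combination h
    rw [e3, e2, e1, GG_succ h3, ss_half h, Nat.cast_succ, GG_succ h3, uu_succ, pow_add]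
    have : IsUnit (N : RR p) ↔ ¬ p ∣ N := unitN
    by_cases hN : p ∣ N
    · have h' : ¬ IsUnit (N : RR p) := by rw [this]; simpa using hN
      rw [if_neg h', if_pos hN]
      linear_combination ss p N * ih
    · have h' : IsUnit (N : RR p) := by rw [this]; simpa using hN
      rw [if_pos h', if_neg hN]
      linear_combination d * ss p N * ih

end gamma
end SC
namespace SC
section fpart
variable {p : ℕ} [hp : Fact p.Prime]

lemma half (h3 : 3 < p) : 2 * (2 : RR p)⁻¹ = 1 := inv_mul' (unit_two h3)

/-- hypergeometric term -/
noncomputable def TT (p : ℕ) (a : RR p) (k : ℕ) : RR p :=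
  ∏ i ∈ Finset.range k, (((i:RR p) + 2⁻¹) * (i - a) * (i + 1 + a) * ((((i+1 : ℕ) : RR p))⁻¹)^3)

noncomputable def ff (p : ℕ) (j : ℕ) (a : RR p) : RR p := ∑ k ∈ Finset.range p, (k : RR p)^j * TT p a k

lemma TT_succ (a : RR p) (k : ℕ) : TT p a (k+1) =
    TT p a k * (((k:RR p) + 2⁻¹) * (k - a) * (k + 1 + a) * ((((k+1 : ℕ) : RR p))⁻¹)^3) := by
  unfold TT; rw [Finset.prod_range_succ]

lemma TT_zero (a : RR p) : TT p a 0 = 1 := by simp [TT]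

lemma TT_symm (a : RR p) (k : ℕ) : TT p (-1 - a) k = TT p a k := by
  unfold TT
  refine Finset.prod_congr rfl fun i _ => ?_
  ring

lemma ff_symm (j : ℕ) (a : RR p) : ff p j (-1-a) = ff p j a := by
  unfold ff; simp only [TT_symm]

lemma TT_succ' (a : RR p) (k : ℕ) (hk : k + 1 < p) : (k+1:RR p)^3 * TT p a (k+1) =
    TT p a k * (((k:RR p) + 2⁻¹) * (k - a) * (k + 1 + a)) := by
  rw [TT_succ]
  have := natInv (p := p) (n := k+1) (by omega) hk
  push_cast at this ⊢
  generalize ((k:RR p)+1)⁻¹ = c at *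
  have h2 : ((k:RR p)+1)^3 * c^3 = 1 := by rw [← mul_pow, this, one_pow]
  linear_combination TT p a k * (((k:RR p) + 2⁻¹) * (k - a) * (k + 1 + a)) * h2

lemma prodp (x : RR p) : ∃ y, ∏ i ∈ Finset.range p, (x + i) = p * y := by
  obtain ⟨n, rfl⟩ := exN x
  have hp0 := hp.out.pos
  set j := (p - n % p) % p with hj
  have hjp : j < p := Nat.mod_lt _ hp0
  have hd : p ∣ n + j := by
    rw [Nat.dvd_iff_mod_eq_zero, hj, Nat.add_mod, Nat.mod_mod]
    have h1 := Nat.mod_lt n hp0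
    rcases Nat.eq_zero_or_pos (n % p) with h | h
    · simp [h]
    · rw [Nat.mod_eq_of_lt (show p - n % p < p by omega)]
      have : n % p + (p - n % p) = p := by omega
      rw [this]; simp
  obtain ⟨k, hk⟩ := hd
  rw [← Finset.mul_prod_erase _ _ (Finset.mem_range.2 hjp), ← Nat.cast_add, hk]
  push_cast
  exact ⟨_, mul_assoc _ _ _⟩

lemma bdry (a : RR p) : TT p a (p-1) * (((p-1:ℕ):RR p) + 2⁻¹) * (((p-1:ℕ):RR p) - a) * (((p-1:ℕ):RR p) + 1 + a) = 0 := by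
  have hp0 := hp.out.pos
  obtain ⟨y1, h1⟩ := prodp (p := p) 2⁻¹
  obtain ⟨y2, h2⟩ := prodp (p := p) (-a)
  obtain ⟨y3, h3⟩ := prodp (p := p) (1+a)
  have e : Finset.range p = Finset.range ((p-1)+1) := by rw [Nat.sub_add_cancel hp0]
  rw [e, Finset.prod_range_succ] at h1 h2 h3
  unfold TT
  simp only [Finset.prod_mul_distrib]
  have e1 : ∏ i ∈ Finset.range (p-1), ((i:RR p) + 2⁻¹) = ∏ i ∈ Finset.range (p-1), (2⁻¹ + (i:RR p)) :=
    Finset.prod_congr rfl fun i _ => by ring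
  have e2 : ∏ i ∈ Finset.range (p-1), ((i:RR p) - a) = ∏ i ∈ Finset.range (p-1), (-a + (i:RR p)) :=
    Finset.prod_congr rfl fun i _ => by ring
  have e3 : ∏ i ∈ Finset.range (p-1), ((i:RR p) + 1 + a) = ∏ i ∈ Finset.range (p-1), (1 + a + (i:RR p)) :=
    Finset.prod_congr rfl fun i _ => by ring
  rw [e1, e2, e3]
  generalize ∏ i ∈ Finset.range (p-1), (2⁻¹ + (i:RR p)) = X1 at *
  generalize ∏ i ∈ Finset.range (p-1), (-a + (i:RR p)) = X2 at *
  generalize ∏ i ∈ Finset.range (p-1), (1 + a + (i:RR p)) = X3 at *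
  generalize ∏ i ∈ Finset.range (p-1), ((((i+1 : ℕ) : RR p))⁻¹)^3 = X4 at *
  have : (X1 * (2⁻¹ + ((p-1:ℕ):RR p))) * (X2 * (-a + ((p-1:ℕ):RR p))) * (X3 * (1 + a + ((p-1:ℕ):RR p))) * X4 = 0 := by
    rw [h1, h2, h3]
    linear_combination y1 * y2 * y3 * X4 * p3 (p := p)
  linear_combination this

lemma tele (a : RR p) (P : ℕ → RR p) (N : ℕ) (hN : N + 1 ≤ p) :
    ∑ k ∈ Finset.range (N+1), TT p a k * (P (k+1) * (((k:RR p) + 2⁻¹) * (k - a) * (k + 1 + a)) - P k * (k:RR p)^3)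
     = P (N+1) * TT p a N * (((N:RR p) + 2⁻¹) * (N - a) * (N + 1 + a)) := by
  induction N with
  | zero => simp; ring
  | succ N ih =>
    rw [Finset.sum_range_succ, ih (by omega)]
    have := TT_succ' a N (by omega)
    push_cast
    linear_combination -P (N+1) * this

lemma tele_p (a : RR p) (P : ℕ → RR p) :
    ∑ k ∈ Finset.range p, TT p a k * (P (k+1) * (((k:RR p) + 2⁻¹) * (k - a) * (k + 1 + a)) - P k * (k:RR p)^3) = 0 := by
  have hp0 := hp.out.pos
  have := tele a P (p-1) (by omega)
  have h2 := bdry a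
  rw [Nat.sub_add_cancel hp0] at this
  rw [this]
  linear_combination P p * h2

lemma f2_rel (h3 : 3 < p) (a : RR p) : 3 * ff p 2 a + (1 - 2*(a*(a+1))) * ff p 1 a - a*(a+1) * ff p 0 a = 0 := by
  have h := tele_p a (fun _ => 1)
  unfold ff
  simp only [Finset.mul_sum]
  rw [← Finset.sum_add_distrib, ← Finset.sum_sub_distrib, show (0:RR p) = 2 * 0 by ring, ← h, Finset.mul_sum]
  refine Finset.sum_congr rfl fun k _ => ?_
  have h2 := half h3
  generalize (2:RR p)⁻¹ = d at *
  linear_combination (-TT p a k * (k-a)*(k+1+a))*h2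

lemma f3_rel (h3 : 3 < p) (a : RR p) : 5 * ff p 3 a + (4 - 2*(a*(a+1))) * ff p 2 a + (1 - 3*(a*(a+1))) * ff p 1 a - a*(a+1) * ff p 0 a = 0 := by
  have h := tele_p a (fun k => k)
  unfold ff
  simp only [Finset.mul_sum]
  rw [← Finset.sum_add_distrib, ← Finset.sum_add_distrib, ← Finset.sum_sub_distrib, show (0:RR p) = 2 * 0 by ring, ← h, Finset.mul_sum]
  refine Finset.sum_congr rfl fun k _ => ?_
  have h2 := half h3
  generalize (2:RR p)⁻¹ = d at *
  push_cast
  linear_combination (-TT p a k * (k-a)*(k+1+a) * (k+1))*h2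

noncomputable def VV (p : ℕ) (a : RR p) (k : ℕ) : RR p :=
  ∏ i ∈ Finset.range k, (((i:RR p) + 2⁻¹) * (i + 1 - a) * (i + 1 + a) * ((((i+1 : ℕ) : RR p))⁻¹)^3)
lemma VV_succ (a : RR p) (k : ℕ) : VV p a (k+1) =
    VV p a k * (((k:RR p) + 2⁻¹) * (k + 1 - a) * (k + 1 + a) * ((((k+1 : ℕ) : RR p))⁻¹)^3) := by
  unfold VV; rw [Finset.prod_range_succ]
lemma VV_T1 (a : RR p) (n : ℕ) : TT p a (n+1) = - a * VV p a n * (((n:RR p) + 2⁻¹) * (n + 1 + a) * ((((n+1 : ℕ) : RR p))⁻¹)^3) := by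
  induction n with
  | zero => simp [TT, VV]; ring
  | succ n ih =>
    rw [TT_succ, ih, VV_succ]
    push_cast
    ring
lemma VV_T2 (a : RR p) (n : ℕ) : TT p (a-1) (n+1) = a * VV p a n * (((n:RR p) + 2⁻¹) * (n + 1 - a) * ((((n+1 : ℕ) : RR p))⁻¹)^3) := by
  induction n with
  | zero => simp [TT, VV]; ring
  | succ n ih =>
    rw [TT_succ, ih, VV_succ]
    push_cast
    ring

lemma f1_tele (h3 : 3 < p) (a : RR p) (n : ℕ) (hn : n < p) :
    ∑ k ∈ Finset.range (n+1), ((k - a*(a+1)) * TT p a k + a^2 * TT p (a-1) k) =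
      -2 * a * (n + 2⁻¹) * VV p a n := by
  induction n with
  | zero =>
    simp [TT, VV]
    linear_combination a * half h3
  | succ n ih =>
    rw [Finset.sum_range_succ, ih (by omega), VV_T1, VV_T2, VV_succ]
    have h1 := natInv (p := p) (n := n+1) (by omega) hn
    have h2 := half h3
    push_cast at *
    generalize ((n:RR p)+1)⁻¹ = c at *
    have h4 : ((n:RR p)+1)^3 * c^3 = 1 := by rw [← mul_pow, h1, one_pow]
    generalize (2:RR p)⁻¹ = d at *
    generalize VV p a n = V at *
    have h5 : d = 1 - d := by linear_combination h2
    linear_combination (2*a*(n+d)*V) * h4 + (a*V*c^3*(n+d)*((n+1)^2 - a^2)) * h2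

lemma f1_rel (h3 : 3 < p) (a : RR p) (ha : IsUnit a) : ff p 1 a = a*(a+1)*ff p 0 a - a^2 * ff p 0 (a-1) := by
  have hp0 := hp.out.pos
  have h := f1_tele h3 a (p-1) (by omega)
  obtain ⟨y1, h1⟩ := prodp (p := p) 2⁻¹
  obtain ⟨y2, h2⟩ := prodp (p := p) (-a)
  obtain ⟨y4, h4⟩ := prodp (p := p) (a)
  have e : Finset.range p = Finset.range ((p-1)+1) := by rw [Nat.sub_add_cancel hp0]
  have key : a * a * (((p-1:ℕ):RR p) + 2⁻¹) * VV p a (p-1) = 0 := by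
    rw [e] at h1 h2 h4
    rw [Finset.prod_range_succ'] at h2 h4
    rw [Finset.prod_range_succ] at h1
    unfold VV
    simp only [Finset.prod_mul_distrib]
    have e1 : ∏ i ∈ Finset.range (p-1), ((i:RR p) + 2⁻¹) = ∏ i ∈ Finset.range (p-1), (2⁻¹ + (i:RR p)) :=
      Finset.prod_congr rfl fun i _ => by ring
    have e2 : ∏ i ∈ Finset.range (p-1), ((i:RR p) + 1 - a) = ∏ i ∈ Finset.range (p-1), (-a + ((i+1:ℕ):RR p)) :=
      Finset.prod_congr rfl fun i _ => by push_cast; ring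
    have e3 : ∏ i ∈ Finset.range (p-1), ((i:RR p) + 1 + a) = ∏ i ∈ Finset.range (p-1), (a + ((i+1:ℕ):RR p)) :=
      Finset.prod_congr rfl fun i _ => by push_cast; ring
    rw [e1, e2, e3]
    generalize ∏ i ∈ Finset.range (p-1), (2⁻¹ + (i:RR p)) = X1 at *
    generalize ∏ i ∈ Finset.range (p-1), (-a + ((i+1:ℕ):RR p)) = X2 at *
    generalize ∏ i ∈ Finset.range (p-1), (a + ((i+1:ℕ):RR p)) = X3 at *
    generalize ∏ i ∈ Finset.range (p-1), ((((i+1 : ℕ) : RR p))⁻¹)^3 = X4 at *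
    simp only [Nat.cast_zero, add_zero] at h2 h4
    have : (X1 * (2⁻¹ + ((p-1:ℕ):RR p))) * (X2 * (-a)) * (X3 * a) * X4 = 0 := by
      rw [h1, h2, h4]
      linear_combination y1 * y2 * y4 * X4 * p3 (p := p)
    linear_combination -this
  rw [← e] at h
  have h5 : a * (ff p 1 a - (a*(a+1)*ff p 0 a - a^2 * ff p 0 (a-1))) = 0 := by
    have : ff p 1 a - (a*(a+1)*ff p 0 a - a^2 * ff p 0 (a-1)) = ∑ k ∈ Finset.range p, ((k - a*(a+1)) * TT p a k + a^2 * TT p (a-1) k) := by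
      unfold ff
      simp only [Finset.mul_sum]
      rw [← Finset.sum_sub_distrib, ← Finset.sum_sub_distrib]
      refine Finset.sum_congr rfl fun k _ => by ring
    rw [this, h]
    linear_combination -2 * key
  have := (ha.mul_right_eq_zero).1 h5
  linear_combination this

end fpart
end SC
namespace SC
section fpart
variable {p : ℕ} [hp : Fact p.Prime]

noncomputable def ZZ' (p : ℕ) (a : RR p) (k : ℕ) : RR p :=
  ∏ i ∈ Finset.range k, (((i:RR p) + 2⁻¹) * (i + 1 - a) * (i + 2 + a) * ((((i+1 : ℕ) : RR p))⁻¹)^3)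
lemma ZZ_succ (a : RR p) (k : ℕ) : ZZ' p a (k+1) =
    ZZ' p a k * (((k:RR p) + 2⁻¹) * (k + 1 - a) * (k + 2 + a) * ((((k+1 : ℕ) : RR p))⁻¹)^3) := by
  unfold ZZ'; rw [Finset.prod_range_succ]
lemma ZZ_T1 (a : RR p) (n : ℕ) : TT p (a+1) (n+2) = (a+1) * a * ZZ' p a n * (((n:RR p) + 2⁻¹) * (n + 1 + 2⁻¹) * (n + 2 + a) * (n + 3 + a) * ((((n+1 : ℕ) : RR p))⁻¹)^3 * ((((n+2 : ℕ) : RR p))⁻¹)^3) := by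
  induction n with
  | zero => simp [TT, ZZ', Finset.prod_range_succ]; ring
  | succ n ih =>
    rw [show n + 1 + 2 = (n+2) + 1 by ring, TT_succ, ih, ZZ_succ]
    push_cast
    ring
lemma ZZ_T2 (a : RR p) (n : ℕ) : TT p (a-1) (n+2) = (a+1) * a * ZZ' p a n * (((n:RR p) + 2⁻¹) * (n + 1 + 2⁻¹) * (n + 1 - a) * (n + 2 - a) * ((((n+1 : ℕ) : RR p))⁻¹)^3 * ((((n+2 : ℕ) : RR p))⁻¹)^3) := by
  induction n with
  | zero => simp [TT, ZZ', Finset.prod_range_succ]; ring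
  | succ n ih =>
    rw [show n + 1 + 2 = (n+2) + 1 by ring, TT_succ, ih, ZZ_succ]
    push_cast
    ring

lemma rec_tele (h3 : 3 < p) (a : RR p) (n : ℕ) (hn : n + 1 < p) :
    ∑ k ∈ Finset.range (n+2), ((a+1)^2 * TT p (a+1) k - a^2 * TT p (a-1) k) =
      -2 * (2*a+1) * (a * (a+1)) * (n + 2⁻¹) * (n + 1 + 2⁻¹) * ZZ' p a n * ((((n+1 : ℕ) : RR p))⁻¹)^3 := by
  induction n with
  | zero =>
    simp [TT, ZZ', Finset.sum_range_succ]
    have h2 := half h3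
    generalize (2:RR p)⁻¹ = d at *
    have hd : 4 * d^2 = 1 := by linear_combination (2*d+1)*h2
    linear_combination (a*(a+1)*(2*a+1)*d)*h2 - (2*a+1) * h2
  | succ n ih =>
    rw [show n + 1 + 2 = (n + 2) + 1 by ring, Finset.sum_range_succ, ih (by omega), ZZ_T1, ZZ_T2, ZZ_succ]
    have h1 := natInv (p := p) (n := n+1+1) (by omega) hn
    have h2 := half h3
    push_cast at *
    rw [show (n:RR p) + 2 = n + 1 + 1 by ring]
    generalize ((n:RR p)+1+1)⁻¹ = c at *
    generalize ((n:RR p)+1)⁻¹ = b at *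
    have h4 : ((n:RR p)+1+1)^3 * c^3 = 1 := by rw [← mul_pow, h1, one_pow]
    generalize (2:RR p)⁻¹ = d at *
    generalize ZZ' p a n = V at *
    have h5 : d = 1 - d := by linear_combination h2
    linear_combination (2 * (2*a+1) * (a * (a+1)) * (n + d) * (n + 1 + d) * V * b^3) * h4 + ((2*a+1) * (a * (a+1)) * (n + d) * (n + 1 + d) * V * b^3*c^3*(n+1-a)*(n+2+a)) * h2

lemma rec_sum (h3 : 3 < p) (a : RR p) : ∃ K : RR p,
    (a+1)^2 * ff p 0 (a+1) - a^2 * ff p 0 (a-1) = K * (p * (a * (a+1)) * (∏ i ∈ Finset.range (p-2), (((i+1:ℕ):RR p) - a)) * (∏ i ∈ Finset.range (p-2), (((i+2:ℕ):RR p) + a))) ∧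
    K = -2 * (2*a+1) * (-2 * (2*0+1) * 0 + ((p * 0 + (∏ i ∈ Finset.range (p-2), ((((i+1 : ℕ) : RR p))⁻¹)^3) * (((p-2+1 : ℕ) : RR p)⁻¹)^3 * (prodp (p := p) 2⁻¹).choose))) := by
  refine ⟨_, ?_, rfl⟩
  have h := rec_tele h3 a (p-2) (by omega)
  have e : Finset.range p = Finset.range ((p-2)+2) := by congr 1; omega
  have h1 := (prodp (p := p) 2⁻¹).choose_spec
  generalize (prodp (p := p) 2⁻¹).choose = y1 at *
  have key : (a+1)^2 * ff p 0 (a+1) - a^2 * ff p 0 (a-1) = ∑ k ∈ Finset.range (p-2+2), ((a+1)^2 * TT p (a+1) k - a^2 * TT p (a-1) k) := by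
    rw [← e]
    unfold ff
    simp only [Finset.mul_sum]
    rw [← Finset.sum_sub_distrib]
    refine Finset.sum_congr rfl fun k _ => by ring
  rw [key, h]
  rw [e, Finset.prod_range_succ, Finset.prod_range_succ] at h1
  unfold ZZ'
  simp only [Finset.prod_mul_distrib]
  have e1 : ∏ i ∈ Finset.range (p-2), ((i:RR p) + 2⁻¹) = ∏ i ∈ Finset.range (p-2), (2⁻¹ + (i:RR p)) :=
    Finset.prod_congr rfl fun i _ => by ring
  have e2 : ∏ i ∈ Finset.range (p-2), ((i:RR p) + 1 - a) = ∏ i ∈ Finset.range (p-2), (((i+1:ℕ):RR p) - a) :=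
    Finset.prod_congr rfl fun i _ => by push_cast; ring
  have e3 : ∏ i ∈ Finset.range (p-2), ((i:RR p) + 2 + a) = ∏ i ∈ Finset.range (p-2), (((i+2:ℕ):RR p) + a) :=
    Finset.prod_congr rfl fun i _ => by push_cast; ring
  rw [e1, e2, e3]
  generalize ∏ i ∈ Finset.range (p-2), (2⁻¹ + (i:RR p)) = X1 at *
  generalize ∏ i ∈ Finset.range (p-2), (((i+1:ℕ):RR p) - a) = X2 at *
  generalize ∏ i ∈ Finset.range (p-2), (((i+2:ℕ):RR p) + a) = X3 at *
  generalize ∏ i ∈ Finset.range (p-2), ((((i+1 : ℕ) : RR p))⁻¹)^3 = X4 at *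
  generalize (((p-2+1:ℕ):RR p)⁻¹)^3 = X5 at *
  push_cast at h1
  linear_combination (-2 * (2*a+1) * (a * (a+1)) * X2 * X3 * X4 * X5) * h1

lemma ff_rec (h3 : 3 < p) (j : ℕ) (hj : 1 ≤ j) (hj2 : j + 2 ≤ p) (t : RR p) :
    (j + p * t + 1)^2 * ff p 0 (j + p * t + 1) = (j + p * t)^2 * ff p 0 (j + p * t - 1) := by
  obtain ⟨K, h, -⟩ := rec_sum h3 (j + p * t)
  have h1 : (∏ i ∈ Finset.range (p-2), (((i+1:ℕ):RR p) - (j + p * t))) = p * (-t * ∏ i ∈ (Finset.range (p-2)).erase (j-1), (((i+1:ℕ):RR p) - (j + p * t))) := by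
    rw [← Finset.mul_prod_erase (a := j-1) _ _ (Finset.mem_range.2 (by omega)), Nat.sub_add_cancel hj]
    ring
  have h2 : (∏ i ∈ Finset.range (p-2), (((i+2:ℕ):RR p) + (j + p * t))) = p * ((1+t) * ∏ i ∈ (Finset.range (p-2)).erase (p-2-j), (((i+2:ℕ):RR p) + (j + p * t))) := by
    rw [← Finset.mul_prod_erase (a := p-2-j) _ _ (Finset.mem_range.2 (by omega))]
    have : ((p - 2 - j + 2 : ℕ) : RR p) = p - j := by
      rw [show p - 2 - j + 2 = p - j by omega, Nat.cast_sub (by omega)]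
    rw [this]; ring
  rw [h1, h2] at h
  generalize ∏ i ∈ (Finset.range (p-2)).erase (j-1), (((i+1:ℕ):RR p) - (j + p * t)) = X at *
  generalize ∏ i ∈ (Finset.range (p-2)).erase (p-2-j), (((i+2:ℕ):RR p) + (j + p * t)) = Y at *
  linear_combination h + K * ((j + p * t) * (j + p * t + 1)) * (-t * X) * ((1+t)*Y) * p3 (p := p)

/-- p^2 · f(pt) = p^2 type statement -/
lemma TT_p (t : RR p) (k : ℕ) (hk : 1 ≤ k) : ∃ y, TT p (p * t) k = p * y := by
  obtain ⟨n, rfl⟩ : ∃ n, k = n + 1 := ⟨k - 1, by omega⟩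
  rw [VV_T1]
  exact ⟨_, by rw [neg_mul, neg_mul, mul_assoc, mul_assoc, ← mul_neg]⟩

lemma ff_p (t : RR p) : ∃ y, ff p 0 (p * t) = 1 + p * y := by
  have hp0 := hp.out.pos
  unfold ff
  rw [show Finset.range p = Finset.range ((p-1)+1) by rw [Nat.sub_add_cancel hp0], Finset.sum_range_succ']
  choose y hy using fun k : ℕ => TT_p (p := p) t (k+1) (by omega)
  refine ⟨∑ k ∈ Finset.range (p-1), y k, ?_⟩
  rw [TT_zero, Finset.mul_sum]
  simp only [hy]
  simp [add_comm]

lemma ff_one_aux (h3 : 3 < p) : ∃ κ : RR p, ∀ t : RR p, ff p 0 (1 + p * t) = p^2 * (t^2 + κ * t) := by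
  obtain ⟨K0, -, hK0⟩ := rec_sum h3 (0 : RR p)
  set X0 := (∏ i ∈ Finset.range (p-2), (((i+1:ℕ):RR p) - 0)) * (∏ i ∈ Finset.range (p-2), (((i+2:ℕ):RR p) + 0)) with hX0
  refine ⟨K0 * X0, fun t => ?_⟩
  obtain ⟨K, h, hK⟩ := rec_sum h3 (p * t)
  generalize hC : ((p:RR p) * 0 + (∏ i ∈ Finset.range (p-2), ((((i+1 : ℕ) : RR p))⁻¹)^3) * (((p-2+1 : ℕ) : RR p)⁻¹)^3 * (prodp (p := p) 2⁻¹).choose) = C at *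
  have hX : (p:RR p)^2 * ((∏ i ∈ Finset.range (p-2), (((i+1:ℕ):RR p) - p * t)) * (∏ i ∈ Finset.range (p-2), (((i+2:ℕ):RR p) + p * t))) = p^2 * X0 := by
    rw [hX0, ← Finset.prod_mul_distrib, ← Finset.prod_mul_distrib]
    apply p2_prod
    intro i _
    linear_combination (t * (i + 1 : ℕ) - t * (i+2:ℕ) - p * t^2) * p3 (p := p)
  have hs : ff p 0 (p * t - 1) = ff p 0 (p * (-t)) := by
    rw [← ff_symm]; congr 1; ring
  obtain ⟨y, hy⟩ := ff_p (-t)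
  rw [hs, hy] at h
  have h4 : (p * t + 1)^2 * ff p 0 (p * t + 1) = p^2 * (t^2 + K0 * X0 * t) := by
    subst hK hK0
    generalize (∏ i ∈ Finset.range (p-2), (((i+1:ℕ):RR p) - p * t)) = X1 at *
    generalize (∏ i ∈ Finset.range (p-2), (((i+2:ℕ):RR p) + p * t)) = X2 at *
    have := p3 (p := p)
    linear_combination h + (-2 * (2 * (p*t) + 1) * C * t * (p * t + 1)) * hX + (t^2 * y - 2 * (2*p*t^2 + 3 * t) * C * t * X0) * this
  have h5 : ff p 0 (1 + p * t) = (1 - 2 * (p * t) + 3 * (p*t)^2) * ((p * t + 1)^2 * ff p 0 (p * t + 1)) := by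
    rw [add_comm (p * t) 1]
    linear_combination -(4 * t^3 + 3 * t^4 * p) * ff p 0 (1 + p * t) * p3 (p := p)
  rw [h5, h4]
  linear_combination (-2 * t + 3 * p * t^2) * (t^2 + K0 * X0 * t) * p3 (p := p)

lemma ff_odd_zero (h3 : 3 < p) (h : ℕ) (hh : 2 * h + 1 < p) : ff p 0 ((2 * h + 1 : ℕ) : RR p) = 0 := by
  induction h with
  | zero =>
    obtain ⟨κ, hk⟩ := ff_one_aux h3
    have := hk 0
    simpa using this
  | succ h ih =>
    have h1 := ff_rec h3 (2 * h + 2) (by omega) (by omega) 0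
    have e1 : ((2 * h + 2 : ℕ) : RR p) + p * 0 - 1 = ((2 * h + 1 : ℕ) : RR p) := by push_cast; ring
    have e2 : ((2 * h + 2 : ℕ) : RR p) + p * 0 + 1 = ((2 * (h + 1) + 1 : ℕ) : RR p) := by push_cast; ring
    rw [e1, e2, ih (by omega), mul_zero] at h1
    have hu : IsUnit ((2 * (h + 1) + 1 : ℕ) : RR p) := unitN.2 fun h' => by
      have := Nat.le_of_dvd (by omega) h'; omega
    exact ((hu.pow 2).mul_right_eq_zero).1 h1

lemma ff_one (h3 : 3 < p) (t : RR p) : ff p 0 (1 + p * t) = p^2 * (t^2 + t) := by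
  obtain ⟨κ, hk⟩ := ff_one_aux h3
  have h1 := hk (-1)
  have hodd : p % 2 = 1 := (hp.out.eq_two_or_odd).resolve_left (by omega)
  have e : (1:RR p) + p * (-1) = -1 - ((2 * ((p - 3)/2) + 1 : ℕ) : RR p) := by
    rw [show 2 * ((p - 3)/2) + 1 = p - 2 by omega, Nat.cast_sub (by omega)]
    push_cast; ring
  rw [e, ff_symm, ff_odd_zero h3 _ (by omega)] at h1
  rw [hk t]
  linear_combination t * h1

/-- product of consecutive values -/
lemma ff_mul (h3 : 3 < p) (t : RR p) (j : ℕ) (hj : j + 1 < p) : ((j+1:ℕ) + p * t)^2 * ff p 0 ((j+1:ℕ) + p * t) * ff p 0 ((j:RR p) + p * t) = p^2 * (t^2 + t) := by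
  induction j with
  | zero =>
    obtain ⟨y, hy⟩ := ff_p (p := p) t
    simp only [zero_add, Nat.cast_one, Nat.cast_zero]
    rw [ff_one h3, hy]
    linear_combination (t^2 + t) * (2 * t + p * t^2 + (1 + p * t)^2 * y) * p3 (p := p)
  | succ j ih =>
    have h1 := ff_rec h3 (j+1) (by omega) (by omega) t
    have e1 : ((j + 1 : ℕ) : RR p) + p * t - 1 = (j : RR p) + p * t := by push_cast; ring
    have e2 : ((j + 1 : ℕ) : RR p) + p * t + 1 = ((j + 1 + 1: ℕ) : RR p) + p * t := by push_cast; ring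
    rw [e1, e2] at h1
    rw [h1, ← ih (by omega)]
    ring

lemma ff_even (h3 : 3 < p) (t : RR p) (h : ℕ) (hh : 2 * h < p) :
    ff p 0 ((2 * h : ℕ) + p * t) * (∏ i ∈ Finset.range h, ((2 * i + 2 : ℕ) + p * t))^2 =
      ff p 0 (p * t) * (∏ i ∈ Finset.range h, ((2 * i + 1 : ℕ) + p * t))^2 := by
  induction h with
  | zero => simp
  | succ h ih =>
    have hodd : p % 2 = 1 := (hp.out.eq_two_or_odd).resolve_left (by omega)
    have h1 := ff_rec h3 (2*h+1) (by omega) (by omega) t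
    have e1 : ((2 * h + 1 : ℕ) : RR p) + p * t - 1 = (2 * h : ℕ) + p * t := by push_cast; ring
    have e2 : ((2 * h + 1 : ℕ) : RR p) + p * t + 1 = ((2 * h + 2 : ℕ) : RR p) + p * t := by push_cast; ring
    rw [e1, e2] at h1
    rw [show 2 * (h+1) = 2 * h + 2 by ring, Finset.prod_range_succ, Finset.prod_range_succ]
    have ih' := ih (by omega)
    linear_combination (∏ i ∈ Finset.range h, (((2 * i + 2 : ℕ):RR p) + p * t))^2 * h1 + (((2 * h + 1 : ℕ):RR p) + p * t)^2 * ih'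

end fpart
end SC
namespace SC
section fexp
variable {p : ℕ} [hp : Fact p.Prime]

lemma exp_mul (h3 : 3 < p) {F : RR p → RR p} {c : RR p} (h : ∀ t, 2 * F t = 2 + 2 * p * c * t + p^2 * c^2 * t^2)
    (s t : RR p) : F (s + t) = F s * F t := by
  apply (unit_two h3).mul_left_cancel
  apply (unit_two h3).mul_left_cancel
  have h1 := h s
  have h2 := h t
  have h4 := h (s + t)
  have : (2 * F s) * (2 * F t) = 2 * (2 * F (s+t)) := by
    rw [h1, h2, h4]
    linear_combination (2 * c^3 * s * t^2 + 2 * c^3 * s^2 * t + p * c^4 * s^2 * t^2) * p3 (p := p)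
  linear_combination -this

lemma exp_zero (h3 : 3 < p) {F : RR p → RR p} {c : RR p} (h : ∀ t, 2 * F t = 2 + 2 * p * c * t + p^2 * c^2 * t^2) :
    F 0 = 1 := by
  apply (unit_two h3).mul_left_cancel
  rw [h]; ring

lemma exp_pow (h3 : 3 < p) {F : RR p → RR p} {c : RR p} (h : ∀ t, 2 * F t = 2 + 2 * p * c * t + p^2 * c^2 * t^2)
    (n : ℕ) (t : RR p) : F (n * t) = F t ^ n := by
  induction n with
  | zero => simp [exp_zero h3 h]
  | succ n ih => push_cast; rw [add_mul, one_mul, exp_mul h3 h, ih]; ring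

noncomputable def gg (p : ℕ) (k : ℕ) : RR p := ∏ i ∈ Finset.range k, ((i : RR p) + 2⁻¹) * ((i+1 : ℕ) : RR p)⁻¹

lemma TT_exp (t : RR p) (k : ℕ) (hk : k + 1 < p) : TT p (p * t) (k+1) =
    - gg p (k+1) * (p * t * ((k+1 : ℕ) : RR p)⁻¹) * (1 + p * t * ((k+1 : ℕ) : RR p)⁻¹) := by
  induction k with
  | zero => simp [TT, gg]
  | succ k ih =>
    rw [TT_succ, ih (by omega)]
    have hg : gg p (k+1+1) = gg p (k+1) * ((((k+1 : ℕ) : RR p) + 2⁻¹) * ((k+1+1 : ℕ) : RR p)⁻¹) := by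
      unfold gg; rw [Finset.prod_range_succ]
    rw [hg]
    have h1 := natInv (p := p) (n := k+1+1) (by omega) hk
    have h2 := natInv (p := p) (n := k+1) (by omega) (by omega)
    have e : ((k + 1 + 1 : ℕ) : RR p) = ((k+1:ℕ) : RR p) + 1 := by push_cast; ring
    rw [e] at h1 hg ⊢
    clear e
    generalize ((k+1:ℕ) : RR p) = x at *
    generalize (x+1)⁻¹ = c at *
    generalize x⁻¹ = b at *
    generalize gg p (k+1) = g at *
    generalize (2:RR p)⁻¹ = d at *
    have h0 := p3 (p := p)
    have e2 : (p * t * b) * (1 + p * t * b) * (x - p * t) = p * t := by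
      linear_combination (p * t + p^2 * t^2 * b) * h2 - t^3 * b^2 * h0
    have e3 : (x + 1 + p * t) * c^3 = c^2 * (1 + p * t * c) := by linear_combination c^2 * h1
    linear_combination (-g * (x + d) * (x + 1 + p * t) * c^3) * e2 + (-g * (x + d) * p * t) * e3

noncomputable def fA (p : ℕ) : RR p := ∑ k ∈ Finset.range (p-1), gg p (k+1) * ((k+1 : ℕ) : RR p)⁻¹
noncomputable def fB (p : ℕ) : RR p := ∑ k ∈ Finset.range (p-1), gg p (k+1) * (((k+1 : ℕ) : RR p)⁻¹)^2

lemma ff_AB (t : RR p) : ff p 0 (p * t) = 1 - p * t * fA p - p^2 * t^2 * fB p := by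
  have hp0 := hp.out.pos
  unfold ff fA fB
  rw [show Finset.range p = Finset.range ((p-1)+1) by rw [Nat.sub_add_cancel hp0], Finset.sum_range_succ', TT_zero]
  simp only [pow_zero, one_mul]
  have : ∑ k ∈ Finset.range (p-1), TT p (p * t) (k+1) = ∑ k ∈ Finset.range (p-1), (- (p * t) * (gg p (k+1) * ((k+1 : ℕ) : RR p)⁻¹) - p^2 * t^2 * (gg p (k+1) * (((k+1 : ℕ) : RR p)⁻¹)^2)) := by
    refine Finset.sum_congr rfl fun k hk => ?_
    rw [TT_exp t k (by have := Finset.mem_range.1 hk; omega)]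
    ring
  rw [this, Finset.sum_sub_distrib, ← Finset.mul_sum, ← Finset.mul_sum]
  ring

noncomputable def al (p : ℕ) (n : ℕ) : RR p := ∑ k ∈ Finset.range (p-1), (-1)^(k+1) * (n.choose (k+1) : RR p) * ((k+1 : ℕ) : RR p)⁻¹
noncomputable def be (p : ℕ) (n : ℕ) : RR p := ∑ k ∈ Finset.range (p-1), (-1)^(k+1) * (n.choose (k+1) : RR p) * (((k+1 : ℕ) : RR p)⁻¹)^2

lemma ch_div (n k : ℕ) (hn : n + 1 < p) (hk : k + 1 < p) : (n.choose k : RR p) * ((k+1 : ℕ) : RR p)⁻¹ = ((n+1).choose (k+1) : RR p) * ((n+1 : ℕ) : RR p)⁻¹ := by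
  have h1 := natInv (p := p) (n := n+1) (by omega) hn
  have h2 := natInv (p := p) (n := k+1) (by omega) hk
  have h := Nat.add_one_mul_choose_eq n k
  have h' : ((n+1:ℕ) : RR p) * (n.choose k : RR p) = ((n+1).choose (k+1) : RR p) * ((k+1:ℕ):RR p) := by rw [← Nat.cast_mul, ← Nat.cast_mul, h]
  generalize ((n+1:ℕ) : RR p) = x at *
  generalize ((k+1:ℕ) : RR p) = y at *
  linear_combination (-(n.choose k : RR p) * y⁻¹) * h1 + ((n+1).choose (k+1) : RR p) * x⁻¹ * h2 + x⁻¹*y⁻¹ * h'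

lemma alt_sum (n : ℕ) (hn : n + 1 < p) : ∑ k ∈ Finset.range (p-1), (-1 : RR p)^(k+1) * ((n+1).choose (k+1) : RR p) = -1 := by
  have hp0 := hp.out.pos
  have h := Int.alternating_sum_range_choose_of_ne (n := n+1) (by omega)
  have h2 : ∑ k ∈ Finset.range (n+1+1), (-1 : RR p)^k * ((n+1).choose k : RR p) = 0 := by
    have := congrArg (fun z : ℤ => (z : RR p)) h
    simpa using this
  have h4 : ∑ k ∈ Finset.range p, (-1 : RR p)^k * ((n+1).choose k : RR p) = 0 := by
    rw [← h2]
    symm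
    apply Finset.sum_subset
    · intro i hi; simp at *; omega
    · intro i _ hi
      rw [Nat.choose_eq_zero_of_lt (by simp at hi; omega)]; simp
  rw [show Finset.range p = Finset.range ((p-1)+1) by rw [Nat.sub_add_cancel hp0], Finset.sum_range_succ'] at h4
  simp only [pow_zero, Nat.choose_zero_right, Nat.cast_one, mul_one] at h4
  linear_combination h4

lemma al_succ (n : ℕ) (hn : n + 1 < p) : al p (n+1) = al p n - ((n+1 : ℕ) : RR p)⁻¹ := by
  have : al p (n+1) - al p n = ∑ k ∈ Finset.range (p-1), ((-1 : RR p)^(k+1) * ((n+1).choose (k+1) : RR p)) * ((n+1 : ℕ) : RR p)⁻¹ := by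
    unfold al
    rw [← Finset.sum_sub_distrib]
    refine Finset.sum_congr rfl fun k hk => ?_
    have := ch_div n k hn (by have := Finset.mem_range.1 hk; omega)
    have h2 : ((n+1).choose (k+1) : RR p) = n.choose k + n.choose (k+1) := by rw [Nat.choose_succ_succ']; push_cast; ring
    rw [mul_assoc _ _ ((n+1 : ℕ) : RR p)⁻¹, ← this, h2]; ring
  rw [← Finset.sum_mul, alt_sum n hn] at this
  linear_combination this

lemma be_succ (n : ℕ) (hn : n + 1 < p) : be p (n+1) = be p n + al p (n+1) * ((n+1 : ℕ) : RR p)⁻¹ := by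
  have : be p (n+1) - be p n = al p (n+1) * ((n+1 : ℕ) : RR p)⁻¹ := by
    unfold be al
    rw [← Finset.sum_sub_distrib, Finset.sum_mul]
    refine Finset.sum_congr rfl fun k hk => ?_
    have := ch_div n k hn (by have := Finset.mem_range.1 hk; omega)
    have h2 : ((n+1).choose (k+1) : RR p) = n.choose k + n.choose (k+1) := by rw [Nat.choose_succ_succ']; push_cast; ring
    have h4 : (n.choose (k+1) : RR p) = ((n+1).choose (k+1) : RR p) - n.choose k := by rw [h2]; ring
    rw [h4]
    linear_combination ((-1)^(k+1) * ((k+1:ℕ):RR p)⁻¹) * this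
  linear_combination this

lemma albe (n : ℕ) (hn : n < p) : 2 * be p n + al p n^2 = - ∑ i ∈ Finset.range n, (((i+1 : ℕ) : RR p)⁻¹)^2 := by
  induction n with
  | zero => simp [be, al]
  | succ n ih =>
    rw [be_succ n hn, al_succ n hn, Finset.sum_range_succ]
    linear_combination ih (by omega)

lemma harm2 (h3 : 3 < p) : (p:RR p)^2 * ∑ i ∈ Finset.range ((p-1)/2), (((i+1 : ℕ) : RR p)⁻¹)^2 = 0 := by
  have hodd : p % 2 = 1 := (hp.out.eq_two_or_odd).resolve_left (by omega)
  obtain ⟨M, hM⟩ : ∃ M, p = 2 * M + 1 := ⟨p/2, by omega⟩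
  have h := sum_rr2 h3 (0 : RR p)
  rw [show Finset.range p = Finset.range ((M+M)+1) by congr 1; omega, Finset.sum_range_succ'] at h
  have hr : ∀ i : ℕ, i + 1 < p → rr p (0 + ((i+1:ℕ) : RR p)) = ((i+1 : ℕ) : RR p)⁻¹ := by
    intro i hi
    have : IsUnit (((i+1:ℕ) : RR p)) := unitN.2 (fun h' => by have := Nat.le_of_dvd (by omega) h'; omega)
    rw [zero_add]; unfold rr; rw [if_pos this]
  have h0 : rr p (0 + ((0:ℕ) : RR p)) = 0 := by
    unfold rr; rw [if_neg]
    have := pmul_nonunit (p := p) 0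
    simpa using this
  rw [h0, Finset.sum_range_add] at h
  rw [show (p-1)/2 = M by omega]
  have e1 : ∑ i ∈ Finset.range M, rr p (0 + ((i+1:ℕ) : RR p))^2 = ∑ i ∈ Finset.range M, (((i+1 : ℕ) : RR p)⁻¹)^2 := by
    refine Finset.sum_congr rfl fun i hi => ?_
    rw [hr i (by have := Finset.mem_range.1 hi; omega)]
  have e2 : (p:RR p)^2 * ∑ i ∈ Finset.range M, rr p (0 + ((M+i+1:ℕ) : RR p))^2 = p^2 * ∑ i ∈ Finset.range M, (((i+1 : ℕ) : RR p)⁻¹)^2 := by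
    rw [← Finset.sum_range_reflect, Finset.mul_sum, Finset.mul_sum]
    refine Finset.sum_congr rfl fun i hi => ?_
    have hi' := Finset.mem_range.1 hi
    rw [hr _ (by omega)]
    have h1 := natInv (p := p) (n := i+1) (by omega) (by omega)
    have h2 := natInv (p := p) (n := p - (i+1)) (by omega) (by omega)
    rw [show M + (M - 1 - i) + 1 = p - (i+1) by omega]
    have e : ((p - (i+1) : ℕ) : RR p) = p - ((i+1:ℕ):RR p) := by rw [Nat.cast_sub (by omega)]
    rw [e] at h2 ⊢
    generalize ((i+1:ℕ):RR p) = x at *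
    generalize (p - x)⁻¹ = w at *
    generalize x⁻¹ = u at *
    have hw : w = -u + p * u * w := by linear_combination (-u) * h2 - w * h1
    have : w^2 = (-u + p * u * w) * (-u + p*u*w) := by rw [← hw]; ring
    rw [this]
    linear_combination (-2*u^2*w + p*u^2*w^2) * p3 (p := p)
  rw [e1] at h
  apply ((unit_two h3).mul_right_eq_zero).1
  linear_combination h - e2

lemma gg_ch (h3 : 3 < p) (k : ℕ) (hk : k < p) : (p:RR p)^2 * gg p k = p^2 * ((-1)^k * (((p-1)/2).choose k : RR p)) := by
  have hodd : p % 2 = 1 := (hp.out.eq_two_or_odd).resolve_left (by omega)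
  obtain ⟨M, hM⟩ : ∃ M, p = 2 * M + 1 := ⟨p/2, by omega⟩
  rw [show (p-1)/2 = M by omega]
  induction k with
  | zero => simp [gg]
  | succ k ih =>
    have hg : gg p (k+1) = gg p k * (((k : RR p) + 2⁻¹) * ((k+1 : ℕ) : RR p)⁻¹) := by
      unfold gg; rw [Finset.prod_range_succ]
    have h1 := natInv (p := p) (n := k+1) (by omega) hk
    have hc : (M.choose (k+1) : RR p) * ((k+1:ℕ):RR p) = M.choose k * (M - k) := by
      rcases le_or_gt k M with h | h
      · rw [← Nat.cast_sub h, ← Nat.cast_mul, ← Nat.cast_mul, Nat.choose_succ_right_eq]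
      · rw [Nat.choose_eq_zero_of_lt h, Nat.choose_eq_zero_of_lt (by omega)]; simp
    have hMp : (p : RR p) = 2 * M + 1 := by
      have := congrArg (fun n : ℕ => (n : RR p)) hM
      simp only [Nat.cast_add, Nat.cast_mul, Nat.cast_one] at this
      simpa using this
    have h2 := half h3
    rw [hg]
    generalize ((k+1:ℕ):RR p) = x at *
    generalize x⁻¹ = w at *
    generalize (2:RR p)⁻¹ = d at *
    have ih' := ih (by omega)
    have hd : d = -M + p * d := by linear_combination (1 + M - 0) * 0 + (-d) * hMp + (-M) * h2 
    have e : (M.choose (k+1) : RR p) = M.choose k * (M - k) * w := by linear_combination w * hc - (M.choose (k+1) : RR p) * h1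
    rw [e]
    generalize (M.choose k : RR p) = C at *
    linear_combination (k + d) * w * ih' + p^2 * (-1)^k * C * w * hd + (-1)^k * C * w * d * p3 (p := p)

lemma ff_exp (h3 : 3 < p) : ∃ c : RR p, ∀ t, 2 * ff p 0 (p * t) = 2 + 2 * p * c * t + p^2 * c^2 * t^2 := by
  refine ⟨-fA p, fun t => ?_⟩
  have hA : (p:RR p)^2 * fA p = p^2 * al p ((p-1)/2) := by
    unfold fA al
    rw [Finset.mul_sum, Finset.mul_sum]
    refine Finset.sum_congr rfl fun k hk => ?_
    have := gg_ch h3 (k+1) (by have := Finset.mem_range.1 hk; omega)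
    linear_combination ((k+1:ℕ):RR p)⁻¹ * this
  have hB : (p:RR p)^2 * fB p = p^2 * be p ((p-1)/2) := by
    unfold fB be
    rw [Finset.mul_sum, Finset.mul_sum]
    refine Finset.sum_congr rfl fun k hk => ?_
    have := gg_ch h3 (k+1) (by have := Finset.mem_range.1 hk; omega)
    linear_combination (((k+1:ℕ):RR p)⁻¹)^2 * this
  have h1 := albe (p := p) ((p-1)/2) (by omega)
  have h2 := harm2 h3
  rw [ff_AB]
  linear_combination (-2 * t^2) * hB - t^2 * (fA p + al p ((p-1)/2)) * hA - t^2 * p^2 * h1 + t^2 * h2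

end fexp
end SC
namespace SC
section gam2
variable {p : ℕ} [hp : Fact p.Prime]

/-- symmetric expansion -/
lemma GG_sym_exp (h3 : 3 < p) (x c : RR p) (h : ∀ y, GG p (x + p * y) * GG p (x + p * (-y)) = c) :
    ∃ w, ∀ y, 2 * GG p (x + p * y) = GG p x * (2 + 2 * p * w * y + p^2 * w^2 * y^2) := by
  obtain ⟨a, b, hab⟩ := GG_exp h3 x
  refine ⟨a, fun y => ?_⟩
  have h0 := h 0
  have h1 := h 1
  rw [hab, hab] at h0 h1
  have hu := (GG_unit x).mul (GG_unit x)
  have : (GG p x * GG p x) * (p^2 * (2 * b - a^2)) = 0 := by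
    linear_combination h1 - h0 - GG p x * GG p x * p * b^2 * p3 (p := p)
  have h2 := (hu.mul_right_eq_zero).1 this
  rw [hab]
  linear_combination GG p x * y^2 * h2

lemma GG_p_exp (h3 : 3 < p) : ∃ w, ∀ y, 2 * GG p (p * y) = 2 + 2 * p * w * y + p^2 * w^2 * y^2 := by
  obtain ⟨w, hw⟩ := GG_sym_exp h3 0 1 (fun y => by
    have h1 := EE_add h3 0 y
    rw [EE_zero h3] at h1
    unfold EE at h1
    have h2 := GG_succ h3 (p * (-y))
    rw [ss_of_p] at h2
    have e : 1 - (0 + p * y) = p * (-y) + 1 := by ring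
    rw [e, h2] at h1
    rw [zero_add, zero_add] at *
    linear_combination -h1)
  refine ⟨w, fun y => ?_⟩
  have := hw y
  rw [GG_zero, zero_add, one_mul] at this
  exact this

lemma GG_h_exp (h3 : 3 < p) : ∃ w, ∀ y, 2 * GG p (2⁻¹ + p * y) = GG p 2⁻¹ * (2 + 2 * p * w * y + p^2 * w^2 * y^2) := by
  apply GG_sym_exp h3 2⁻¹ (EE p 2⁻¹)
  intro y
  have h1 := EE_add h3 2⁻¹ y
  rw [← h1]
  unfold EE
  congr 2
  linear_combination half h3

lemma GG_prod (h3 : 3 < p) (x : RR p) (h : ℕ) (hu : ∀ i < h, IsUnit (x + i)) :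
    GG p (x + h) = (-1)^h * (∏ i ∈ Finset.range h, (x + i)) * GG p x := by
  induction h with
  | zero => simp
  | succ h ih =>
    have e : x + ((h+1:ℕ):RR p) = x + h + 1 := by push_cast; ring
    rw [e, GG_succ h3, ih (fun i hi => hu i (by omega)), Finset.prod_range_succ, ss_of_unit (hu h (by omega)), pow_succ (-1 : RR p)]
    ring

lemma EE_nat (h3 : 3 < p) (n : ℕ) (hn : n < p) : EE p ((n+1:ℕ):RR p) = (-1)^(n+1) := by
  induction n with
  | zero =>
    have := EE_succ h3 (0:RR p)
    have h0 := pmul_nonunit (p := p) 0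
    rw [mul_zero] at h0
    rw [if_neg h0, EE_zero h3, zero_add] at this
    simp [this]
  | succ n ih =>
    have hu : IsUnit ((n+1:ℕ):RR p) := unitN.2 (fun h' => by have := Nat.le_of_dvd (by omega) h'; omega)
    rw [Nat.cast_succ (n+1), EE_succ h3, if_pos hu, ih (by omega), pow_succ (-1 : RR p) (n+1)]
    ring

lemma p_odd (h3 : 3 < p) : p % 2 = 1 := (hp.out.eq_two_or_odd).resolve_left (by omega)

lemma castM (h3 : 3 < p) : (p : RR p) = 2 * (((p-1)/2 : ℕ) : RR p) + 1 := by
  have hodd := p_odd h3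
  have := congrArg (fun n : ℕ => (n : RR p)) (show p = 2 * ((p-1)/2) + 1 by omega)
  simp only [Nat.cast_add, Nat.cast_mul, Nat.cast_one] at this
  simpa using this

lemma EE_half (h3 : 3 < p) : EE p (2⁻¹) = (-1)^((p-1)/2+1) := by
  have h := EE_nat h3 ((p-1)/2) (by omega)
  have e : (((p-1)/2 + 1 : ℕ) : RR p) = 2⁻¹ + p * 2⁻¹ := by
    push_cast
    have h1 := castM h3
    have h2 := half h3
    generalize (2:RR p)⁻¹ = d at *
    linear_combination (-d) * h1 - ((((p-1)/2 : ℕ) : RR p) + 1) * h2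
  rw [e, EE_add h3] at h
  exact h

lemma GG_half_sq (h3 : 3 < p) : GG p (2⁻¹)^2 = (-1)^((p-1)/2+1) := by
  rw [← EE_half h3]
  unfold EE
  have : (1:RR p) - 2⁻¹ = 2⁻¹ := by linear_combination - half h3
  rw [this, sq]

lemma GG_pmul (h3 : 3 < p) (s t : RR p) : GG p (p * (s + t)) = GG p (p * s) * GG p (p * t) := by
  obtain ⟨w, hw⟩ := GG_p_exp h3
  exact exp_mul (F := fun t => GG p (p * t)) h3 hw s t

lemma GG_hp (h3 : 3 < p) (τ : ℕ) : GG p (2⁻¹ + p * (τ * 2⁻¹)) = GG p 2⁻¹ * GG p (p * (τ * 2⁻¹)) * (2⁻¹)^(τ * (p-1)) := by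
  have h := GG_dup h3 (half h3) (p * τ)
  rw [uu_p] at h
  have h2 := half h3
  generalize (2:RR p)⁻¹ = d at *
  have e1 : ((p * τ : ℕ) : RR p) = p * (τ * d + τ * d) := by push_cast; linear_combination (- p * τ ) * h2
  have e2 : ((p * τ : ℕ) : RR p) * d = p * (τ * d) := by push_cast; ring
  rw [e2, e1, GG_pmul h3, add_comm (p * (τ * d))] at h
  apply (GG_unit ((p:RR p) * ((τ:RR p) * d))).mul_left_cancel
  linear_combination h

lemma pd_unit (i : ℕ) (t : RR p) (h0 : 0 < i) (hi : i < p) : IsUnit ((i : RR p) + p * t) :=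
  (unit_add t).2 (unitN.2 (fun h' => by have := Nat.le_of_dvd h0 h'; omega))

lemma half_unit (h3 : 3 < p) : IsUnit (2⁻¹ : RR p) := IsUnit.of_mul_eq_one 2 (by rw [mul_comm]; exact half h3)

lemma chainG (h3 : 3 < p) (t : RR p) (h : ℕ) (hh : 2 * h < p) :
    ff p 0 ((2 * h : ℕ) + p * t) * (GG p (1 + p * (t * 2⁻¹) + h) * GG p (2⁻¹ + p * (t * 2⁻¹)))^2 =
      ff p 0 (p * t) * (GG p (2⁻¹ + p * (t * 2⁻¹) + h) * GG p (p * (t * 2⁻¹)))^2 := by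
  have h1 := ff_even h3 t h hh
  have hd := half h3
  have hdu := half_unit h3
  have e1 : ∀ i : ℕ, (((2 * i + 2 : ℕ):RR p) + p * t) = 2 * (1 + p * (t * 2⁻¹) + i) := by
    intro i; push_cast; linear_combination -p * t * hd
  have e2 : ∀ i : ℕ, (((2 * i + 1 : ℕ):RR p) + p * t) = 2 * (2⁻¹ + p * (t * 2⁻¹) + i) := by
    intro i; push_cast; linear_combination (-p * t-1) * hd
  have g1 := GG_prod h3 (1 + p * (t * 2⁻¹)) h (fun i hi => by
    have := pd_unit (2 * i + 2) t (by omega) (by omega)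
    rw [e1] at this
    exact isUnit_of_mul_isUnit_right this)
  have g2 := GG_prod h3 (2⁻¹ + p * (t * 2⁻¹)) h (fun i hi => by
    have := pd_unit (2 * i + 1) t (by omega) (by omega)
    rw [e2] at this
    exact isUnit_of_mul_isUnit_right this)
  simp only [e1, e2] at h1
  rw [Finset.prod_mul_distrib, Finset.prod_mul_distrib] at h1
  have g3 : GG p (1 + p * (t * 2⁻¹)) = - GG p (p * (t * 2⁻¹)) := by
    rw [add_comm, GG_succ h3, ss_of_p]; ring
  rw [g1, g2, g3]
  simp only [Finset.prod_const, Finset.card_range] at h1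
  generalize ∏ i ∈ Finset.range h, (1 + p * (t * 2⁻¹) + (i:RR p)) = X at *
  generalize ∏ i ∈ Finset.range h, (2⁻¹ + p * (t * 2⁻¹) + (i:RR p)) = Y at *
  apply (((unit_two h3).pow h).pow 2).mul_left_cancel
  linear_combination (GG p (2⁻¹ + p * (t * 2⁻¹)))^2 * (GG p (p * (t * 2⁻¹)))^2 * ((-1)^h)^2 * h1

lemma ff_zero (h3 : 3 < p) : ff p 0 (0:RR p) = 1 := by
  obtain ⟨c, hc⟩ := ff_exp h3
  have := exp_zero (F := fun t => ff p 0 (p * t)) h3 hc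
  simpa using this

lemma sgn_sq (n : ℕ) : ((-1 : RR p)^n)^2 = 1 := by rw [← pow_mul, mul_comm, pow_mul]; simp

lemma ff_neg_p (h3 : 3 < p) : ff p 0 (p * (-1)) * ((2⁻¹)^(p-1))^2 = 1 := by
  have hodd := p_odd h3
  have h := chainG h3 0 ((p-1)/2) (by omega)
  have hM := castM h3
  have hd := half h3
  have hp := GG_hp h3 1
  have hs := GG_half_sq h3
  have e0 : (((2 * ((p-1)/2) : ℕ) : RR p) + p * 0) = -1 - p * (-1) := by push_cast; linear_combination -hM
  rw [e0, ff_symm] at h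
  simp only [zero_mul, mul_zero, add_zero, Nat.cast_one, one_mul, ff_zero h3, GG_zero, mul_one] at h hp
  generalize (2:RR p)⁻¹ = d at *
  have e1 : 1 + (((p-1)/2 : ℕ) : RR p) = d + p * d := by linear_combination (-d) * hM - ((((p-1)/2 : ℕ) : RR p) + 1) * hd
  have e2 : d + (((p-1)/2 : ℕ) : RR p) = p * d := by linear_combination (-d) * hM - ((((p-1)/2 : ℕ) : RR p)) * hd
  rw [e1, e2, hp] at h
  have hu := (GG_unit ((p:RR p) * d)).pow 2
  apply hu.mul_left_cancel
  have s2 := sgn_sq (p := p) ((p-1)/2+1)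
  have s3 : GG p d^4 = 1 := by
    have : GG p d^4 = (GG p d^2)^2 := by ring
    rw [this, hs, s2]
  linear_combination h - ff p 0 (p * (-1)) * (d^(p-1))^2 * GG p (p * d)^2 * s3

lemma ff_ptau (h3 : 3 < p) (τ : ℕ) : ff p 0 (p * τ) = ((2⁻¹)^(τ * (p-1)))^2 := by
  obtain ⟨c, hc⟩ := ff_exp h3
  have h1 := exp_pow (F := fun t => ff p 0 (p * t)) h3 hc τ (-1)
  have h2 := exp_mul (F := fun t => ff p 0 (p * t)) h3 hc τ (τ * (-1))
  have h4 := ff_neg_p h3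
  rw [h1] at h2
  rw [show (τ : RR p) + τ * (-1) = 0 by ring, mul_zero, ff_zero h3] at h2
  have h5 : (ff p 0 (p * (-1)))^τ * ((2⁻¹)^(τ * (p-1)))^2 = 1 := by
    rw [mul_comm τ, pow_mul, ← pow_mul _ τ 2, mul_comm τ 2, pow_mul, ← mul_pow, h4, one_pow]
  linear_combination (-((2⁻¹:RR p)^(τ * (p-1)))^2) * h2 + (ff p 0 (p * τ)) * h5 * (-1)

lemma chainF (h3 : 3 < p) (τ : ℕ) (h : ℕ) (hh : 2 * h < p) :
    ff p 0 ((2 * h : ℕ) + p * τ) * (GG p (1 + p * (τ * 2⁻¹) + h))^2 =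
      (-1)^((p-1)/2+1) * (GG p (2⁻¹ + p * (τ * 2⁻¹) + h))^2 := by
  have h1 := chainG h3 τ h hh
  rw [ff_ptau h3, GG_hp h3] at h1
  have hs := GG_half_sq h3
  have hu : IsUnit ((GG p (p * (τ * 2⁻¹)) * (2⁻¹)^(τ*(p-1)))^2) := ((GG_unit _).mul ((half_unit h3).pow _)).pow 2
  have s2 := sgn_sq (p := p) ((p-1)/2+1)
  apply hu.mul_left_cancel
  generalize (-1 : RR p)^((p-1)/2+1) = ε at *
  generalize GG p (p * (τ * 2⁻¹)) = G at *
  generalize (2⁻¹:RR p)^(τ*(p-1)) = D at *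
  generalize GG p (1 + p * (τ * 2⁻¹) + h) = U at *
  generalize GG p (2⁻¹ + p * (τ * 2⁻¹) + h) = V at *
  generalize ff p 0 (((2 * h : ℕ):RR p) + p * τ) = f at *
  linear_combination ε * h1 - f * U^2 * G^2 * D^2 * ε * hs - f * U^2 * G^2 * D^2 * s2

end gam2
end SC
namespace SC
section m
variable {p : ℕ} [hp : Fact p.Prime]

lemma pmod (h3 : 3 < p) : p % 12 = 1 ∨ p % 12 = 5 ∨ p % 12 = 7 ∨ p % 12 = 11 := by
  have hodd := p_odd h3
  have : p % 3 ≠ 0 := fun h => by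
    have := (Nat.prime_dvd_prime_iff_eq Nat.prime_three hp.out).1 (Nat.dvd_of_mod_eq_zero h)
    omega
  omega

lemma unit12 (h3 : 3 < p) : IsUnit (12 : RR p) := by
  have := (((unit_two h3).pow 2).mul (unit_three h3))
  rw [show (12 : RR p) = 2^2*3 by norm_num]; exact this

/-- tau -/
lemma ex_tau (e : RR p) : ∃ τ : ℕ, (τ : RR p) = -2 * e := exN _

lemma EEsq' (h3 : 3 < p) (x : RR p) : GG p x^2 * GG p (1-x)^2 = 1 := by
  rw [← mul_pow]; exact EE_sq h3 x

lemma cast_eq {a b : ℕ} (h : a = b) : (a : RR p) = (b : RR p) := by rw [h]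

lemma main1a (h3 : 3 < p) (h4 : p % 4 = 1) {e : RR p} (he : 12 * e = 1) :
    ∃ (h τ : ℕ), 2 * h < p ∧ p < 12 * h + 12 ∧ (τ : RR p) = -2 * e ∧ ((((2*h:ℕ):RR p) + p * τ) = -2 * e ∨ (((2*h:ℕ):RR p) + p * τ) = -1 - (-2 * e)) ∧
     ff p 0 (-2 * e) = - (GG p e * GG p (5 * e))^2 := by
  obtain ⟨τ, hτ⟩ := ex_tau e
  have hpm := pmod h3
  have hd := half h3
  have hs : (-1 : RR p)^((p-1)/2+1) = -1 := by
    apply Odd.neg_one_pow; rw [Nat.odd_iff]; omega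
  have hde : (2⁻¹ : RR p) = 6 * e := by linear_combination 6 * e * hd - 2⁻¹ * he
  rcases (show p % 12 = 1 ∨ p % 12 = 5 by omega) with h12 | h12
  · have hh : p = 12 * (p/12) + 1 := by omega
    have hc := cast_eq (p := p) hh
    simp only [Nat.cast_add, Nat.cast_mul, Nat.cast_one] at hc
    have hF := chainF h3 τ (p/12) (by omega)
    have e1 : (((2*(p/12):ℕ):RR p) + p * τ) = -2 * e := by
      push_cast at *; rw [hτ]; linear_combination (-2 * ((p/12:ℕ) : RR p)) * he - 2 * e * hc
    refine ⟨p/12, τ, by omega, by omega, hτ, Or.inl e1, ?_⟩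
    have e2 : 1 + (p:RR p) * (τ * 2⁻¹) + ((p/12:ℕ):RR p) = 1 - e := by
      rw [hτ, hde]; push_cast at *
      linear_combination (-((p/12:ℕ) : RR p) - p * e) * he - e * hc
    have e3 : 2⁻¹ + (p:RR p) * (τ * 2⁻¹) + ((p/12:ℕ):RR p) = 5 * e := by
      rw [hτ, hde]; push_cast at *
      linear_combination (-((p/12:ℕ) : RR p) - p * e) * he - e * hc
    rw [e1, e2, e3, hs] at hF
    have := EEsq' h3 e
    linear_combination GG p e^2 * hF - ff p 0 (-2*e) * this
  · have hh : p = 12 * (p/12) + 5 := by omega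
    have hc := cast_eq (p := p) hh
    simp only [Nat.cast_add, Nat.cast_mul] at hc
    have hF := chainF h3 τ (p/12) (by omega)
    have e1 : (((2*(p/12):ℕ):RR p) + p * τ) = -1 - (-2 * e) := by
      push_cast at *; rw [hτ]; linear_combination (-2 * ((p/12:ℕ) : RR p) - 1) * he - 2 * e * hc
    refine ⟨p/12, τ, by omega, by omega, hτ, Or.inr e1, ?_⟩
    have e2 : 1 + (p:RR p) * (τ * 2⁻¹) + ((p/12:ℕ):RR p) = 1 - 5 * e := by
      rw [hτ, hde]; push_cast at *
      linear_combination (-((p/12:ℕ) : RR p) - p * e) * he - e * hc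
    have e3 : 2⁻¹ + (p:RR p) * (τ * 2⁻¹) + ((p/12:ℕ):RR p) = e := by
      rw [hτ, hde]; push_cast at *
      linear_combination (-((p/12:ℕ) : RR p) - p * e) * he - e * hc
    rw [e1, e2, e3, hs, ff_symm] at hF
    have := EEsq' h3 (5 * e)
    linear_combination GG p (5 * e)^2 * hF - ff p 0 (-2*e) * this

lemma main1 (h3 : 3 < p) (h4 : p % 4 = 1) (h13 : 13 ≤ p) {e : RR p} (he : 12 * e = 1) :
    ff p 0 (-2 * e) = - (GG p e * GG p (5 * e))^2 ∧
    ff p 1 (-2 * e) * ff p 0 (-2 * e) = -20 * e^2 * (ff p 0 (-2 * e))^2 + 20 * e^2 * p^2 := by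
  obtain ⟨h, τ, h2, h5, hτ, ha, hF⟩ := main1a h3 h4 he
  refine ⟨hF, ?_⟩
  have h1 : 1 ≤ h := by omega
  have hu := pd_unit (2 * h) (τ : RR p) (by omega) h2
  have h6 := f1_rel h3 _ hu
  have h7 := ff_mul h3 (τ : RR p) (2 * h - 1) (by omega)
  rw [show 2 * h - 1 + 1 = 2 * h by omega] at h7
  have e1 : ((2 * h - 1 : ℕ) : RR p) + p * τ = ((2 * h : ℕ) : RR p) + p * τ - 1 := by
    rw [Nat.cast_sub (by omega)]; push_cast; ring
  rw [e1] at h7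
  generalize ((2 * h : ℕ) : RR p) + p * τ = a at *
  have hj : ∀ j, ff p j a = ff p j (-2 * e) := by
    intro j
    rcases ha with rfl | rfl
    · rfl
    · rw [ff_symm]
  have haa : a * (a + 1) = -20 * e^2 := by
    rcases ha with rfl | rfl
    · linear_combination 2 * e * he
    · linear_combination 2 * e * he
  rw [haa] at h6
  rw [hj] at h6 h7
  rw [hj] at h6
  rw [hτ] at h7
  linear_combination ff p 0 (-2 * e) * h6 - h7 - 2 * e * p^2 * he

lemma main3 (h3 : 3 < p) (h4 : p % 4 = 3) {e : RR p} (he : 12 * e = 1) :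
    p * ff p 0 (-2 * e) = 0 ∧
    p * (ff p 1 (-2 * e) * (GG p e * GG p (5 * e))^2) = -4 * p := by
  obtain ⟨τ, hτ⟩ := ex_tau e
  have hpm := pmod h3
  have hd := half h3
  have hs : (-1 : RR p)^((p-1)/2+1) = 1 := by
    apply Even.neg_one_pow; rw [Nat.even_iff]; omega
  have hde : (2⁻¹ : RR p) = 6 * e := by linear_combination 6 * e * hd - 2⁻¹ * he
  have key : ∃ (h : ℕ), 2 * h + 1 < p ∧ ((((2*h+1:ℕ):RR p) + p * τ) = -2 * e ∨ (((2*h+1:ℕ):RR p) + p * τ) = -1 - (-2 * e)) ∧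
     (((2*h+1:ℕ):RR p) + p * τ)^2 * ff p 0 (((2*h:ℕ):RR p) + p * τ) * (GG p e * GG p (5 * e))^2 = 4 := by
    have hF := chainF h3 τ (p/12) (by omega)
    rcases (show p % 12 = 7 ∨ p % 12 = 11 by omega) with h12 | h12
    · have hh : p = 12 * (p/12) + 7 := by omega
      have hc := cast_eq (p := p) hh
      simp only [Nat.cast_add, Nat.cast_mul] at hc
      have e1 : (((2*(p/12)+1:ℕ):RR p) + p * τ) = -2 * e := by
        push_cast at *; rw [hτ]; linear_combination (-2 * ((p/12:ℕ) : RR p) - 1) * he - 2 * e * hc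
      refine ⟨p/12, by omega, Or.inl e1, ?_⟩
      rw [e1]
      have e2 : 1 + (p:RR p) * (τ * 2⁻¹) + ((p/12:ℕ):RR p) = 5 * e := by
        rw [hτ, hde]; push_cast at *
        linear_combination (-((p/12:ℕ) : RR p) - p * e-1) * he - e * hc
      have e3 : 2⁻¹ + (p:RR p) * (τ * 2⁻¹) + ((p/12:ℕ):RR p) = -e := by
        rw [hτ, hde]; push_cast at *
        linear_combination (-((p/12:ℕ) : RR p) - p * e) * he - e * hc
      rw [e2, e3, hs, one_mul] at hF
      have h7 := EEsq' h3 e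
      have hue : IsUnit (-e) := (IsUnit.of_mul_eq_one (12:RR p) (by rw [mul_comm]; exact he)).neg
      have h8 := GG_succ h3 (-e)
      rw [ss_of_unit hue, show -e + 1 = 1 - e by ring] at h8
      rw [h8] at h7
      linear_combination 4 * e^2 * GG p e^2 * hF + 4 * h7
    · have hh : p = 12 * (p/12) + 11 := by omega
      have hc := cast_eq (p := p) hh
      simp only [Nat.cast_add, Nat.cast_mul] at hc
      have e1 : (((2*(p/12)+1:ℕ):RR p) + p * τ) = -1 - (-2 * e) := by
        push_cast at *; rw [hτ]; linear_combination (-2 * ((p/12:ℕ) : RR p) - 2) * he - 2 * e * hc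
      refine ⟨p/12, by omega, Or.inr e1, ?_⟩
      have hue : IsUnit (-(5 * e)) := by
        have := pd_unit (p := p) (2 * (p/12) + 1) τ (by omega) (by omega)
        rw [e1, show -1 - (-2 * e) = 2 * (-(5 * e)) by linear_combination he] at this
        exact isUnit_of_mul_isUnit_right this
      rw [e1]
      have e2 : 1 + (p:RR p) * (τ * 2⁻¹) + ((p/12:ℕ):RR p) = e := by
        rw [hτ, hde]; push_cast at *
        linear_combination (-((p/12:ℕ) : RR p) - p * e-1) * he - e * hc
      have e3 : 2⁻¹ + (p:RR p) * (τ * 2⁻¹) + ((p/12:ℕ):RR p) = -(5*e) := by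
        rw [hτ, hde]; push_cast at *
        linear_combination (-((p/12:ℕ) : RR p) - p * e) * he - e * hc
      rw [e2, e3, hs, one_mul] at hF
      have h7 := EEsq' h3 (5 * e)
      have h8 := GG_succ h3 (-(5 * e))
      rw [ss_of_unit hue, show -(5*e) + 1 = 1 - 5*e by ring] at h8
      rw [h8] at h7
      have h9 : (-1 - (-2 * e))^2 = 100 * e^2 := by linear_combination -(8*e+1) * he
      rw [h9]
      linear_combination 100 * e^2 * GG p (5 * e)^2 * hF + 4 * h7
  obtain ⟨h, hh, ha, hk⟩ := key
  have hu := pd_unit (2 * h + 1) (τ : RR p) (by omega) hh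
  have h6 := f1_rel h3 _ hu
  have h7 := ff_mul h3 (τ : RR p) (2 * h) (by omega)
  have e1 : ((2 * h : ℕ) : RR p) + p * τ = ((2 * h + 1 : ℕ) : RR p) + p * τ - 1 := by
    push_cast; ring
  rw [e1] at h7 hk
  generalize ((2 * h + 1: ℕ) : RR p) + p * τ = a at *
  have hj : ∀ j, ff p j a = ff p j (-2 * e) := by
    intro j
    rcases ha with rfl | rfl
    · rfl
    · rw [ff_symm]
  rw [hj] at h6 h7
  rw [hj] at h6
  have h4u : IsUnit (4 : RR p) := by rw [show (4:RR p) = 2^2 by norm_num]; exact (unit_two h3).pow 2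
  have hz : p * ff p 0 (-2 * e) = 0 := by
    apply (h4u.mul_right_eq_zero).1
    linear_combination (-p * ff p 0 (-2 * e)) * hk + p * (GG p e * GG p (5 * e))^2 * h7 + (τ^2 + τ) * (GG p e * GG p (5 * e))^2 * p3 (p := p)
  refine ⟨hz, ?_⟩
  rw [h6]
  linear_combination (a * (a+1) * (GG p e * GG p (5 * e))^2) * hz - p * hk

lemma pow_p2 (h3 : 3 < p) (ε y : RR p) (hε : ε^2 = 1) : (ε + p * y)^(p^2) = ε := by
  have h1 := pow_exp (p := p) (ε * y) (p^2)
  have h2 := ch2 (p := p) (p^2)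
  have h4 : (p : RR p)^2 * ((p^2).choose 2 : RR p) = 0 := by
    apply (unit_two h3).mul_left_cancel
    push_cast at h2
    linear_combination p^2 * h2 + p * (p^2 - 1) * p3 (p := p)
  have h5 : (1 + p * (ε * y))^(p^2) = 1 := by
    rw [h1]; push_cast
    linear_combination (ε * y) * p3 (p := p) + (ε * y)^2 * h4
  have e : ε + p * y = ε * (1 + p * (ε * y)) := by linear_combination (-p * y) * hε
  rw [e, mul_pow, h5, mul_one]
  have hodd := p_odd h3
  obtain ⟨k, hk⟩ : ∃ k, p^2 = 2 * k + 1 := by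
    have : p^2 % 2 = 1 := by rw [Nat.pow_mod, hodd]
    exact ⟨p^2/2, by omega⟩
  rw [hk, pow_succ, pow_mul, hε]; simp

/-- `3^{p^2 (p-1)/2}` is the quadratic character of 3. -/
lemma three_pow (h3 : 3 < p) : (3 : RR p)^((p-1)/2 * p^2) = ((legendreSym p 3 : ℤ) : RR p) := by
  have hodd := p_odd h3
  have h := legendreSym.eq_pow p 3
  have h1 : ∃ y, (3 : RR p)^((p-1)/2) = ((legendreSym p 3 : ℤ) : RR p) + p * y := by
    have h' : (((3 ^ ((p-1)/2) - legendreSym p 3 : ℤ)) : ZMod p) = 0 := by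
      push_cast; rw [h]; rw [show p/2 = (p-1)/2 by omega]; push_cast; ring
    rw [ZMod.intCast_zmod_eq_zero_iff_dvd] at h'
    obtain ⟨c, hc⟩ := h'
    refine ⟨c, ?_⟩
    have := congrArg (fun z : ℤ => (z : RR p)) hc
    push_cast at this
    linear_combination this
  obtain ⟨y, hy⟩ := h1
  rw [pow_mul, hy]
  apply pow_p2 h3
  have : legendreSym p 3 ^ 2 = 1 := by
    apply legendreSym.sq_one
    intro h0
    have h0' : ((3:ℕ) : ZMod p) = 0 := by simpa using h0
    rw [ZMod.natCast_eq_zero_iff] at h0'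
    have := Nat.le_of_dvd (by norm_num) h0'; omega
  exact_mod_cast congrArg (fun z : ℤ => (z : RR p)) this

lemma recip (h3 : 3 < p) : legendreSym 3 p = (-1)^((p-1)/2) * legendreSym p 3 := by
  have := legendreSym.quadratic_reciprocity' (p := p) (q := 3) (by omega) (by norm_num)
  rw [show p/2 * (3/2) = (p-1)/2 by have := p_odd h3; omega] at this
  exact_mod_cast this

lemma leg_sq (h3 : 3 < p) : (((legendreSym 3 p : ℤ) : RR p))^2 = 1 := by
  have : legendreSym 3 p ^ 2 = 1 := by
    apply legendreSym.sq_one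
    intro h0
    have h0' : ((p:ℕ) : ZMod 3) = 0 := by simpa using h0
    rw [ZMod.natCast_eq_zero_iff] at h0'
    have := (Nat.prime_dvd_prime_iff_eq Nat.prime_three hp.out).1 h0'; omega
  exact_mod_cast congrArg (fun z : ℤ => (z : RR p)) this

/-- triplication squared -/
lemma trip_sq (h3 : 3 < p) {e : RR p} (he : 12 * e = 1) (N : ℕ) (hN : 4 * (N : RR p) = 1) :
    (GG p e * GG p (5 * e))^2 * (3^(uu p N))^2 = GG p (3 * e)^4 := by
  have h := GG_trip h3 (show 3 * (4 * e) = 1 by linear_combination he) N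
  have hN' : (N : RR p) = 3 * e := by linear_combination 3 * e * hN - N * he
  rw [hN'] at h
  have e1 : 3 * e * (4 * e) = e := by linear_combination e * he
  have e2 : e + 4 * e = 5 * e := by ring
  have e3 : e + 2 * (4 * e) = 1 - 3 * e := by linear_combination he
  have e4 : 2 * (4 * e) = 1 - 4 * e := by linear_combination he
  rw [e1, e2, e3, e4] at h
  have r1 := EEsq' h3 (3 * e)
  have r2 := EEsq' h3 (4 * e)
  have h33 : (4 * e)^(uu p N) * 3^(uu p N) = 1 := by rw [← mul_pow, show 4 * e * 3 = 1 by linear_combination he, one_pow]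
  have hsq : (GG p e * GG p (5 * e))^2 * GG p (1 - 3 * e)^2 = GG p (3 * e)^2 * ((4 * e)^(uu p N))^2 := by
    have : (GG p e * GG p (5 * e) * GG p (1 - 3 * e))^2 = (GG p (4 * e) * GG p (1 - 4 * e) * GG p (3 * e) * (4 * e)^(uu p N))^2 := by rw [h]
    linear_combination this + (GG p (3 * e) * (4 * e)^(uu p N))^2 * r2
  have h44 : ((4 * e)^(uu p N))^2 * (3^(uu p N))^2 = 1 := by rw [← mul_pow, h33, one_pow]
  generalize (4 * e)^(uu p N) = u at *
  generalize (3:RR p)^(uu p N) = v at *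
  linear_combination (v^2 * GG p (3 * e)^2) * hsq + GG p (3 * e)^4 * h44 - (GG p e * GG p (5 * e))^2 * v^2 * r1

lemma XK1 (h3 : 3 < p) (h4 : p % 4 = 1) {e : RR p} (he : 12 * e = 1) :
    (GG p e * GG p (5 * e))^2 = ((legendreSym 3 p : ℤ) : RR p) * GG p (3 * e)^4 := by
  obtain ⟨m, hm⟩ : ∃ m, p = 4 * m + 1 := ⟨p/4, by omega⟩
  have hk : p^2 = 4 * (4 * m^2 + 2 * m) + 1 := by rw [hm]; ring
  set N := p * (3 * (4 * m^2 + 2 * m)) + (3 * m + 1) with hN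
  have hN4 : 4 * N = 3 * p^3 + 1 := by
    have : p^3 = p * p^2 := by ring
    rw [this, hk, hN]; rw [mul_add]; nlinarith [hm]
  have hu : uu p N = 3 * (4 * m^2 + 2 * m) * (p-1) + 3 * m := uu_gen _ _ (by omega)
  have hu2 : uu p N * 2 = (p-1)/2 * p^2 * 3 := by
    rw [hu, hk, show p - 1 = 4 * m by omega, show 4 * m / 2 = 2 * m by omega]; ring
  have hNc : 4 * (N : RR p) = 1 := by
    have := cast_eq (p := p) hN4
    push_cast at this
    rw [p3] at this; linear_combination this
  have h := trip_sq h3 he N hNc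
  rw [← pow_mul, hu2, pow_mul, three_pow h3] at h
  have hr := recip h3
  rw [show (-1 : ℤ)^((p-1)/2) = 1 by apply Even.neg_one_pow; rw [Nat.even_iff]; omega, one_mul] at hr
  rw [← hr] at h
  have hl := leg_sq h3
  linear_combination ((legendreSym 3 p : ℤ) : RR p) * h - (GG p e * GG p (5 * e))^2 * (((legendreSym 3 p : ℤ) : RR p)^2 + 1) * hl

lemma XK3 (h3 : 3 < p) (h4 : p % 4 = 3) {e : RR p} (he : 12 * e = 1) :
    (GG p e * GG p (5 * e))^2 = -3 * ((legendreSym 3 p : ℤ) : RR p) * GG p (3 * e)^4 := by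
  obtain ⟨m, hm⟩ : ∃ m, p = 4 * m + 3 := ⟨p/4, by omega⟩
  have hk : p^2 = 4 * (4 * m^2 + 6 * m + 2) + 1 := by rw [hm]; ring
  set N := p * ((4 * m^2 + 6 * m + 2)) + (m + 1) with hN
  have hN4 : 4 * N = p^3 + 1 := by
    have : p^3 = p * p^2 := by ring
    rw [this, hk, hN]; rw [mul_add]; nlinarith [hm]
  have hu : uu p N = (4 * m^2 + 6 * m + 2) * (p-1) + m := uu_gen _ _ (by omega)
  have hu2 : uu p N * 2 + 1 = (p-1)/2 * p^2 := by
    rw [hu, hk, show p - 1 = 4 * m + 2 by omega, show (4 * m + 2) / 2 = 2 * m + 1 by omega]; ring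
  have hNc : 4 * (N : RR p) = 1 := by
    have := cast_eq (p := p) hN4
    push_cast at this
    rw [p3] at this; linear_combination this
  have h := trip_sq h3 he N hNc
  have h5 := three_pow h3
  rw [← hu2, pow_succ, pow_mul] at h5
  have hr := recip h3
  rw [show (-1 : ℤ)^((p-1)/2) = -1 by apply Odd.neg_one_pow; rw [Nat.odd_iff]; omega] at hr
  have hr' : legendreSym p 3 = - legendreSym 3 p := by rw [hr]; ring
  rw [hr'] at h5
  have hl := leg_sq h3
  push_cast at h5
  linear_combination (-3 * ((legendreSym 3 p : ℤ) : RR p)) * h + (GG p e * GG p (5 * e))^2 * ((legendreSym 3 p : ℤ) : RR p) * h5 - (GG p e * GG p (5 * e))^2 * hl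

end m
end SC
namespace SC
section m
variable {p : ℕ} [hp : Fact p.Prime]

lemma two_pow_q (h3 : 3 < p) : ∃ q, (2:RR p)^(p-1) = 1 + p * q := by
  have h2 : (2 : ZMod p) ≠ 0 := by
    intro h0
    have h0' : ((2:ℕ) : ZMod p) = 0 := by simpa using h0
    rw [ZMod.natCast_eq_zero_iff] at h0'
    have := Nat.le_of_dvd (by norm_num) h0'; omega
  have h := ZMod.pow_card_sub_one_eq_one h2
  have h' : (((2 ^ (p-1) - 1 : ℤ)) : ZMod p) = 0 := by
    push_cast; rw [h]; ring
  rw [ZMod.intCast_zmod_eq_zero_iff_dvd] at h'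
  obtain ⟨c, hc⟩ := h'
  refine ⟨c, ?_⟩
  have := congrArg (fun z : ℤ => (z : RR p)) hc
  push_cast at this
  linear_combination this

lemma dupl (h3 : 3 < p) {c : RR p} (hc : 4 * c = 1) : ∃ α β v q : RR p,
    (∀ y, GG p (c + p * y) = GG p c * (1 + p * α * y + p^2 * β * y^2)) ∧
    (∀ y, 2 * GG p (2⁻¹ + p * y) = GG p 2⁻¹ * (2 + 2 * p * v * y + p^2 * v^2 * y^2)) ∧
    (2:RR p)^(p-1) = 1 + p * q ∧
    (2 + 2 * p * α + p^2 * α^2) * (1 + p * q) = 2 + 2 * p * v + p^2 * v^2 := by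
  obtain ⟨α, β, hα⟩ := GG_exp h3 c
  obtain ⟨v, hv⟩ := GG_h_exp h3
  obtain ⟨q, hq⟩ := two_pow_q h3
  refine ⟨α, β, v, q, hα, hv, hq, ?_⟩
  have hodd := p_odd h3
  have hd := half h3
  have h3' := p3 (p := p)
  obtain ⟨M, hM⟩ : ∃ M, p = 2 * M + 1 := ⟨p/2, by omega⟩
  have hk : p^2 = 2 * (2 * M^2 + 2 * M) + 1 := by rw [hM]; ring
  obtain ⟨k, hkd⟩ : ∃ k, k = 2 * M^2 + 2 * M := ⟨_, rfl⟩
  rw [← hkd] at hk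
  have hN : ∀ n, uu p (p * (k + n) + (M + 1)) = (k+n) * (p-1) + M := fun n => uu_gen _ _ (by omega)
  have hNc : ∀ n : ℕ, ((p * (k + n) + (M + 1) : ℕ) : RR p) = 2⁻¹ + p * n := by
    intro n
    have h1 := cast_eq (p := p) hk
    have h2 := cast_eq (p := p) hM
    simp only [Nat.cast_add, Nat.cast_mul, Nat.cast_pow, Nat.cast_one] at h1 h2 ⊢
    push_cast at h1 h2 ⊢
    generalize (2:RR p)⁻¹ = d at *
    linear_combination (-p * d) * h1 + (-d) * h2 + d * h3' - (M + p * k+1) * hd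
  have hdup : ∀ n : ℕ, GG p (c + p * (n * 2⁻¹)) * GG p (1 - c + p * (n * 2⁻¹)) = GG p 2⁻¹ * GG p (2⁻¹ + p * n) * ((2⁻¹)^((k+n) * (p-1) + M)) := by
    intro n
    have := GG_dup h3 hd (p * (k + n) + (M + 1))
    rw [hN, hNc] at this
    generalize (2:RR p)⁻¹ = d at *
    have hcd : d * d = c := by linear_combination c * (2 * d + 1) * hd - d * d * hc
    have e1 : (d + p * n) * d = c + p * (n * d) := by linear_combination hcd
    have e2 : c + p * (n * d) + d = 1 - c + p * (n * d) := by linear_combination (d+1)*hd - 2*hcd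
    rw [e1, e2] at this
    exact this
  have hE : ∀ y, GG p (1 - c + p * y) * GG p (c + p * (-y)) = EE p c := by
    intro y
    rw [← EE_add h3 c (-y)]
    unfold EE
    rw [mul_comm]; congr 2; ring
  have d0 := hdup 0
  have d2 := hdup 2
  have E0 := hE 0
  have E1 := hE 1
  have e1 : p * (((2:ℕ):RR p) * 2⁻¹) = p * 1 := by push_cast; rw [hd]
  rw [e1, hα, add_mul k, pow_add (2⁻¹:RR p), pow_add (2⁻¹:RR p)] at d2
  rw [hα] at E1
  have hv2 := hv ((2:ℕ):RR p)
  simp only [Nat.cast_zero, zero_mul, mul_zero, add_zero, neg_zero] at d0 E0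
  rw [pow_add] at d0
  -- combine
  set G := GG p c with hG
  set S := GG p (1 - c) with hS
  have hu : IsUnit (GG p 2⁻¹ * GG p 2⁻¹ * (2⁻¹)^(k * (p-1)) * (2⁻¹)^M) :=
    (((GG_unit _).mul (GG_unit _)).mul ((half_unit h3).pow _)).mul ((half_unit h3).pow _)
  have hD : (2⁻¹:RR p)^(2 * (p-1)) * (1 + p * q)^2 = 1 := by
    rw [← hq, ← pow_mul, mul_comm (p-1) 2, ← mul_pow, mul_comm (2⁻¹ : RR p), hd, one_pow]
  generalize (2⁻¹:RR p)^(2 * (p-1)) = D at *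
  generalize (2⁻¹:RR p)^(k * (p-1)) = D1 at *
  generalize (2⁻¹:RR p)^(M) = D2 at *
  generalize GG p (1 - c + p * 1) = S1 at *
  generalize GG p (2⁻¹ + p * ((2:ℕ):RR p)) = H2 at *
  push_cast at hv2
  generalize GG p (2⁻¹) = H at *
  have hkey : (1 + p * α * 1 + p^2 * β * 1^2) * (1+p*q)^2 = (1 + p * α * (-1) + p^2 * β * (-1)^2) * (1 + 2 * p * v + 2 * p^2 * v^2) := by
    apply hu.mul_left_cancel
    apply (unit_two h3).mul_left_cancel
    linear_combination (-2 * (1 + p * α * 1 + p^2 * β * 1^2) * (1+p*q)^2) * d0 + 2 * (1+p*q)^2 * (1 + p * α * 1 + p^2 * β * 1^2) * E0 - 2 * (1+p*q)^2 * (1 + p * α * 1 + p^2 * β * 1^2) * E1  + 2 * (1+p*q)^2 * (1 + p * α * (-1) + p^2 * β * (-1)^2) * d2 + (1+p*q)^2 * (1 + p * α * (-1) + p^2 * β * (-1)^2) * H * D1 * D * D2 * hv2 + (1 + p * α * (-1) + p^2 * β * (-1)^2) * H * D1 * D2 * H * (2 + 2 * p * v * 2 + p^2 * v^2*2^2) *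 hD
  apply sq_cancel h3
  · have := ((unit_two h3).mul (unit_one_add (p := p) q)).mul (unit_one_add (p := p) 0)
    have h2 := (unit_add (p:=p) (((2:RR p)*α + (p:RR p)*α^2)*(1+(p:RR p)*q))).2 this
    convert h2 using 1; ring
  · linear_combination 4*(1+p*α+p^2*(α^2-β))*hkey + (p*(1+p*q)^2*(α^2-2*β)^2 - 4*v^3 - p*v^4 + 4*((2*α*β-α^3)+p*β*(α^2-β))*(1+2*p*v+2*p^2*v^2)) * h3'
  · exact ⟨(2 * α + p * α^2) * (1 + p * q) + 2 * q - (2 * v + p * v^2), by ring⟩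

lemma GG_fact (h3 : 3 < p) (n : ℕ) (hn : n < p) : GG p ((n+1:ℕ):RR p) = (-1)^(n+1) * (n.factorial : RR p) := by
  induction n with
  | zero => 
    have := GG_succ h3 (0:RR p)
    have h2 := ss_of_p (p := p) 0
    rw [mul_zero] at h2
    rw [h2, GG_zero, zero_add] at this
    simp [this]
  | succ n ih =>
    have hu : IsUnit ((n+1:ℕ):RR p) := unitN.2 (fun h' => by have := Nat.le_of_dvd (by omega) h'; omega)
    rw [Nat.cast_succ (n+1), GG_succ h3, ss_of_unit hu, ih (by omega), pow_succ (-1:RR p) (n+1), Nat.factorial_succ]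
    push_cast
    ring

lemma R1K (h3 : 3 < p) (h4 : p % 4 = 3) {c : RR p} (hc : 4 * c = 1) :
    p * ((2 * p + 2 - 2^(p-1)) * (((p-1)/2).choose (p/4) : RR p)^2 * GG p c^4) = 16 * p := by
  obtain ⟨α, β, v, q, hα, hv, hq, hr⟩ := dupl h3 hc
  obtain ⟨m, hm⟩ : ∃ m, p = 4 * m + 3 := ⟨p/4, by omega⟩
  have hmc := cast_eq (p := p) hm
  push_cast at hmc
  rw [show (p-1)/2 = 2 * m + 1 by omega, show p/4 = m by omega, hq]
  have hd := half h3
  have h3' := p3 (p := p)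
  have e1 : ((m+1:ℕ):RR p) = c + p * c := by push_cast; linear_combination (-c) * hmc - (m + 1) * hc
  have e2 : ((2*m+1+1:ℕ):RR p) = 2⁻¹ + p * 2⁻¹ := by 
    push_cast; generalize (2:RR p)⁻¹ = d at *
    linear_combination (-d) * hmc - (2*m + 2) * hd
  have g1 := GG_fact h3 m (by omega)
  have g2 := GG_fact h3 (2*m+1) (by omega)
  have hch := Nat.choose_mul_factorial_mul_factorial (show m ≤ 2 * m + 1 by omega)
  rw [show 2 * m + 1 - m = m + 1 by omega, Nat.factorial_succ m] at hch
  have hch' : ((2*m+1).choose m : RR p) * (m.factorial) * ((m+1:ℕ) * m.factorial) = ((2*m+1).factorial : RR p) := by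
    rw [← hch]; push_cast; ring
  rw [e1] at g1 hch'
  rw [e2] at g2
  rw [hα] at g1
  have hv2 := hv (2⁻¹)
  have hH := GG_half_sq h3
  rw [show (-1 : RR p)^((p-1)/2+1) = 1 by apply Even.neg_one_pow; rw [Nat.even_iff]; omega] at hH
  have s1 := sgn_sq (p := p) (m+1)
  have s2 := sgn_sq (p := p) (2*m+1+1)
  generalize (-1:RR p)^(m+1) = ε at *
  generalize (-1:RR p)^(2*m+1+1) = δ at *
  generalize GG p (2⁻¹ + p * 2⁻¹) = H2 at *
  generalize GG p (2⁻¹) = H at *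
  generalize GG p c = G at *
  generalize (m.factorial : RR p) = f at *
  generalize ((2*m+1).factorial : RR p) = F at *
  generalize ((2*m+1).choose m : RR p) = B at *
  generalize (2:RR p)⁻¹ = d at *
  have hu : IsUnit ((1 + p * (α + 2 + (2 * α + p + p^2 * α))) : RR p) := unit_one_add _
  have hf4 : f^4 = G^4 * (1 + p * α * c + p^2 * β * c^2)^4 := by
    have : (ε * f)^4 = (G * (1 + p * α * c + p^2 * β * c^2))^4 := by rw [g1]
    linear_combination this - f^4 * (ε^2 + 1) * s1
  have hF2 : F^2 = H2^2 := by
    rw [g2]; linear_combination - F^2 * s2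
  have hHH : 4 * H2^2 = (2 + 2 * p * v * d + p^2 * v^2 * d^2)^2 := by
    linear_combination (2 * H2 + H * (2 + 2 * p * v * d + p^2 * v^2 * d^2)) * hv2 + (2 + 2 * p * v * d + p^2 * v^2 * d^2)^2 * hH
  have hFp : p * F^2 = p * (1 + p * v) := by
    apply (unit_two h3).mul_left_cancel
    apply (unit_two h3).mul_left_cancel
    rw [hF2]
    linear_combination p * hHH + 4 * p^2 * v * hd + (2 * v^2 * d^2 * (2 + 2 * p * v * d + p^2 * v^2 * d^2) + 4 * v^2 * d^2 - p^2 * v^4 * d^4) * h3'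
  have hfp : p * f^4 = p * (G^4 * (1 + p * α)) := by
    rw [hf4]
    have : (p:RR p) * (1 + p * α * c + p^2 * β * c^2)^4 = p * (1 + p * α) := by
      have hc' : p * (1 + p * α * c + p^2 * β * c^2) = p * (1 + p * α * c) := by linear_combination β * c^2 * h3'
      have : ∀ n : ℕ, p * (1 + p * α * c + p^2 * β * c^2)^n = p * (1 + n * (p * α * c)) := by
        intro n
        induction n with
        | zero => simp
        | succ n ih =>
          rw [pow_succ (_:RR p) n]; push_cast
          linear_combination (1 + p * α * c + p^2 * β * c^2) * ih + (1 + n * (p * α * c)) * hc' + n * α^2 * c^2 * h3'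
      rw [this 4]; push_cast; linear_combination p^2 * α * hc
    linear_combination G^4 * this
  have hsq : p * (B^2 * (c + p * c)^2 * f^4) = p * (1 + p * v) := by
    rw [← hFp, ← hch']; ring
  have hrp : p * ((1 + p * α) * (1 + p * q)) = p * (1 + p * v) := by
    apply (unit_two h3).mul_left_cancel
    linear_combination p * hr + (v^2 - α^2 * (1 + p * q)) * h3'
  have h1 : p * (B^2 * (1 + p)^2 * G^4 * (1 + p * α)) = 16 * p * (1 + p * v) := by
    linear_combination 16 * hsq - 16 * B^2 * (c + p * c)^2 * hfp - p * B^2 * G^4 * (1 + p * α) * (1 + p)^2 * (4 * c + 1) * hc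
  have hu2 : IsUnit ((1 + p * (2 + α)) : RR p) := unit_one_add _
  apply hu2.mul_left_cancel
  -- goal
  have h2 : p * (B^2 * (1 + 2 * p + p * α) * G^4) = 16 * p * (1 + p * v) := by
    linear_combination h1 - B^2 * G^4 * (1 + p * α + 2 * α) * h3'
  have hvq : (p:RR p)^2 * v = p^2 * (α + q) := by linear_combination -hrp + α * q * h3'
  linear_combination (2 * p + 2 - (1 + p * q)) * h2 + 16 * (2*p + 1 - p * q) * hvq + 16 * (2 - q) * (α + q) * h3'

end m
end SC
namespace SC
section m
variable {p : ℕ} [hp : Fact p.Prime]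

def red (p : ℕ) [Fact p.Prime] : RR p →+* ZMod p := ZMod.castHom (dvd_pow_self p (by norm_num : 3 ≠ 0)) (ZMod p)

lemma red_nat (n : ℕ) : red p (n : RR p) = n := map_natCast _ _

lemma red_zero {x : RR p} (h : red p x = 0) : ∃ y, x = p * y := by
  obtain ⟨n, rfl⟩ := exN x
  rw [red_nat, ZMod.natCast_eq_zero_iff] at h
  obtain ⟨c, rfl⟩ := h
  exact ⟨c, by push_cast; ring⟩

lemma red_unit {x : RR p} : IsUnit x ↔ red p x ≠ 0 := by
  obtain ⟨n, rfl⟩ := exN x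
  rw [red_nat, unitN, ne_eq, ZMod.natCast_eq_zero_iff]

def tau (p : ℕ) [Fact p.Prime] (t : ZMod p) : RR p := ((t.val : ℕ) : RR p)^(p^2)

lemma red_pow {x y : RR p} (h : red p x = red p y) : x^(p^2) = y^(p^2) := by
  have h1 : red p (x - y) = 0 := by rw [map_sub, h, sub_self]
  obtain ⟨z, hz⟩ := red_zero h1
  obtain ⟨w, hw⟩ := dvd_sub_pow_of_dvd_sub (R := RR p) (p := p) (a := x) (b := y) ⟨z, hz⟩ 2
  rw [p3, zero_mul] at hw
  exact sub_eq_zero.1 hw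

lemma red_val (t : ZMod p) : red p ((t.val : ℕ) : RR p) = t := by rw [red_nat]; simp

lemma tau_eq {x : RR p} {t : ZMod p} (h : red p x = t) : tau p t = x^(p^2) := by
  unfold tau; apply red_pow; rw [red_val, h]

lemma red_tau (t : ZMod p) : red p (tau p t) = t := by
  unfold tau; rw [map_pow, red_val, sq, pow_mul, ZMod.pow_card, ZMod.pow_card]

lemma tau_mul (s t : ZMod p) : tau p (s * t) = tau p s * tau p t := by
  have : red p (((s.val:ℕ):RR p) * ((t.val:ℕ):RR p)) = s * t := by rw [map_mul, red_val, red_val]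
  rw [tau_eq this, mul_pow]; rfl

lemma tau_one : tau p 1 = 1 := by rw [tau_eq (map_one (red p)), one_pow]
lemma tau_zero : tau p 0 = 0 := by
  rw [tau_eq (map_zero (red p)), zero_pow]; exact pow_ne_zero _ hp.out.ne_zero

lemma tau_pow (t : ZMod p) (n : ℕ) : tau p (t^n) = tau p t^n := by
  induction n with
  | zero => simp [tau_one]
  | succ n ih => rw [pow_succ, tau_mul, ih, pow_succ (tau p t)]

lemma tau_card {t : ZMod p} (h : t ≠ 0) : tau p t^(p-1) = 1 := by
  rw [← tau_pow, ZMod.pow_card_sub_one_eq_one h, tau_one]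

lemma tau_neg_one (h3 : 3 < p) : tau p (-1) = -1 := by
  rw [tau_eq (show red p (-1) = -1 by simp), Odd.neg_one_pow]
  exact Odd.pow (Nat.odd_iff.2 (p_odd h3))

lemma ex_gen : ∃ g : ZMod p, g ≠ 0 ∧ ∀ n : ℕ, g^n = 1 → (p-1) ∣ n := by
  obtain ⟨g, hg⟩ := IsCyclic.exists_generator (α := (ZMod p)ˣ)
  refine ⟨g, g.ne_zero, fun n hn => ?_⟩
  have h1 := orderOf_eq_card_of_forall_mem_zpowers hg
  rw [Nat.card_eq_fintype_card, ZMod.card_units] at h1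
  rw [← h1]; apply orderOf_dvd_of_pow_eq_one
  ext; simpa using hn

lemma sum_tau_zero {n : ℕ} (h : ¬ (p-1) ∣ n) : ∑ t : ZMod p, tau p t^n = 0 := by
  obtain ⟨g, hg0, hg⟩ := ex_gen (p := p)
  have h1 : ∑ t : ZMod p, tau p t^n = ∑ t : ZMod p, tau p (g * t)^n :=
    (Equiv.sum_comp (Equiv.mulLeft₀ g hg0) (fun t => tau p t^n)).symm
  simp only [tau_mul, mul_pow] at h1
  rw [← Finset.mul_sum] at h1
  have hu : IsUnit (tau p g^n - 1) := by
    rw [red_unit, map_sub, map_pow, red_tau, map_one]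
    intro h0; exact h (hg n (sub_eq_zero.1 h0))
  apply hu.mul_left_cancel
  rw [mul_zero, sub_mul, ← h1]; ring

lemma sum_tau_one {n : ℕ} (h0 : 0 < n) (h : (p-1) ∣ n) : ∑ t : ZMod p, tau p t^n = p - 1 := by
  have : ∀ t : ZMod p, tau p t^n = 1 - if t = 0 then 1 else 0 := by
    intro t
    split_ifs with ht
    · rw [ht, tau_zero, zero_pow h0.ne']; ring
    · obtain ⟨c, rfl⟩ := h
      rw [pow_mul, tau_card ht, one_pow]; ring
  simp [this, ZMod.card]

lemma newton (h3 : 3 < p) {m : ℕ} (hm : p = 4 * m + 1) (z : RR p) (h13 : 13 ≤ p) :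
    8 * (z^(2*m))^(p^2) = 15 * z^(2*m) - 10 * z^(6*m) + 3 * z^(10*m) := by
  rw [show 6*m = (2*m)*3 by ring, show 10*m = (2*m)*5 by ring, pow_mul z (2*m) 3, pow_mul z (2*m) 5]
  have h3' := p3 (p := p)
  by_cases h : IsUnit z
  · obtain ⟨e, he, hs⟩ : ∃ e : RR p, e^2 = 1 ∧ red p (z^(2*m)) = red p e := by
      have := ZMod.pow_card_sub_one_eq_one (red_unit.1 h)
      rw [show p - 1 = 2*m*2 by omega, pow_mul] at this
      rw [sq] at this
      rcases mul_self_eq_one_iff.1 this with h' | h'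
      · exact ⟨1, by ring, by rw [map_pow, map_one, h']⟩
      · exact ⟨-1, by ring, by rw [map_pow, map_neg, map_one, h']⟩
    have h1 : red p (z^(2*m) - e) = 0 := by rw [map_sub, hs, sub_self]
    obtain ⟨y, hy⟩ := red_zero h1
    have hy' : z^(2*m) = e + p * y := by linear_combination hy
    rw [hy', pow_p2 h3 _ _ he]
    linear_combination (e*(-3*e^2+7) - 15 * e * (p*y)^2*2 + 15*(p*y)*(-e^2+1)) * he  + (-15*e*p*y^4 - 30*e^2*y^3 + 10*y^3 - 3*p^2*y^5) * h3'
  · obtain ⟨y, rfl⟩ := nonunit h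
    have : ((p:RR p) * y)^(2*m) = 0 := by
      rw [mul_pow, show 2*m = 3 + (2*m-3) by omega, pow_add (p:RR p), h3']; ring
    rw [this]; simp [hp.out.ne_zero]


lemma sum_expand (m N : ℕ) : ∑ t : ZMod p, tau p t^(3*m) * (1 - tau p t)^N =
    ∑ j ∈ Finset.range (N+1), (-1)^j * (N.choose j : RR p) * ∑ t : ZMod p, tau p t^(3*m+j) := by
  have : ∀ t : ZMod p, tau p t^(3*m) * (1 - tau p t)^N =
    ∑ j ∈ Finset.range (N+1), (-1)^j * (N.choose j : RR p) * tau p t^(3*m+j) := by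
    intro t
    rw [show 1 - tau p t = -tau p t + 1 by ring, add_pow (-tau p t), Finset.mul_sum]
    apply Finset.sum_congr rfl
    intro j _
    rw [one_pow, neg_pow (tau p t), pow_add (tau p t)]; ring
  simp only [this]
  rw [Finset.sum_comm]
  simp only [Finset.mul_sum]

lemma S_val {m : ℕ} (hm0 : 0 < m) (hm : p = 4 * m + 1) (j : ℕ) (h : j ≤ 10 * m) :
    ∑ t : ZMod p, tau p t^(3*m+j) = if j = m ∨ j = 5 * m ∨ j = 9 * m then ((p:RR p) - 1) else 0 := by
  split_ifs with hj
  · apply sum_tau_one (by omega)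
    rw [show p - 1 = 4 * m by omega]
    rcases hj with h | h | h
    · exact ⟨1, by omega⟩
    · exact ⟨2, by omega⟩
    · exact ⟨3, by omega⟩
  · apply sum_tau_zero
    rw [show p - 1 = 4 * m by omega]
    rintro ⟨c, hc⟩
    have : c = 0 ∨ c = 1 ∨ c = 2 ∨ c = 3 ∨ 4 ≤ c := by omega
    rcases this with h | h | h | h | h
    · subst h; omega
    · subst h; omega
    · subst h; omega
    · subst h; omega
    · have := Nat.mul_le_mul_left (4*m) h; omega

def Jp (p m : ℕ) [Fact p.Prime] : RR p := ∑ t : ZMod p, tau p t^(3*m) * tau p (1-t)^(2*m)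

lemma sum_N (m N : ℕ) (hm0 : 0 < m) (hm : p = 4 * m + 1) (h : N ≤ 10 * m) :
   ∑ t : ZMod p, tau p t^(3*m) * (1 - tau p t)^N =
    (-1)^m * (p - 1) * ((N.choose m : RR p) + (N.choose (5*m) : RR p) + (N.choose (9*m) : RR p)) := by
  have hs : ∀ k, k = 1 ∨ k = 5 ∨ k = 9 → ∑ j ∈ Finset.range (N+1), (if j = k * m then (-1)^m * ((p:RR p) - 1) * (N.choose j : RR p) else 0) = (-1)^m * ((p:RR p) - 1) * (N.choose (k*m) : RR p) := by
    intro k hk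
    rw [Finset.sum_ite_eq']
    split_ifs with h1
    · rfl
    · rw [Finset.mem_range] at h1
      rw [Nat.choose_eq_zero_of_lt (by omega)]; simp
  rw [mul_add, mul_add, ← hs 5 (by simp), ← hs 9 (by simp)]
  have h1 := hs 1 (by simp)
  simp only [one_mul] at h1
  rw [← h1, sum_expand, ← Finset.sum_add_distrib, ← Finset.sum_add_distrib]
  apply Finset.sum_congr rfl
  intro j hj
  rw [Finset.mem_range] at hj
  rw [S_val hm0 hm j (by omega)]
  have s5 : (-1:RR p)^(5*m) = (-1)^m := by
    rw [pow_mul]; norm_num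
  have s9 : (-1:RR p)^(9*m) = (-1)^m := by
    rw [pow_mul]; norm_num
  by_cases j1 : j = m
  · have a1 : ¬ j = 5 * m := by omega
    have a2 : ¬ j = 9 * m := by omega
    simp only [if_pos j1, if_neg a1, if_neg a2, if_pos (Or.inl j1 : j = m ∨ _)]
    rw [j1]; ring
  · by_cases j5 : j = 5 * m
    · have a2 : ¬ j = 9 * m := by omega
      simp only [if_neg j1, if_pos j5, if_neg a2, if_pos (Or.inr (Or.inl j5) : j = m ∨ _)]
      rw [j5, s5]; ring
    · by_cases j9 : j = 9 * m
      · simp only [if_neg j1, if_neg j5, if_pos j9, if_pos (Or.inr (Or.inr j9) : j = m ∨ _)]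
        rw [j9, s9]; ring
      · simp [j1, j5, j9]

lemma Jp_val {m : ℕ} (hm : p = 4 * m + 1) (h13 : 13 ≤ p) :
    8 * Jp p m = (-1)^m * (p - 1) * (15 * ((2*m).choose m : RR p) - 20 * ((6*m).choose m : RR p)
      + 6 * ((10*m).choose m : RR p) + 3 * ((10*m).choose (5*m) : RR p)) := by
  have hm0 : 0 < m := by omega
  have h2 := sum_N (p := p) m (2*m) hm0 hm (by omega)
  have h6 := sum_N (p := p) m (6*m) hm0 hm (by omega)
  have h10 := sum_N (p := p) m (10*m) hm0 hm (by omega)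
  rw [Nat.choose_eq_zero_of_lt (show 2*m < 5*m by omega), Nat.choose_eq_zero_of_lt (show 2*m < 9*m by omega)] at h2
  rw [Nat.choose_eq_zero_of_lt (show 6*m < 9*m by omega), Nat.choose_symm_of_eq_add (show 6*m=5*m+m by ring)] at h6
  rw [Nat.choose_symm_of_eq_add (show 10*m=9*m+m by ring)] at h10
  unfold Jp
  rw [Finset.mul_sum]
  have : ∀ t : ZMod p, 8 * (tau p t^(3*m) * tau p (1-t)^(2*m)) = 15 * (tau p t^(3*m) * (1 - tau p t)^(2*m))
    - 10 * (tau p t^(3*m) * (1 - tau p t)^(6*m)) + 3 * (tau p t^(3*m) * (1 - tau p t)^(10*m)) := by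
    intro t
    have e : red p (1 - tau p t) = 1 - t := by rw [map_sub, map_one, red_tau]
    rw [tau_eq e, ← pow_mul, mul_comm (p^2), pow_mul]
    linear_combination tau p t^(3*m) * newton (by omega) hm (1 - tau p t) h13
  rw [Finset.sum_congr rfl (fun t _ => this t), Finset.sum_add_distrib, Finset.sum_sub_distrib, ← Finset.mul_sum, ← Finset.mul_sum, ← Finset.mul_sum, h2, h6, h10]
  push_cast; ring

end m
end SC
namespace SC
section m
variable {p : ℕ} [hp : Fact p.Prime]

lemma two_sq_unique {a b c d : ℤ} (hpp : p.Prime) (h1 : (p:ℤ) = a^2 + b^2) (h2 : (p:ℤ) = c^2 + d^2)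
    (ha : Odd a) (hd : Even d) : a^2 = c^2 := by
  have hP : Prime (p:ℤ) := Nat.prime_iff_prime_int.1 hpp
  have hpos : (0:ℤ) < p := by exact_mod_cast hpp.pos
  have key : (a*d-b*c)*(a*d+b*c) = p * (a^2-c^2) := by
    linear_combination (c^2) * h1 - a^2 * h2
  have fin : ∀ u w : ℤ, u^2 = (a*c)^2+(b*d)^2 + 2 * (a*b*c*d) ∨ u^2 = (a*c)^2+(b*d)^2 - 2 * (a*b*c*d) → u^2 + (p*w)^2 = p^2 → (u = 0 → (a*c)^2 = (b*d)^2) → (w = 0 → (a*d)^2=(b*c)^2) → a^2 = c^2 := by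
    intro u w _ h hu hw
    have hw2 : w^2 ≤ 1 := by
      by_contra hcon
      have : 2 ≤ w^2 := by omega
      nlinarith [sq_nonneg u, mul_pos hpos hpos]
    by_cases hw0 : w = 0
    · have e := hw hw0
      have : (p:ℤ) * (a^2 - c^2) = 0 := by linear_combination e - c^2 * h1 + a^2 * h2
      rcases mul_eq_zero.1 this with h | h
      · omega
      · linarith
    · have : w^2 = 1 := by
        have : 0 < w^2 := by positivity
        omega
      have hu0 : u = 0 := by
        have : u^2 = 0 := by linear_combination h - p^2 * this
        exact pow_eq_zero_iff (two_ne_zero) |>.1 this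
      have e := hu hu0
      have e2 : (p:ℤ) * (p - a^2 - c^2) = 0 := by
        linear_combination -e + (p-a^2+0) * h2 - 0 * h1 + d^2 * h1
      rcases mul_eq_zero.1 e2 with h | h
      · omega
      · exfalso
        have : a^2 = d^2 := by linarith
        have o1 := ha.pow (n := 2)
        rw [this] at o1
        have o2 := hd.pow_of_ne_zero (n := 2) (by norm_num)
        exact (Int.not_even_iff_odd.2 o1) o2
  rcases hP.dvd_or_dvd (Dvd.intro _ key.symm) with h | h
  · obtain ⟨w, hw⟩ := h
    refine fin (a*c+b*d) w (Or.inl (by ring)) ?_ ?_ ?_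
    · rw [← hw]; nth_rw 1 [sq (p:ℤ)]; nth_rw 1 [h1]; rw [h2]; ring
    · intro h; linear_combination (a*c - b*d) * h
    · intro h; rw [h] at hw; linear_combination (a*d+b*c) * hw
  · obtain ⟨w, hw⟩ := h
    refine fin (a*c-b*d) w (Or.inr (by ring)) ?_ ?_ ?_
    · rw [← hw]; nth_rw 1 [sq (p:ℤ)]; nth_rw 1 [h1]; rw [h2]; ring
    · intro h; linear_combination (a*c + b*d) * h
    · intro h; rw [h] at hw; linear_combination (a*d-b*c) * hw

def iU : GaussianIntˣ := ⟨⟨0,1⟩, ⟨0,-1⟩, by ext <;> simp, by ext <;> simp⟩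

lemma gauss {m : ℕ} (h3 : 3 < p) (hm : p = 4 * m + 1) : ∃ (A B : ℤ) (i0 : RR p), i0^2 = -1 ∧
    Jp p m = A + B * i0 ∧ (p:ℤ) = A^2 + B^2 ∧ Odd A := by
  classical
  have hm0 : 0 < m := by omega
  obtain ⟨g, hg⟩ := IsCyclic.exists_generator (α := (ZMod p)ˣ)
  have i2 : (iU : GaussianInt) * iU = -1 := by ext <;> simp [iU]
  have i2u : iU^2 = -1 := by ext1; rw [sq]; simpa using i2
  have hroot : iU ∈ rootsOfUnity (Fintype.card (ZMod p)ˣ) GaussianInt := by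
    rw [mem_rootsOfUnity, ZMod.card_units, show p - 1 = 2 * (2 * m) by omega, pow_mul, i2u, pow_mul]; simp
  let ψ : MulChar (ZMod p) GaussianInt := MulChar.ofRootOfUnity hroot hg
  have hψ : ψ g = iU := MulChar.ofRootOfUnity_spec hroot hg
  have hord : orderOf g = 4 * m := by
    have h1 := orderOf_eq_card_of_forall_mem_zpowers hg
    rw [Nat.card_eq_fintype_card, ZMod.card_units] at h1
    omega
  have hg2 : (g : ZMod p)^(2*m) = -1 := by
    have h1 : ((g : ZMod p)^(2*m))*((g : ZMod p)^(2*m)) = 1 := by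
      rw [← pow_add, ← two_mul, ← mul_assoc]
      norm_num
      rw [← hord]
      have := pow_orderOf_eq_one g
      rw [← Units.val_pow_eq_pow_val, this, Units.val_one]
    rcases mul_self_eq_one_iff.1 h1 with h | h
    · exfalso
      have : g^(2*m) = 1 := by ext; simpa using h
      have := orderOf_dvd_of_pow_eq_one this
      rw [hord] at this
      have := Nat.le_of_dvd (by omega) this
      omega
    · exact h
  let i0 := tau p g^(3*m)
  have hi0 : i0 * i0 = ((-1:ℤ) : RR p) := by
    show tau p g^(3*m) * tau p g^(3*m) = _
    rw [← pow_add (tau p g), show 3*m+3*m = (2*m)*3 by ring, pow_mul (tau p g), ← tau_pow, hg2, tau_neg_one h3]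
    norm_num
  let ρ : GaussianInt →+* RR p := Zsqrtd.lift ⟨i0, hi0⟩
  have hρi : ρ iU = i0 := by
    show (((0:ℤ)):RR p) + ((1:ℤ):RR p) * i0 = i0
    push_cast; ring
  have hρ : ∀ t : ZMod p, ρ (ψ t) = tau p t^(3*m) := by
    intro t
    by_cases ht : t = 0
    · subst ht
      rw [MulChar.map_zero, map_zero, tau_zero, zero_pow (by omega)]
    · obtain ⟨n, hn⟩ := (mem_powers_iff_mem_zpowers (x := g)).2 (hg (Units.mk0 t ht))
      have hn' : t = (g:ZMod p)^n := by
        have := congrArg Units.val hn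
        simpa using this.symm
      rw [hn', map_pow, hψ, map_pow, hρi, tau_pow, ← pow_mul (tau p g), ← pow_mul (tau p g), mul_comm n]
  let φ := ψ * ψ
  have hρφ : ∀ t : ZMod p, ρ (φ t) = tau p t^(2*m) := by
    intro t
    show ρ ((ψ * ψ) t) = _
    rw [MulChar.mul_apply, map_mul, hρ]
    by_cases ht : t = 0
    · subst ht; rw [tau_zero, zero_pow (by omega), zero_pow (by omega)]; ring
    · have := tau_card ht
      rw [show p - 1 = 4 * m by omega] at this
      rw [← pow_add (tau p t), show 3*m+3*m=4*m+2*m by ring, pow_add (tau p t), this, one_mul]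
  have hψ1 : ψ ≠ 1 := by
    intro h
    rw [h, MulChar.one_apply_coe] at hψ
    have := congrArg Zsqrtd.re hψ
    simp [iU] at this
  have hφ1 : φ ≠ 1 := by
    intro h
    have h2 : φ g = -1 := by
      show (ψ * ψ) g = _
      rw [MulChar.mul_apply, hψ, i2]
    rw [h, MulChar.one_apply_coe] at h2
    have := congrArg Zsqrtd.re h2
    simp at this
  have hψφ1 : ψ * φ ≠ 1 := by
    intro h
    have h2 : (ψ * φ) g = iU * (-1) := by
      show (ψ * (ψ * ψ)) g = _
      rw [MulChar.mul_apply, MulChar.mul_apply, hψ, i2]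
    rw [h, MulChar.one_apply_coe] at h2
    have := congrArg Zsqrtd.re h2
    simp [iU] at this
  set J := jacobiSum ψ φ with hJ
  have hJρ : ρ J = Jp p m := by
    rw [hJ]; unfold jacobiSum Jp
    rw [map_sum]
    apply Finset.sum_congr rfl
    intro t _
    rw [map_mul, hρ, hρφ]
  have hinj := GaussianInt.toComplex_injective
  have hn := jacobiSum_mul_jacobiSum_inv (F := ZMod p) (F' := ℂ) (by
      rw [ringChar.eq_zero, ZMod.ringChar_zmod_n]; exact hp.out.ne_zero.symm)
    ((MulChar.ringHomComp_ne_one_iff hinj).2 hψ1) ((MulChar.ringHomComp_ne_one_iff hinj).2 hφ1)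
    (by rw [← MulChar.ringHomComp_mul]; exact (MulChar.ringHomComp_ne_one_iff hinj).2 hψφ1)
  have hconj : ∀ χ η : MulChar (ZMod p) ℂ, jacobiSum χ⁻¹ η⁻¹ = star (jacobiSum χ η) := by
    intro χ η
    unfold jacobiSum
    rw [star_sum]
    apply Finset.sum_congr rfl
    intro t _
    rw [star_mul', MulChar.star_apply', MulChar.star_apply']
  rw [hconj, jacobiSum_ringHomComp, ← hJ, ZMod.card] at hn
  have hnorm : (p:ℤ) = J.re^2 + J.im^2 := by
    have h5 : GaussianInt.toComplex J * star (GaussianInt.toComplex J) = ((J.re^2+J.im^2 : ℤ) : ℂ) := by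
      rw [GaussianInt.toComplex_def]
      show _ * (starRingEnd ℂ) _ = _
      simp only [map_add, map_mul, Complex.conj_I, map_intCast]
      push_cast
      linear_combination (-(J.im:ℂ)^2) * Complex.I_mul_I
    rw [h5] at hn
    exact_mod_cast hn.symm
  refine ⟨J.re, J.im, i0, by rw [sq, hi0]; push_cast; ring, by rw [← hJρ]; rfl, hnorm, ?_⟩
  -- parity
  have hsum := MulChar.sum_eq_zero_of_ne_one hψ1
  have hdv : (2 : GaussianInt) ∣ J - ∑ t : ZMod p, ψ t + ∑ t : ZMod p, (if t = 1 then 1 else 0) := by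
    rw [hJ]; unfold jacobiSum
    rw [← Finset.sum_sub_distrib, ← Finset.sum_add_distrib]
    apply Finset.dvd_sum
    intro t _
    by_cases ht : t = 1
    · subst ht; simp only [sub_self, MulChar.map_zero, map_one, if_true]; simp
    · rw [if_neg ht]
      have hs : φ (1 - t) = 1 ∨ φ (1-t) = -1 := by
        obtain ⟨n, hn⟩ := (mem_powers_iff_mem_zpowers (x := g)).2 (hg (Units.mk0 (1-t) (sub_ne_zero.2 (Ne.symm ht))))
        have hn' : 1 - t = (g:ZMod p)^n := by
          have := congrArg Units.val hn
          simpa using this.symm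
        rw [hn', map_pow]
        show (ψ * ψ) g^n = _ ∨ (ψ * ψ) g^n = _
        rw [MulChar.mul_apply, hψ, i2]
        exact neg_one_pow_eq_or _ n
      rcases hs with h | h
      · rw [h]; exact ⟨0, by ring⟩
      · rw [h]; exact ⟨-ψ t, by ring⟩
  rw [hsum] at hdv
  simp only [Finset.sum_ite_eq', Finset.mem_univ, if_true, sub_zero] at hdv
  obtain ⟨w, hw⟩ := hdv
  have := congrArg Zsqrtd.re hw
  simp at this
  exact ⟨w.re - 1, by linarith⟩

lemma gauss_sq {m : ℕ} (h3 : 3 < p) (hm : p = 4 * m + 1) {x y : ℤ} (hxy : (p:ℤ) = x^2 + 4 * y^2) :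
    4 * (x:RR p)^2 * (Jp p m)^2 = ((Jp p m)^2 + p)^2 := by
  obtain ⟨A, B, i0, hi, hJ, hn, hA⟩ := gauss h3 hm
  have e : A^2 = x^2 := two_sq_unique hp.out hn (show (p:ℤ) = x^2 + (2*y)^2 by linarith) hA (even_two_mul y)
  have e' : (A:RR p)^2 = (x:RR p)^2 := by exact_mod_cast congrArg (fun z : ℤ => (z : RR p)) e
  have n' : (p:RR p) = (A:RR p)^2 + (B:RR p)^2 := by exact_mod_cast congrArg (fun z : ℤ => (z : RR p)) hn
  rw [← e']
  have h1 : Jp p m * (A - B * i0) = p := by rw [hJ, n']; linear_combination (-B^2) * hi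
  have h2 : Jp p m * (2 * A) = Jp p m^2 + p := by
    rw [← h1, hJ]; ring
  rw [← h2]; ring

end m
end SC
namespace SC

lemma polyid {R : Type*} [CommRing R] (p a b v w : R) (h3 : p^3 = 0) :
    (p - 1) * (15 * (-27*16*(1+p*v+p^2*w)*(1-p*a+p^2*b)^2)
     - 20 * (-27*8*(1+3*p+9*p^2)*(1-5*p)*(1-5*p*a+25*p^2*b)*(1-p*a+p^2*b)*(1+3*p*v+9*p^2*w))
     + 6 * (-(4*(1+5*p+25*p^2)*(9+15*p+25*p^2)*(1+5*p*v+25*p^2*w))*(5-9*p)*(1-9*p)*(1-9*p*a+81*p^2*b)*(1-p*a+p^2*b))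
     + 3 * (-2*(4*(1+5*p+25*p^2)*(9+15*p+25*p^2)*(1+5*p*v+25*p^2*w))*(1-5*p)^2*(1-5*p*a+25*p^2*b)^2)) = 27*16*8 := by
  linear_combination ((-178560)*p*a^2*v + (2511360)*p^2*a*b*v + (-1509120)*p*b*v + (-4204800)*p^3*b^2*v + (357120)*p*a*b +
      (-716544)*p^2*b^2 + (-1255680)*p^2*a^2*w + (933120)*p*a*w + (14837760)*p^3*a*b*w + (-9515520)*p^2*b*w +
      (-22942080)*p^4*b^2*w + (-11121120)*p^3*a^2*v + (-1887264)*p^2*a^2 + (-60660000)*p^4*a^2*w + (9572160)*p^2*a*v +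
      (1510080)*p*a + (53926080)*p^3*a*w + (121320000)*p^4*a*b*v + (22242240)*p^3*a*b + (636926400)*p^5*a*b*w +
      (-755040)*p*v + (-83616) + (-4786080)*p^2*w + (-85609920)*p^3*b*v + (-15369792)*p^2*b +
      (-454332480)*p^4*b*w + (-167798880)*p^5*b^2*v + (-31874976)*p^4*b^2 + (-864266400)*p^6*b^2*w + (-556800)*p^2*a^2*v +
      (-76800)*p*a^2 + (-3302400)*p^3*a^2*w + (552960)*p*a*v + (3386880)*p^2*a*w + (6604800)*p^3*a*b*v +
      (1113600)*p^2*a*b + (36134400)*p^4*a*b*w + (-276480)*p*w + (-5660160)*p^2*b*v + (-952320)*p*b +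
      (-30996480)*p^3*b*w + (-7008000)*p^4*b^2*v + (-1228800)*p^3*b^2 + (-37632000)*p^5*b^2*w + (25735200)*p^4*a^2*v +
      (4758240)*p^3*a^2 + (134508000)*p^5*a^2*w + (-17668800)*p^3*a*v + (-3067200)*p^2*a + (-95342400)*p^4*a*w +
      (-269016000)*p^5*a*b*v + (-51470400)*p^4*a*b + (-1380072000)*p^6*a*b*w + (1533600)*p^2*v + (228960)*p +
      (8834400)*p^3*w + (139214400)*p^4*b*v + (25821120)*p^3*b + (726398400)*p^5*b*w + (483280800)*p^6*b^2*v +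
      (94712160)*p^5*b^2 + (2445564000)*p^7*b^2*w + (12144000)*p^5*a^2*v + (-8160000)*p^4*a*v + (-121440000)*p^6*a*b*v +
      (816000)*p^3*v + (57312000)*p^5*b*v + (229296000)*p^7*b^2*v + (2428800)*p^4*a^2 + (-1632000)*p^3*a +
      (-24288000)*p^5*a*b + (163200)*p^2 + (11462400)*p^4*b + (45859200)*p^6*b^2 + (60720000)*p^6*a^2*w +
      (-40800000)*p^5*a*w + (-607200000)*p^7*a*b*w + (4080000)*p^4*w + (286560000)*p^6*b*w + (1146480000)*p^8*b^2*w +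
      (75510000)*p^6*a^2*v + (-63900000)*p^5*a*v + (-755100000)*p^7*a*b*v + (6390000)*p^4*v + (487980000)*p^6*b*v +
      (1129590000)*p^8*b^2*v + (15102000)*p^5*a^2 + (-12780000)*p^4*a + (-151020000)*p^6*a*b + (1278000)*p^3 +
      (97596000)*p^5*b + (225918000)*p^7*b^2 + (377550000)*p^7*a^2*w + (-319500000)*p^6*a*w + (-3775500000)*p^8*a*b*w +
      (31950000)*p^5*w + (2439900000)*p^7*b*w + (5647950000)*p^9*b^2*w + (-101550000)*p^7*a^2*v + (79500000)*p^6*a*v +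
      (1015500000)*p^8*a*b*v + (-7950000)*p^5*v + (-591900000)*p^7*b*v + (-1663950000)*p^9*b^2*v + (-20310000)*p^6*a^2 +
      (15900000)*p^5*a + (203100000)*p^7*a*b + (-1590000)*p^4 + (-118380000)*p^6*b + (-332790000)*p^8*b^2 +
      (-507750000)*p^8*a^2*w + (397500000)*p^7*a*w + (5077500000)*p^9*a*b*w + (-39750000)*p^6*w + (-2959500000)*p^8*b*w +
      (-8319750000)*p^10*b^2*w + (17280)*a^2*v + (-380160)*p*a*b*v + (172800)*b*v + (794880)*p^2*b^2*v +
      (-34560)*a*b + (120960)*p*b^2 + (190080)*p*a^2*w + (-103680)*a*w + (-2626560)*p^2*a*b*w +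
      (1486080)*p*b*w + (4596480)*p^3*b^2*w + (69120)*a + (-34560)*v + (-14976)*a^2 +
      (103680)*a*v + (-51840)*w + (-177408)*b) * h3

section m
variable {p : ℕ} [hp : Fact p.Prime]

def PN (p : ℕ) : ℕ → ℕ
  | 0 => 1
  | n+1 => PN p n * (if p ∣ n+1 then 1 else n+1)

lemma fac_PN (n : ℕ) : n.factorial = p^(n/p) * (n/p).factorial * PN p n := by
  induction n with
  | zero => simp [PN]
  | succ n ih =>
    rw [Nat.factorial_succ, ih, PN, Nat.succ_div]
    split_ifs with h
    · obtain ⟨c, hc⟩ := h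
      have h2 : n / p + 1 = c := by
        have h1 : (n+1)/p = n/p + if p ∣ n+1 then 1 else 0 := Nat.succ_div
        rw [hc, if_pos (dvd_mul_right p c), Nat.mul_div_cancel_left _ hp.out.pos] at h1
        exact h1.symm
      rw [Nat.factorial_succ, pow_succ, hc, ← h2]; ring
    · ring

lemma GG_PN (h3 : 3 < p) (n : ℕ) : GG p ((n+1:ℕ):RR p) = (-1)^(n+1) * (PN p n : RR p) := by
  induction n with
  | zero => 
    have := GG_succ h3 (0:RR p)
    have h2 := ss_of_p (p := p) 0
    rw [mul_zero] at h2
    rw [h2, GG_zero, zero_add] at this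
    simp [this, PN]
  | succ n ih =>
    rw [Nat.cast_succ (n+1), GG_succ h3, ih, pow_succ (-1:RR p) (n+1), PN]
    split_ifs with h
    · obtain ⟨c, hc⟩ := h
      rw [hc]; push_cast
      rw [ss_of_p]; ring
    · rw [ss_of_unit (unitN.2 h)]
      push_cast; ring

lemma PN_choose {a b i j : ℕ} (ha : a / p = i) (hb : b / p = j) (hc : (a+b)/p = i + j) :
    (a+b).choose a * PN p a * PN p b = (i+j).choose i * PN p (a+b) := by
  have h1 := Nat.add_choose_mul_factorial_mul_factorial a b
  have h2 := Nat.add_choose_mul_factorial_mul_factorial i j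
  rw [fac_PN (p := p) a, fac_PN (p := p) b, fac_PN (p := p) (a+b), ha, hb, hc, ← h2] at h1
  have hpos : 0 < p^(i+j) * (i.factorial * j.factorial) := by
    have := hp.out.pos
    positivity
  apply Nat.eq_of_mul_eq_mul_left hpos
  rw [pow_add] at h1 ⊢
  rw [Nat.choose_symm_add (a := a), Nat.choose_symm_add (a := i)]
  linarith

lemma GG_choose (h3 : 3 < p) {a b i j : ℕ} (ha : a / p = i) (hb : b / p = j) (hc : (a+b)/p = i + j) :
    ((a+b).choose a : RR p) * GG p ((a+1:ℕ):RR p) * GG p ((b+1:ℕ):RR p) = -((i+j).choose i : RR p) * GG p ((a+b+1:ℕ):RR p) := by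
  rw [GG_PN h3, GG_PN h3, GG_PN h3]
  have := congrArg (fun n : ℕ => (n : RR p)) (PN_choose ha hb hc)
  push_cast at this
  rw [pow_succ (-1:RR p), pow_succ (-1:RR p), pow_succ (-1:RR p), pow_add (-1:RR p)]
  linear_combination ((-1)^a * (-1)^b) * this

lemma GG_div (h3 : 3 < p) (n : ℕ) : GG p ((n+1:ℕ):RR p) * GG p (-(n:RR p)) = EE p (-(n:RR p)) := by
  unfold EE; rw [mul_comm]; congr 2; push_cast; ring

lemma J_val {m : ℕ} (hm : p = 4 * m + 1) (h13 : 13 ≤ p) {c : RR p} (hc : 4 * c = 1) :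
    (Jp p m)^2 = - GG p c^4 := by
  have h3 : 3 < p := by omega
  have hJ := Jp_val hm h13
  have hcu : IsUnit c := IsUnit.of_mul_eq_one 4 (by rw [mul_comm]; exact hc)
  have h5u : IsUnit (5:RR p) := by
    have := (unitN (p := p) (n := 5)).2 (fun h => by have := Nat.le_of_dvd (by norm_num) h; omega)
    simpa using this
  obtain ⟨α, β, hα⟩ := GG_exp h3 c
  obtain ⟨v0, hv⟩ := GG_h_exp h3
  have hd := half h3
  have hmc := cast_eq (p := p) hm
  have h3' := p3 (p := p)
  push_cast at hmc
  have c2 := GG_choose (p := p) h3 (a := m) (b := m) (i := 0) (j := 0) (Nat.div_eq_of_lt (by omega)) (Nat.div_eq_of_lt (by omega)) (Nat.div_eq_of_lt (by omega))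
  have q5 : 5 * m / p = 1 := Nat.div_eq_of_lt_le (by omega) (by omega)
  have c6 := GG_choose (p := p) h3 (a := m) (b := 5*m) (i := 0) (j := 1) (Nat.div_eq_of_lt (by omega)) q5 (Nat.div_eq_of_lt_le (by omega) (by omega))
  have c10 := GG_choose (p := p) h3 (a := m) (b := 9*m) (i := 0) (j := 2) (Nat.div_eq_of_lt (by omega)) (Nat.div_eq_of_lt_le (by omega) (by omega)) (Nat.div_eq_of_lt_le (by omega) (by omega))
  have c55 := GG_choose (p := p) h3 (a := 5*m) (b := 5*m) (i := 1) (j := 1) q5 q5 (Nat.div_eq_of_lt_le (by omega) (by omega))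
  rw [show m + m = 2 * m by ring] at c2
  rw [show m + 5 * m = 6 * m by ring] at c6
  rw [show m + 9 * m = 10 * m by ring] at c10
  rw [show 5*m + 5 * m = 10 * m by ring] at c55
  have x1 : -((m:ℕ):RR p) = c + p * (-c) := by
    linear_combination (-c) * hmc * (-1) + m * hc
  have x5 : -((5*m:ℕ):RR p) = (c + p * (-5*c)) + 1 := by
    push_cast; linear_combination (5*c) * hmc + (5 * m + 1) * hc
  have x9 : -((9*m:ℕ):RR p) = ((c + p * (-9*c)) + 1) + 1 := by
    push_cast; linear_combination (9*c) * hmc + (9 * m + 2) * hc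
  have u5 : IsUnit (c + p * (-5*c)) := (unit_add _).2 hcu
  have u9 : IsUnit (c + p * (-9*c)) := (unit_add _).2 hcu
  have u9' : IsUnit (c + p * (-9*c) + 1) := by
    have := (unit_add (p := p) (x := 5 * c) (-9*c)).2 (h5u.mul hcu)
    convert this using 1; linear_combination -hc
  have d1 := GG_div (p := p) h3 m
  have d5 := GG_div (p := p) h3 (5*m)
  have d9 := GG_div (p := p) h3 (9*m)
  rw [x1, EE_add h3] at d1
  rw [x5, EE_succ h3, if_pos u5, EE_add h3, GG_succ h3, ss_of_unit u5, hα] at d5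
  rw [x9, EE_succ h3, if_pos u9', EE_succ h3, if_pos u9, EE_add h3, GG_succ h3, ss_of_unit u9', GG_succ h3, ss_of_unit u9, hα] at d9
  rw [hα] at d1
  have hE := EE_sq h3 c
  have hH := GG_half_sq h3
  rw [show (-1 : RR p)^((p-1)/2+1) = -1 by apply Odd.neg_one_pow; rw [Nat.odd_iff]; omega] at hH
  have s1 := sgn_sq (p := p) m
  -- half values
  have hh : (2:RR p)⁻¹ = 2 * c := by
    apply (unit_two h3).mul_left_cancel; rw [hd]; linear_combination -hc
  rw [hh] at hv hH
  have hv' : ∀ k : RR p, GG p (2*c + p * (k * (2*c))) = GG p (2*c) * (1 + k * p * (2*c*v0) + k^2 * p^2 * (8*c^3*v0^2*4*c)) := by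
    intro k
    apply (unit_two h3).mul_left_cancel
    rw [hv]
    linear_combination (-(GG p (2*c)) * p^2 * v0^2 * k^2 * 4 * c^2 * (4 * c + 1)) * hc
  have y2 : ((2*m+1:ℕ):RR p) = 2*c + p * (1 * (2*c)) := by
    push_cast; linear_combination (-2*c) * hmc - (2*m+1) * hc
  have y6 : ((6*m+1:ℕ):RR p) + 1 = 2*c + p * (3 * (2*c)) := by
    push_cast; linear_combination (-6*c) * hmc - (6*m+2) * hc
  have y10 : (((10*m+1:ℕ):RR p) + 1) + 1 = 2*c + p * (5 * (2*c)) := by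
    push_cast; linear_combination (-10*c) * hmc - (10*m+3) * hc
  have z6 : ((6*m+1:ℕ):RR p) = 2 * c * (-1) + p * (6 * c) := by linear_combination y6 + hc
  have z10 : ((10*m+1:ℕ):RR p) = 2 * c * (-3) + p * (10 * c) := by linear_combination y10 + 2 * hc
  have z10' : ((10*m+1:ℕ):RR p) + 1 = 2 * c * (-1) + p * (10 * c) := by linear_combination y10 + hc
  have n1 : IsUnit (-1:RR p) := isUnit_one.neg
  have w6 : IsUnit ((6*m+1:ℕ):RR p) := by
    rw [z6]; exact (unit_add _).2 (((unit_two h3).mul hcu).mul n1)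
  have w10 : IsUnit ((10*m+1:ℕ):RR p) := by
    rw [z10]; exact (unit_add _).2 (((unit_two h3).mul hcu).mul (unit_three h3).neg)
  have w10' : IsUnit (((10*m+1:ℕ):RR p) + 1) := by
    rw [z10']; exact (unit_add _).2 (((unit_two h3).mul hcu).mul n1)
  have t6 := GG_succ h3 ((6*m+1:ℕ):RR p)
  rw [ss_of_unit w6, y6, hv'] at t6
  have t10 := GG_succ h3 (((10*m+1:ℕ):RR p) + 1)
  rw [ss_of_unit w10', y10, hv', GG_succ h3, ss_of_unit w10, z10'] at t10
  rw [y2, hv'] at c2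
  clear y2 y6 y10 x1 x5 x9 hα hv hv' w6 w10 w10' q5
  generalize GG p ((6*m+1:ℕ):RR p) = K6 at *
  generalize GG p ((10*m+1:ℕ):RR p) = K10 at *
  rw [z6] at t6
  rw [z10] at t10
  clear z6 z10 z10'
  generalize GG p ((m+1:ℕ):RR p) = g1 at *
  generalize GG p ((5*m+1:ℕ):RR p) = g5 at *
  generalize GG p ((9*m+1:ℕ):RR p) = g9 at *
  generalize GG p (2*c) = H at *
  generalize GG p c = G at *
  generalize EE p c = E at *
  generalize ((2*m).choose m : RR p) = C2 at *
  generalize ((6*m).choose m : RR p) = C6 at *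
  generalize ((10*m).choose m : RR p) = C10 at *
  generalize ((10*m).choose (5*m) : RR p) = C55 at *
  generalize (-1:RR p)^m = ε at *
  simp only [Nat.choose_zero_right, Nat.cast_one, show (1+1).choose 1 = 2 from rfl, Nat.cast_ofNat] at c2 c6 c10 c55
  obtain ⟨a, ha⟩ : ∃ a, a = α * c := ⟨_, rfl⟩
  obtain ⟨b, hb⟩ : ∃ b, b = β * c^2 := ⟨_, rfl⟩
  obtain ⟨v, hv⟩ : ∃ v, v = 2*c*v0 := ⟨_, rfl⟩
  obtain ⟨w, hw⟩ : ∃ w, w = 8*c^3*v0^2*4*c := ⟨_, rfl⟩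
  rw [← hv, ← hw] at c2 t6 t10
  have pid := polyid (p:RR p) a b v w h3'
  have d1' : g1 * (G * (1 - p * a + p^2 * b)) = E := by rw [ha, hb]; linear_combination d1
  have d5' : g5 * (-(c * (1 - 5 * p)) * (G * (1 - 5 * p * a + 25 * p^2 * b))) = -E := by rw [ha, hb]; linear_combination d5
  have d9' : g9 * (c^2 * (5 - 9 * p) * (1 - 9 * p) * (G * (1 - 9 * p * a + 81 * p^2 * b))) = E := by
    rw [ha, hb]; linear_combination d9 + g9 * c * (1 - 9 * p) * (G * (1 - 9 * p * (α * c) + 81 * p^2 * (β*c^2))) * hc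
  clear d1 d5 d9 ha hb hv hw
  have K6' : K6 = 2 * (1+3*p+9*p^2) * (H * (1+3*p*v+9*p^2*w)) := by
    linear_combination (-2*(1+3*p+9*p^2)) * t6 - K6 * hc + 108 * c * K6 * h3'
  have K10' : 27 * K10 = 4 * (1+5*p+25*p^2) * (9+15*p+25*p^2) * (H * (1+5*p*v+25*p^2*w)) := by
    linear_combination (-4*(1+5*p+25*p^2) * (9+15*p+25*p^2)) * t10 - 27 * K10 * (4*c+1) * hc + 16 * c^2 * K10 * (3500 - 15625*p^3) * h3'
  clear t6 t10
  obtain ⟨X1, hX1⟩ : ∃ X, X = (G * (1 - p * a + p^2 * b)) := ⟨_, rfl⟩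
  obtain ⟨X5, hX5⟩ : ∃ X, X = (-(c * (1 - 5 * p)) * (G * (1 - 5 * p * a + 25 * p^2 * b))) := ⟨_, rfl⟩
  obtain ⟨X9, hX9⟩ : ∃ X, X = (c^2 * (5 - 9 * p) * (1 - 9 * p) * (G * (1 - 9 * p * a + 81 * p^2 * b))) := ⟨_, rfl⟩
  rw [← hX1] at d1'
  rw [← hX5] at d5'
  rw [← hX9] at d9'
  have e2 : C2 = -(H * (1+p*v+p^2*w)) * X1^2 := by
    linear_combination X1^2*c2 - C2*(g1*X1 + E)*d1' - C2 * hE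
  have e6 : C6 = K6 * X1 * X5 := by
    linear_combination -(X1*X5)*c6 + C6*(g5*X5*d1'+E*d5') - C6*hE
  have e10 : C10 = -K10 * X1 * X9 := by
    linear_combination X1*X9*c10 - C10*(g9*X9*d1'+E*d9') - C10*hE
  have e55 : C55 = -2 * K10 * X5^2 := by
    linear_combination X5^2*c55 - C55*(g5*X5 - E)*d5' - C55*hE
  have f2 : 432 * C2 = H * G^2 * (-27*16*(1+p*v+p^2*w)*(1-p*a+p^2*b)^2) := by
    rw [e2, hX1]; ring
  have f6 : 432 * C6 = H * G^2 * (-27*8*(1+3*p+9*p^2)*(1-5*p)*(1-5*p*a+25*p^2*b)*(1-p*a+p^2*b)*(1+3*p*v+9*p^2*w)) := by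
    rw [e6, hX1, hX5, K6']
    linear_combination (-216 * (1+3*p+9*p^2) * (H * (1+3*p*v+9*p^2*w)) * (G * (1 - p * a + p^2 * b)) * (1 - 5 * p) * (G * (1 - 5 * p * a + 25 * p^2 * b))) * hc
  have f10 : 432 * C10 = H * G^2 * (-(4*(1+5*p+25*p^2)*(9+15*p+25*p^2)*(1+5*p*v+25*p^2*w))*(5-9*p)*(1-9*p)*(1-9*p*a+81*p^2*b)*(1-p*a+p^2*b)) := by
    rw [e10, hX1, hX9]
    linear_combination (-16 * (G * (1 - p * a + p^2 * b)) * (c^2 * (5 - 9 * p) * (1 - 9 * p) * (G * (1 - 9 * p * a + 81 * p^2 * b)))) * K10' - (4 * (1+5*p+25*p^2) * (9+15*p+25*p^2) * (H * (1+5*p*v+25*p^2*w)) * (G * (1 - p * a + p^2 * b)) * ((5 - 9 * p) * (1 - 9 * p) * (G * (1 - 9 * p * a + 81 * p^2 * b)))) * (4*c+1) * hc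
  have f55 : 432 * C55 = H * G^2 * (-2*(4*(1+5*p+25*p^2)*(9+15*p+25*p^2)*(1+5*p*v+25*p^2*w))*(1-5*p)^2*(1-5*p*a+25*p^2*b)^2) := by
    rw [e55, hX5]
    linear_combination (-32 * (c * (1 - 5 * p) * (G * (1 - 5 * p * a + 25 * p^2 * b)))^2) * K10' - (8 * (1+5*p+25*p^2) * (9+15*p+25*p^2) * (H * (1+5*p*v+25*p^2*w)) * ((1 - 5 * p) * (G * (1 - 5 * p * a + 25 * p^2 * b)))^2) * (4*c+1) * hc
  have hfin : Jp p m = ε * (H * G^2) := by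
    have hu : IsUnit ((2:RR p)^7 * 3^3) := ((unit_two h3).pow 7).mul ((unit_three h3).pow 3)
    apply hu.mul_left_cancel
    linear_combination 432 * hJ + ε * (p-1) * (15 * f2 - 20 * f6 + 6 * f10 + 3 * f55) + ε * H * G^2 * pid
  rw [hfin]
  linear_combination H^2 * G^4 * s1 + G^4 * hH

end m
end SC
namespace SC
section m
variable {p : ℕ} [hp : Fact p.Prime]

lemma unit_five (h : 5 < p) : IsUnit (5 : RR p) := by
  have := (unitN (p := p) (n := 5)).2 (fun h' => by have := Nat.le_of_dvd (by norm_num) h'; omega)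
  simpa using this

lemma ucancel {u a b : RR p} (hu : IsUnit u) (h : u * a = u * b) : a = b := hu.mul_left_cancel h

lemma relF (h3 : 3 < p) {e : RR p} (he : 12 * e = 1) :
    108 * ff p 2 (-2*e) = -46 * ff p 1 (-2*e) - 5 * ff p 0 (-2*e) ∧
    180 * ff p 3 (-2*e) = -154 * ff p 2 (-2*e) - 51 * ff p 1 (-2*e) - 5 * ff p 0 (-2*e) := by
  have h2 := f2_rel h3 (-2*e)
  have h3' := f3_rel h3 (-2*e)
  have ha : 36 * ((-2*e)*(-2*e+1)) = (-5 : RR p) := by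
    linear_combination (12 * e + 1) * he - 6 * he
  generalize (-2*e)*(-2*e+1) = A at *
  constructor
  · linear_combination 36 * h2 + (2 * ff p 1 (-2*e) + ff p 0 (-2*e)) * ha
  · linear_combination 36 * h3' + (2 * ff p 2 (-2*e) + 3 * ff p 1 (-2*e) + ff p 0 (-2*e)) * ha

lemma case1 (h3 : 3 < p) (h4 : p % 4 = 1) (h13 : 13 ≤ p) {e : RR p} (he : 12 * e = 1)
    {x y : ℤ} (hxy : (p:ℤ) = x^2 + 4 * y^2) :
    ((legendreSym 3 p : ℤ) : RR p) * ff p 1 (-2*e) * (72 * (x:RR p)^2) =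
      -40 * (x:RR p)^4 + 20 * p * (x:RR p)^2 + 5 * p^2 ∧
    ((legendreSym 3 p : ℤ) : RR p) * ff p 2 (-2*e) * (1944 * (x:RR p)^2) =
      100 * (x:RR p)^4 - 50 * p * (x:RR p)^2 - 35 * p^2 ∧
    ((legendreSym 3 p : ℤ) : RR p) * ff p 3 (-2*e) * (69984 * (x:RR p)^2) =
      160 * (x:RR p)^4 - 80 * p * (x:RR p)^2 + 187 * p^2 := by
  obtain ⟨m, hm⟩ : ∃ m, p = 4 * m + 1 := ⟨p/4, by omega⟩
  have hJ := J_val hm h13 (c := 3 * e) (by linear_combination he)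
  have hG := gauss_sq h3 hm hxy
  have hX := XK1 h3 h4 he
  obtain ⟨hm1, hm2⟩ := main1 h3 h4 h13 he
  obtain ⟨r2, r3⟩ := relF h3 he
  have hL := leg_sq (p := p) h3
  have hFu : IsUnit ((Jp p m)^2) := by
    rw [hJ]; exact ((GG_unit _).pow 4).neg
  have u2 := unit_two (p := p) h3
  have u5 := unit_five (p := p) (by omega)
  generalize ((legendreSym 3 p : ℤ) : RR p) = L at *
  generalize (Jp p m)^2 = F at *
  have hF : L * ff p 0 (-2*e) = F := by
    rw [hm1, hX, hJ]; linear_combination (-GG p (3*e)^4) * hL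
  generalize ff p 0 (-2*e) = f0 at *
  generalize ff p 1 (-2*e) = f1 at *
  generalize ff p 2 (-2*e) = f2 at *
  generalize ff p 3 (-2*e) = f3 at *
  have hx4 : (x:RR p)^4 = ((x:RR p)^2)^2 := by ring
  rw [hx4]
  generalize (x:RR p)^2 = X at *
  have hf0 : f0 = L * F := by rw [← hF]; linear_combination (-f0) * hL
  have h1 : 36 * (L * f1) * F = -5 * F^2 + 5 * p^2 := by
    rw [hf0] at hm2
    linear_combination 36 * hm2 + (-720 * e^2 * F^2) * hL +(-5 * F^2 + 5 * p^2)*(12*e+1) * he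
  have hp3 := p3 (p := p)
  have S1 : (L * f1) * (72 * X) = -40 * X^2 + 20 * p * X + 5 * p^2 := by
    refine ucancel (u2.mul (hFu.pow 2)) ?_
    linear_combination (4 * X * F) * h1 + (5 * (4*X*F + (F+p)^2) - 10 * p * F - 5*F^2+5*p^2) * hG
      + 10 * (2 * F + p) * hp3
  have K : 4 * X * F = 16 * X^2 - 8 * p * X - p^2 := by
    refine ucancel (hFu.pow 2) ?_
    linear_combination (F^2 - (4*X*F + (F+p)^2) + 2 * p * F) * hG
      - (2 * F + p) * hp3
  have S2 : (L * f2) * (1944 * X) = 100 * X^2 - 50 * p * X - 35 * p^2 := by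
    refine ucancel u2 ?_
    linear_combination 36 * X * L * r2 - 23 * S1 - 45 * K - 180 * X * hF
  have S3 : (L * f3) * (69984 * X) = 160 * X^2 - 80 * p * X + 187 * p^2 := by
    refine ucancel u5 ?_
    linear_combination 1944 * X * L * r3 - 154 * S2 - 51 * 27 * S1 - 2430 * K - 9720 * X * hF
  exact ⟨S1, S2, S3⟩

lemma case3 (h3 : 3 < p) (h4 : p % 4 = 3) {e : RR p} (he : 12 * e = 1) {R : RR p}
    (hR : R = (2 * p + 2 - 2^(p-1)) * (((p-1)/2).choose (p/4) : RR p)^2) :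
    (p : RR p) * (((legendreSym 3 p : ℤ) : RR p) * ff p 1 (-2*e) * 12 - R) = 0 ∧
    (p : RR p) * (((legendreSym 3 p : ℤ) : RR p) * ff p 2 (-2*e) * 648 - (-23) * R) = 0 ∧
    (p : RR p) * (((legendreSym 3 p : ℤ) : RR p) * ff p 3 (-2*e) * 29160 - 197 * R) = 0 := by
  have hK := R1K h3 h4 (c := 3 * e) (by linear_combination he)
  rw [← hR] at hK
  have hX := XK3 h3 h4 he
  obtain ⟨hm1, hm2⟩ := main3 h3 h4 he
  rw [hX] at hm2
  obtain ⟨r2, r3⟩ := relF h3 he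
  have hL := leg_sq (p := p) h3
  have hu : IsUnit (GG p (3*e)^4) := (GG_unit _).pow 4
  generalize ((legendreSym 3 p : ℤ) : RR p) = L at *
  generalize GG p (3*e)^4 = K at *
  generalize ff p 0 (-2*e) = f0 at *
  generalize ff p 1 (-2*e) = f1 at *
  generalize ff p 2 (-2*e) = f2 at *
  generalize ff p 3 (-2*e) = f3 at *
  have S1 : (p : RR p) * (L * f1 * 12 - R) = 0 := by
    refine ucancel hu ?_
    linear_combination (-4) * hm2 - hK
  have S2 : (p : RR p) * (L * f2 * 648 - (-23) * R) = 0 := by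
    linear_combination 6 * L * p * r2 - 23 * S1 - 30 * L * hm1
  have S3 : (p : RR p) * (L * f3 * 29160 - 197 * R) = 0 := by
    refine ucancel (unit_two h3) ?_
    refine ucancel (unit_two h3) ?_
    refine ucancel (unit_three h3) ?_
    linear_combination 12*162 * L * p * r3 - (77*6) * S2 - 162*51 * S1 - 12*810 * L * hm1
  exact ⟨S1, S2, S3⟩

end m
end SC
namespace SC

/-- The integer `C(2k,k) C(3k,k) C(6k,3k)`. -/
def TN (k : ℕ) : ℕ := (2*k).choose k * (3*k).choose k * (6*k).choose (3*k)

lemma TN_fact (k : ℕ) : TN k * ((3*k).factorial * k.factorial^3) = (6*k).factorial := by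
  have h1 := Nat.choose_mul_factorial_mul_factorial (show k ≤ 2*k by omega)
  have h2 := Nat.choose_mul_factorial_mul_factorial (show k ≤ 3*k by omega)
  have h3 := Nat.choose_mul_factorial_mul_factorial (show 3*k ≤ 6*k by omega)
  rw [show 2*k-k = k by omega] at h1
  rw [show 3*k-k = 2*k by omega] at h2
  rw [show 6*k-3*k = 3*k by omega] at h3
  unfold TN
  rw [← h3]
  conv_rhs => rw [← h2, ← h1]
  rw [← h2, ← h1]
  ring

lemma TN_succ (k : ℕ) : (k+1)^3 * TN (k+1) = 24*(2*k+1)*(6*k+1)*(6*k+5) * TN k := by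
  have h1 := TN_fact k
  have h2 := TN_fact (k+1)
  rw [show 3*(k+1) = 3*k+1+1+1 by ring, show 6*(k+1) = 6*k+1+1+1+1+1+1 by ring] at h2
  simp only [Nat.factorial_succ] at h2
  rw [← h1] at h2
  have hpos : 0 < (3*k+1+1+1)*((3*k+1+1)*((3*k+1)*(3*k).factorial)) * k.factorial^3 := by positivity
  refine Nat.eq_of_mul_eq_mul_left hpos ?_
  nlinarith [h2]

section m
variable {p : ℕ} [hp : Fact p.Prime]

lemma TN_TT (h3 : 3 < p) {e : RR p} (he : 12 * e = 1) (k : ℕ) (hk : k < p) :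
    (TN k : RR p) = TT p (-2*e) k * 12^(3*k) := by
  induction k with
  | zero => simp [TN, TT_zero]
  | succ k ih =>
    have ih' := ih (by omega)
    have hu : IsUnit (((k+1 : ℕ) : RR p)^3) := 
      (unitN.2 (fun h' => by have := Nat.le_of_dvd (by omega) h'; omega)).pow 3
    refine ucancel hu ?_
    have h1 := cast_eq (p := p) (TN_succ k)
    have h2 := TT_succ' (-2*e) k hk
    have hd := half (p := p) h3
    push_cast at h1 ⊢
    rw [h1, ih']
    rw [show 3*(k+1) = 3*k+3 by ring, pow_add (12:RR p)]
    generalize (12:RR p)^(3*k) = P at *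
    generalize (2⁻¹ : RR p) = d at *
    have e1 : (12:RR p)^3 * ((k + d) * (k - (-2*e)) * (k+1+(-2*e))) = 24*(2*k+1)*(6*k+1)*(6*k+5) := by
      have a1 : 2 * (k + d) = 2 * (k:RR p) + 1 := by linear_combination hd
      have a2 : 6 * (k - (-2*e)) = 6 * (k:RR p) + 1 := by linear_combination he
      have a3 : 6 * (k + 1 + (-2*e)) = 6 * (k:RR p) + 5 := by linear_combination -he
      rw [← a1, ← a2, ← a3]; ring
    linear_combination (-P * 12^3) * h2 - TT p (-2*e) k * P * e1

/-- `q` is a `p`-integral rational with residue `r`. -/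
def Rep (p : ℕ) (q : ℚ) (r : RR p) : Prop :=
  ∃ n d : ℤ, ¬ (p:ℤ) ∣ d ∧ q = n / d ∧ (n : RR p) = r * d

lemma nd_ne {d : ℤ} (h : ¬ (p:ℤ) ∣ d) : (d : ℚ) ≠ 0 := by
  intro h0; apply h; rw [Int.cast_eq_zero.1 h0]; exact dvd_zero _

lemma primeZ : Prime (p : ℤ) := Nat.prime_iff_prime_int.1 hp.out

lemma Rep.add {q q' : ℚ} {r r' : RR p} (h : Rep p q r) (h' : Rep p q' r') : Rep p (q+q') (r+r') := by
  obtain ⟨n, d, hd, hq, hn⟩ := h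
  obtain ⟨n', d', hd', hq', hn'⟩ := h'
  refine ⟨n * d' + n' * d, d * d', ?_, ?_, ?_⟩
  · intro h; rcases primeZ.dvd_or_dvd h with h | h
    · exact hd h
    · exact hd' h
  · have := nd_ne hd; have := nd_ne hd'
    rw [hq, hq']; push_cast; field_simp
  · push_cast; rw [hn, hn']; ring

lemma Rep.zmul {q : ℚ} {r : RR p} (h : Rep p q r) (z : ℤ) : Rep p (z*q) (z*r) := by
  obtain ⟨n, d, hd, hq, hn⟩ := h
  refine ⟨z * n, d, hd, ?_, ?_⟩
  · rw [hq]; push_cast; ring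
  · push_cast; rw [hn]; ring

lemma Rep.sum (f : ℕ → ℚ) (g : ℕ → RR p) (N : ℕ) (h : ∀ k < N, Rep p (f k) (g k)) :
    Rep p (∑ k ∈ Finset.range N, f k) (∑ k ∈ Finset.range N, g k) := by
  induction N with
  | zero => exact ⟨0, 1, by intro h; exact primeZ.not_isUnit (isUnit_of_dvd_one h), by simp, by simp⟩
  | succ N ih =>
    rw [Finset.sum_range_succ, Finset.sum_range_succ]
    exact (ih (fun k hk => h k (by omega))).add (h N (by omega))

lemma nd12 (h3 : 3 < p) (j : ℕ) : ¬ (p:ℤ) ∣ 12^j := by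
  intro h
  have := primeZ.dvd_of_dvd_pow h
  have h' : p ∣ 12 := by exact_mod_cast this
  rw [show 12 = 2^2*3 by norm_num] at h'
  rcases (Nat.Prime.dvd_mul hp.out).1 h' with h' | h'
  · have := Nat.le_of_dvd (by norm_num) (hp.out.dvd_of_dvd_pow h'); omega
  · have := Nat.le_of_dvd (by norm_num) h'; omega

lemma Rep_ff (h3 : 3 < p) {e : RR p} (he : 12 * e = 1) (j : ℕ) :
    Rep p ((legendreSym 3 p : ℚ) * ∑ k ∈ Finset.range p,
          (k:ℚ)^j * ((2*k).choose k : ℚ) * ((3*k).choose k : ℚ) * ((6*k).choose (3*k) : ℚ)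
            / 12^(3*k)) (((legendreSym 3 p : ℤ) : RR p) * ff p j (-2*e)) := by
  refine Rep.zmul ?_ _
  unfold ff
  refine Rep.sum _ _ _ (fun k hk => ?_)
  refine ⟨(k:ℤ)^j * (TN k : ℤ), 12^(3*k), nd12 h3 _, ?_, ?_⟩
  · unfold TN; push_cast; ring
  · push_cast; rw [TN_TT h3 he k hk]; ring

lemma dvd_num {q : ℚ} {N D : ℤ} {r : ℕ} (hD : ¬ (p:ℤ) ∣ D) (hq : q = N / D) (hN : (p:ℤ)^r ∣ N) :
    (p:ℤ)^r ∣ q.num := by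
  have h : q.num * D = N * q.den := by
    have h0 := nd_ne hD
    have h1 : (q.den : ℚ) ≠ 0 := by exact_mod_cast q.den_ne_zero
    have h2 : (q.num : ℚ) / q.den = N / D := by rw [Rat.num_div_den, hq]
    rw [div_eq_div_iff h1 h0] at h2
    exact_mod_cast h2
  have h2 : (p:ℤ)^r ∣ q.num * D := by rw [h]; exact hN.mul_right _
  refine IsCoprime.dvd_of_dvd_mul_right ?_ h2
  exact IsCoprime.pow_left ((Prime.coprime_iff_not_dvd primeZ).2 hD)

lemma fin3 {a b : ℚ} {r : RR p} (ha : Rep p a r) {n d : ℤ} (hd : ¬ (p:ℤ) ∣ d) (hb : b = n / d)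
    (h : r * d = n) : ratCongr p 3 a b := by
  obtain ⟨n', d', hd', hq', hn'⟩ := ha
  unfold ratCongr
  refine dvd_num (p := p) (N := n' * d - n * d') (D := d' * d) ?_ ?_ ?_
  · intro h; rcases primeZ.dvd_or_dvd h with h | h
    · exact hd' h
    · exact hd h
  · have := nd_ne hd; have := nd_ne hd'
    rw [hq', hb]; push_cast; field_simp
  · have : ((n' * d - n * d' : ℤ) : RR p) = 0 := by
      push_cast; rw [hn', ← h]; ring
    rw [ZMod.intCast_zmod_eq_zero_iff_dvd] at this
    exact_mod_cast this

lemma fin2 {a b : ℚ} {r : RR p} (ha : Rep p a r) {n d : ℤ} (hd : ¬ (p:ℤ) ∣ d) (hb : b = n / d)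
    (h : (p:RR p) * (r * d - n) = 0) : ratCongr p 2 a b := by
  obtain ⟨n', d', hd', hq', hn'⟩ := ha
  unfold ratCongr
  refine dvd_num (p := p) (N := n' * d - n * d') (D := d' * d) ?_ ?_ ?_
  · intro h; rcases primeZ.dvd_or_dvd h with h | h
    · exact hd' h
    · exact hd h
  · have := nd_ne hd; have := nd_ne hd'
    rw [hq', hb]; push_cast; field_simp
  · have : ((p * (n' * d - n * d') : ℤ) : RR p) = 0 := by
      push_cast; rw [hn']; linear_combination d' * h
    rw [ZMod.intCast_zmod_eq_zero_iff_dvd] at this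
    push_cast at this
    rw [pow_succ' (p:ℤ) 2] at this
    exact (mul_dvd_mul_iff_left (by exact_mod_cast hp.out.ne_zero)).1 this

lemma nd_mul {a b : ℤ} (ha : ¬ (p:ℤ) ∣ a) (hb : ¬ (p:ℤ) ∣ b) : ¬ (p:ℤ) ∣ a * b := by
  intro h; rcases primeZ.dvd_or_dvd h with h | h
  · exact ha h
  · exact hb h

lemma nd_of (h3 : 3 < p) {a : ℤ} (k : ℕ) (h : a ∣ 12^k) : ¬ (p:ℤ) ∣ a :=
  fun h' => nd12 h3 k (h'.trans h)

lemma nd_x {x y : ℤ} (h3 : 3 < p) (hxy : (p:ℤ) = x^2 + 4 * y^2) : ¬ (p:ℤ) ∣ x := by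
  intro h
  have h1 : (p:ℤ) ∣ 4 * y^2 := by
    have : 4 * y^2 = p - x^2 := by linarith
    rw [this]; exact dvd_sub dvd_rfl (dvd_pow h (by norm_num))
  have h2 : (p:ℤ) ∣ y := by
    rcases primeZ.dvd_or_dvd h1 with h1 | h1
    · exact absurd h1 (nd_of h3 1 (by norm_num))
    · exact primeZ.dvd_of_dvd_pow h1
  obtain ⟨a, rfl⟩ := h
  obtain ⟨b, rfl⟩ := h2
  have hp0 : (p:ℤ) ≠ 0 := by exact_mod_cast hp.out.ne_zero
  have : (p:ℤ) * (a^2 + 4 * b^2) = 1 := by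
    apply mul_left_cancel₀ hp0; linear_combination -hxy
  exact primeZ.not_isUnit (IsUnit.of_mul_eq_one _ this)

end m
end SC

theorem statement10 (p : ℕ) (hp : p.Prime) (hp3 : 3 < p) :
    (∀ x y : ℤ, p % 4 = 1 → (p : ℤ) = x^2 + 4*y^2 →
      ratCongr p 3
        ((legendreSym 3 p : ℚ) * ∑ k ∈ Finset.range p,
          (k:ℚ) * ((2*k).choose k : ℚ) * ((3*k).choose k : ℚ) * ((6*k).choose (3*k) : ℚ)
            / 12^(3*k))
        (-(5/9)*(x:ℚ)^2 + 5/18*(p:ℚ) + 5*(p:ℚ)^2/(72*(x:ℚ)^2)) ∧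
      ratCongr p 3
        ((legendreSym 3 p : ℚ) * ∑ k ∈ Finset.range p,
          (k:ℚ)^2 * ((2*k).choose k : ℚ) * ((3*k).choose k : ℚ) * ((6*k).choose (3*k) : ℚ)
            / 12^(3*k))
        (25/486*(x:ℚ)^2 - 25/972*(p:ℚ) - 35*(p:ℚ)^2/(1944*(x:ℚ)^2)) ∧
      ratCongr p 3
        ((legendreSym 3 p : ℚ) * ∑ k ∈ Finset.range p,
          (k:ℚ)^3 * ((2*k).choose k : ℚ) * ((3*k).choose k : ℚ) * ((6*k).choose (3*k) : ℚ)
            / 12^(3*k))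
        (5/2187*(x:ℚ)^2 - 5/4374*(p:ℚ) + 187*(p:ℚ)^2/(69984*(x:ℚ)^2))) ∧
    (p % 4 = 3 →
      ratCongr p 2
        ((legendreSym 3 p : ℚ) * ∑ k ∈ Finset.range p,
          (k:ℚ) * ((2*k).choose k : ℚ) * ((3*k).choose k : ℚ) * ((6*k).choose (3*k) : ℚ)
            / 12^(3*k))
        (1/12*R1 p) ∧
      ratCongr p 2
        ((legendreSym 3 p : ℚ) * ∑ k ∈ Finset.range p,
          (k:ℚ)^2 * ((2*k).choose k : ℚ) * ((3*k).choose k : ℚ) * ((6*k).choose (3*k) : ℚ)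
            / 12^(3*k))
        (-(23/648)*R1 p) ∧
      ratCongr p 2
        ((legendreSym 3 p : ℚ) * ∑ k ∈ Finset.range p,
          (k:ℚ)^3 * ((2*k).choose k : ℚ) * ((3*k).choose k : ℚ) * ((6*k).choose (3*k) : ℚ)
            / 12^(3*k))
        (197/29160*R1 p)) := by
  haveI : Fact p.Prime := ⟨hp⟩
  obtain ⟨e, he⟩ := (SC.unit12 (p := p) hp3).exists_right_inv
  have R1' := SC.Rep_ff hp3 he 1
  simp only [pow_one] at R1'
  have R2' := SC.Rep_ff hp3 he 2
  have R3' := SC.Rep_ff hp3 he 3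
  constructor
  · intro x y h4 hxy
    have hx := SC.nd_x hp3 hxy
    have hx0 : (x:ℚ) ≠ 0 := SC.nd_ne hx
    by_cases h13 : 13 ≤ p
    · obtain ⟨S1, S2, S3⟩ := SC.case1 hp3 h4 h13 he hxy
      have hx2 : ¬ (p:ℤ) ∣ x^2 := by rw [sq]; exact SC.nd_mul hx hx
      refine ⟨?_, ?_, ?_⟩
      · refine SC.fin3 R1' (n := -40 * x^4 + 20 * p * x^2 + 5 * p^2) (d := 72 * x^2)
          (SC.nd_mul (SC.nd_of hp3 2 (by norm_num)) hx2) ?_ (by push_cast; exact S1)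
        push_cast; field_simp; ring
      · refine SC.fin3 R2' (n := 100 * x^4 - 50 * p * x^2 - 35 * p^2) (d := 1944 * x^2)
          (SC.nd_mul (SC.nd_of hp3 5 (by norm_num)) hx2) ?_ (by push_cast; exact S2)
        push_cast; field_simp; ring
      · refine SC.fin3 R3' (n := 160 * x^4 - 80 * p * x^2 + 187 * p^2) (d := 69984 * x^2)
          (SC.nd_mul (SC.nd_of hp3 7 (by norm_num)) hx2) ?_ (by push_cast; exact S3)
        push_cast; field_simp; ring
    · have h5 : p = 5 := by
        have : p = 5 ∨ p = 9 := by omega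
        rcases this with h | h
        · exact h
        · subst h; norm_num at hp
      subst h5
      clear R1' R2' R3' he
      push_cast at hxy
      have hx1 : (x:ℚ)^2 = 1 := by
        have hy : y^2 ≤ 1 := by
          have := sq_nonneg x
          omega
        have hy' : y = 0 ∨ y^2 = 1 := by
          have : -1 ≤ y ∧ y ≤ 1 := abs_le.1 (by rw [← sq_le_one_iff_abs_le_one]; exact hy)
          obtain ⟨h1, h2⟩ := this
          interval_cases y <;> simp
        rcases hy' with h | h
        · exfalso
          subst h

          have : x < 3 := by nlinarith
          have : -3 < x := by nlinarith
          interval_cases x <;> omega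
        · have : x^2 = 1 := by linarith
          exact_mod_cast this
      have hl : legendreSym 3 (5:ℕ) = -1 := by decide
      rw [hl, hx1]
      unfold ratCongr
      simp only [Finset.sum_range_succ, Finset.sum_range_zero]
      norm_num [Nat.choose]
  · intro h4
    obtain ⟨S1, S2, S3⟩ := SC.case3 hp3 h4 he (R := _) rfl
    have hR : R1 p = (((2*(p:ℤ) + 2 - 2^(p-1)) * (((p-1)/2).choose (p/4) : ℤ)^2 : ℤ) : ℚ) := by
      unfold R1; push_cast; ring
    have h5 : ¬ (p:ℤ) ∣ 5 := by
      intro h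
      have h' : p ∣ 5 := by exact_mod_cast h
      have := (Nat.prime_dvd_prime_iff_eq hp (by norm_num)).1 h'
      omega
    have hd : ¬ (p:ℤ) ∣ 29160 := by
      rw [show (29160:ℤ) = 5832 * 5 by norm_num]
      exact SC.nd_mul (SC.nd_of hp3 6 (by norm_num)) h5
    refine ⟨?_, ?_, ?_⟩
    · refine SC.fin2 R1' (n := (2*(p:ℤ) + 2 - 2^(p-1)) * (((p-1)/2).choose (p/4) : ℤ)^2) (d := 12)
        (SC.nd_of hp3 1 (by norm_num)) ?_ (by push_cast; exact S1)
      rw [hR]; push_cast; ring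
    · refine SC.fin2 R2' (n := (-23) * ((2*(p:ℤ) + 2 - 2^(p-1)) * (((p-1)/2).choose (p/4) : ℤ)^2)) (d := 648)
        (SC.nd_of hp3 4 (by norm_num)) ?_ (by push_cast; exact S2)
      rw [hR]; push_cast; ring
    · refine SC.fin2 R3' (n := 197 * ((2*(p:ℤ) + 2 - 2^(p-1)) * (((p-1)/2).choose (p/4) : ℤ)^2)) (d := 29160)
        hd ?_ (by push_cast; exact S3)
      rw [hR]; push_cast; ring
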